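/- arXiv:2506.20809 — 2 statements merged into one kernel-verified Lean document; each statement's English description precedes it below -/
import Mathlib

section
/- (Prolate spheroidal single layer potential, exterior evaluation.) Fix a > 0, u₀ > 1, and integers n ≥ 0, 0 ≤ m ≤ n. Let the density be σ(s,t) = Y_n^m(s,t)/√(u₀^2−s^2). Then for every exterior target point x = Φ(u,v,φ) with u > u₀, v ∈ (−1,1), φ ∈ ℝ, the single layer potential satisfies S[σ](x) = a·((n−m)!/(n+m)!)·(−1)^m·√(u₀^2−1)·P_n^m(u₀)·Q_n^m(u)·Y_n^m(v,φ). -/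
noncomputable section

open Real MeasureTheory

/-- Legendre polynomial via Rodrigues' formula. -/
def legendreP (n : ℕ) (x : ℝ) : ℝ :=
  (1 / (2 ^ n * (n.factorial : ℝ))) * iteratedDeriv n (fun y : ℝ => (y ^ 2 - 1) ^ n) x

/-- Legendre function of the second kind (Neumann's integral), for `x > 1`. -/
def legendreQ (n : ℕ) (x : ℝ) : ℝ :=
  (1 / 2) * ∫ t in (-1 : ℝ)..1, legendreP n t / (x - t)

/-- Associated Legendre function of the first kind, off the cut (`x > 1`). -/
def assocP (n m : ℕ) (x : ℝ) : ℝ :=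
  Real.sqrt (x ^ 2 - 1) ^ m * iteratedDeriv m (legendreP n) x

/-- Associated Legendre function of the second kind, off the cut (`x > 1`). -/
def assocQ (n m : ℕ) (x : ℝ) : ℝ :=
  Real.sqrt (x ^ 2 - 1) ^ m * iteratedDeriv m (legendreQ n) x

/-- Ferrers function of the first kind, on the cut (`-1 ≤ v ≤ 1`). -/
def ferrersP (n m : ℕ) (v : ℝ) : ℝ :=
  Real.sqrt (1 - v ^ 2) ^ m * iteratedDeriv m (legendreP n) v

/-- Prolate spheroidal coordinate map. -/
def prolate (a u v φ : ℝ) : EuclideanSpace ℝ (Fin 3) :=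
  (WithLp.equiv 2 (Fin 3 → ℝ)).symm
    ![a * Real.sqrt (u ^ 2 - 1) * Real.sqrt (1 - v ^ 2) * Real.cos φ,
      a * Real.sqrt (u ^ 2 - 1) * Real.sqrt (1 - v ^ 2) * Real.sin φ,
      a * u * v]

/-- Surface spheroidal (= spherical) harmonic `Y_n^m(v, φ)`. -/
def sphY (n m : ℕ) (v φ : ℝ) : ℂ :=
  ((Real.sqrt ((2 * (n : ℝ) + 1) / (4 * Real.pi)) *
      Real.sqrt (((n - m).factorial : ℝ) / ((n + m).factorial : ℝ)) * ferrersP n m v : ℝ) : ℂ) *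
    Complex.exp (Complex.I * m * φ)

/-- Outward unit normal on the prolate spheroid `u = u₀`, at surface parameters `(s, t)`. -/
def unitNormalP (a u₀ s t : ℝ) : EuclideanSpace ℝ (Fin 3) :=
  ‖deriv (fun w => prolate a w s t) u₀‖⁻¹ • deriv (fun w => prolate a w s t) u₀

/-- Surface area element on the prolate spheroid `u = u₀`. -/
def areaElemP (a u₀ s : ℝ) : ℝ := a ^ 2 * Real.sqrt (u₀ ^ 2 - s ^ 2) * Real.sqrt (u₀ ^ 2 - 1)

/-- Laplace single layer potential on the prolate spheroid `u = u₀`. -/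
def singleLayerP (a u₀ : ℝ) (σ : ℝ → ℝ → ℂ) (x : EuclideanSpace ℝ (Fin 3)) : ℂ :=
  ∫ t in (0 : ℝ)..(2 * Real.pi), ∫ s in (-1 : ℝ)..1,
    ((areaElemP a u₀ s / (4 * Real.pi * ‖x - prolate a u₀ s t‖) : ℝ) : ℂ) * σ s t

open Polynomial in
/-- derivatives of the Rodrigues polynomial -/
noncomputable def rodD (n k : ℕ) : Polynomial ℝ := derivative^[k] ((X ^ 2 - 1) ^ n)

namespace SL
open Polynomial

lemma rodD_succ (n k : ℕ) : rodD n (k+1) = derivative (rodD n k) := by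
  unfold rodD; rw [Function.iterate_succ_apply']

lemma C2 : (C (2:ℝ)) = 2 := rfl

lemma rodD_one (n : ℕ) : (X^2-1) * rodD n 1 = 2 * (n:ℝ[X]) * X * rodD n 0 := by
  rw [rodD_succ]; simp only [rodD, Function.iterate_zero, id]
  rcases n with _ | n
  · simp
  · simp [derivative_pow, C2]; ring

lemma rodD_rec (n k : ℕ) : (X^2-1) * rodD n (k+2) + 2 * ((k:ℝ[X])+1-(n:ℝ[X])) * X * rodD n (k+1)
    = ((k:ℝ[X])+1) * (2*(n:ℝ[X])-(k:ℝ[X])) * rodD n k := by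
  induction k with
  | zero =>
    have h := congrArg derivative (rodD_one n)
    simp only [derivative_mul, ← rodD_succ, derivative_sub, derivative_X_pow, derivative_one,
      derivative_X, derivative_natCast, derivative_ofNat] at h
    simp [C2] at h ⊢
    linear_combination h
  | succ k ih =>
    have h := congrArg derivative ih
    simp only [derivative_mul, ← rodD_succ, derivative_sub, derivative_X_pow, derivative_one,
      derivative_X, derivative_natCast, derivative_ofNat, derivative_add] at h
    simp [C2] at h ⊢
    linear_combination h

lemma rodD_symm (n m : ℕ) (hm : m ≤ n) :
    (X^2-1)^m * rodD n (n+m) * ((n-m).factorial : ℝ[X]) = ((n+m).factorial : ℝ[X]) * rodD n (n-m) := by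
  induction m with
  | zero => simp; ring
  | succ m ih =>
    have ih := ih (by omega)
    obtain ⟨k, rfl⟩ : ∃ k, n = m + 1 + k := ⟨n - (m+1), by omega⟩
    have e1 : m + 1 + k - (m+1) = k := by omega
    have e2 : m + 1 + k - m = k+1 := by omega
    have e3 : m + 1 + k + (m+1) = (m+1+k+m) + 1 := by omega
    rw [e2] at ih
    rw [e1, e3]
    have h := congrArg derivative ih
    simp only [derivative_mul, ← rodD_succ, derivative_natCast, derivative_pow, derivative_sub, derivative_X_pow, derivative_one,
      derivative_X, derivative_natCast, derivative_ofNat, derivative_add] at h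
    have r := rodD_rec (m+1+k) k
    have hp : (X^2-1 : ℝ[X]) * ((m:ℝ[X]) * (X^2-1)^(m-1)) = (m:ℝ[X]) * (X^2-1)^m := by
      rcases m with _ | m
      · simp
      · simp; ring
    have key : ((k:ℝ[X])+1) * ((X^2-1)^(m+1) * rodD (m+1+k) (m+1+k+m+1) * (k.factorial : ℝ[X]))
       = ((k:ℝ[X])+1) * ((((m+1+k+m)+1).factorial : ℝ[X]) * rodD (m+1+k) k) := by
      simp only [Nat.factorial_succ] at *
      push_cast at *
      simp [C2] at h
      linear_combination (X^2-1) * h  + ((m+1+k+m).factorial : ℝ[X]) * r - 2 * X * (m:ℝ[X]) * ih  - 2 * X * rodD (m+1+k) (m+1+k+m) * ((k:ℝ[X])+1) * (k.factorial : ℝ[X]) * hp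
    have hne : ((k:ℝ[X])+1) ≠ 0 := by exact_mod_cast Nat.succ_ne_zero k
    exact mul_left_cancel₀ hne key

lemma rodD_one_eval (n : ℕ) : (rodD n n).eval 1 = 2^n * n.factorial := by
  have h := congrArg (eval (1:ℝ)) (congrFun (factorial_smul_hasseDeriv (R := ℝ) n) ((X^2-1)^n))
  unfold rodD
  rw [← h]
  simp only [LinearMap.smul_apply, eval_smul, ← taylor_coeff]
  have : taylor (1:ℝ) ((X^2-1)^n) = (X+2)^n * X^n := by
    rw [taylor_pow, ← mul_pow]; congr 1; simp [taylor_apply]; ring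
  rw [this]
  have h2 := coeff_mul_X_pow ((X+2 : ℝ[X])^n) n 0
  rw [zero_add] at h2
  rw [h2, coeff_zero_eq_eval_zero]
  simp; ring

lemma rodD_eval_one (n m : ℕ) (hm : m ≤ n) :
    (rodD n (n+m)).eval 1 * (2^m * m.factorial * (n-m).factorial) = 2^n * n.factorial * (n+m).factorial := by
  induction m with
  | zero => simp [rodD_one_eval]
  | succ m ih =>
    have ih := ih (by omega)
    obtain ⟨k, rfl⟩ : ∃ k, n = m + 1 + k := ⟨n - (m+1), by omega⟩
    have e1 : m + 1 + k - (m+1) = k := by omega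
    have e2 : m + 1 + k - m = k+1 := by omega
    have e3 : m + 1 + k + (m+1) = (m+1+k+m) + 1 := by omega
    rw [e2] at ih
    rw [e1, e3]
    have r := congrArg (eval (1:ℝ)) (rodD_rec (m+1+k) (m+1+k+m))
    simp at r
    rw [Nat.factorial_succ (m+1+k+m), Nat.factorial_succ m]
    rw [Nat.factorial_succ k] at ih
    push_cast at *
    have hne : ((k:ℝ)+1) ≠ 0 := by positivity
    apply mul_left_cancel₀ hne
    linear_combination ((m:ℝ)+1+k+m+1) * (k+1) * ih  + (k+1)* 2^m * m.factorial * k.factorial * r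

lemma rodD_bdry (n k : ℕ) (hk : k < n) (x : ℝ) (hx : x^2 = 1) : (rodD n k).eval x = 0 := by
  have h := congrArg (eval x) (rodD_symm n (n-k) (by omega))
  have e : n - (n-k) = k := by omega
  rw [e] at h
  have : n - k ≠ 0 := by omega
  simp [hx, this] at h
  rcases h with h | h
  · exact absurd h (Nat.factorial_ne_zero _)
  · exact h

lemma rodD_hasDerivAt (n k : ℕ) (x : ℝ) : HasDerivAt (fun x => (rodD n k).eval x) ((rodD n (k+1)).eval x) x := by
  rw [rodD_succ]; exact Polynomial.hasDerivAt _ _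

lemma rodD_iter (n j k : ℕ) : iteratedDeriv j (fun x => (rodD n k).eval x) = fun x => (rodD n (k+j)).eval x := by
  induction j with
  | zero => simp
  | succ j ih =>
    rw [iteratedDeriv_succ, ih]; funext x; exact (rodD_hasDerivAt n (k+j) x).deriv
end SL

namespace SL
open Set Filter Topology

lemma const_of_deriv_zero (b : ℝ) (W : ℝ → ℝ) (h : ∀ x ∈ Ioo 0 b, HasDerivAt W 0 x) (x y : ℝ)
    (hx : x ∈ Ioo 0 b) (hy : y ∈ Ioo 0 b) : W x = W y := by
  refine isOpen_Ioo.is_const_of_deriv_eq_zero isPreconnected_Ioo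
    (fun z hz => (h z hz).differentiableAt.differentiableWithinAt) (fun z hz => (h z hz).deriv) hx hy

lemma ode_unique (b : ℝ) (hb : 0 < b) (ω : ℝ → ℝ) (hω : Continuous ω) (ω0 : ω 0 = 0)
    (ωpos : ∀ x ∈ Ioo 0 b, 0 < ω x) (l : ℝ) (f f' p p' : ℝ → ℝ)
    (hf : ∀ x ∈ Ioo 0 b, HasDerivAt f (f' x) x) (hp : ∀ x ∈ Ioo 0 b, HasDerivAt p (p' x) x)
    (hf2 : ∀ x ∈ Ioo 0 b, HasDerivAt (fun x => ω x * f' x) (l * ω x * f x) x)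
    (hp2 : ∀ x ∈ Ioo 0 b, HasDerivAt (fun x => ω x * p' x) (l * ω x * p x) x)
    (cf : ContinuousAt f 0) (cp : ContinuousAt p 0) (cf' : ContinuousAt f' 0)
    (cp' : ContinuousAt p' 0) (p0 : p 0 ≠ 0) (x : ℝ) (hx : x ∈ Ioo 0 b) :
    p 0 * f x = f 0 * p x := by
  set W : ℝ → ℝ := fun x => (ω x * f' x) * p x - (ω x * p' x) * f x with hW
  have hWd : ∀ x ∈ Ioo 0 b, HasDerivAt W 0 x := by
    intro x hx
    have := ((hf2 x hx).mul (hp x hx)).sub ((hp2 x hx).mul (hf x hx))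
    convert! this using 1
    ring
  have W0 : ContinuousAt W 0 := by
    have := hω.continuousAt (x := 0)
    exact (((this.mul cf').mul cp).sub ((this.mul cp').mul cf))
  have mem : Ioo 0 b ∈ 𝓝[>] (0:ℝ) := Ioo_mem_nhdsGT hb
  have Wz : ∀ x ∈ Ioo 0 b, W x = 0 := by
    intro x hx
    have h1 : Tendsto W (𝓝[>] 0) (𝓝 (W 0)) := W0.tendsto.mono_left nhdsWithin_le_nhds
    have h2 : Tendsto W (𝓝[>] 0) (𝓝 (W x)) := by
      refine tendsto_const_nhds.congr' ?_
      filter_upwards [mem] with y hy using const_of_deriv_zero b W hWd x y hx hy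
    rw [tendsto_nhds_unique h2 h1]; simp [hW, ω0]
  -- near zero
  obtain ⟨δ, hδ0, hδ⟩ : ∃ δ > 0, ∀ y, |y| < δ → p y ≠ 0 := by
    have := cp.eventually_ne p0
    rw [Metric.eventually_nhds_iff] at this
    obtain ⟨δ, h0, h⟩ := this
    exact ⟨δ, h0, fun y hy => h (by simpa using hy)⟩
  set d := min δ b with hd
  have d0 : 0 < d := lt_min hδ0 hb
  have hsub : ∀ x ∈ Ioo 0 d, x ∈ Ioo 0 b := fun x hx => ⟨hx.1, hx.2.trans_le (min_le_right _ _)⟩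
  have hpn : ∀ x ∈ Ioo 0 d, p x ≠ 0 := fun x hx => hδ x (by
    rw [abs_of_pos hx.1]; exact hx.2.trans_le (min_le_left _ _))
  have hq : ∀ x ∈ Ioo 0 d, HasDerivAt (fun x => f x / p x) 0 x := by
    intro x hx
    have := (hf x (hsub x hx)).div (hp x (hsub x hx)) (hpn x hx)
    convert! this using 1
    have w := Wz x (hsub x hx)
    have : ω x * (f' x * p x - f x * p' x) = 0 := by rw [← w]; simp only [hW]; ring
    rcases mul_eq_zero.1 this with h | h
    · exact absurd h (ωpos x (hsub x hx)).ne'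
    · rw [h]; simp
  have hnear : ∀ x ∈ Ioo 0 d, p 0 * f x = f 0 * p x := by
    intro x hx
    have h1 : Tendsto (fun x => f x / p x) (𝓝[>] 0) (𝓝 (f 0 / p 0)) :=
      (cf.div cp p0).tendsto.mono_left nhdsWithin_le_nhds
    have h2 : Tendsto (fun x => f x / p x) (𝓝[>] 0) (𝓝 (f x / p x)) := by
      refine tendsto_const_nhds.congr' ?_
      filter_upwards [Ioo_mem_nhdsGT d0] with y hy using const_of_deriv_zero d _ hq x y hx hy
    have := tendsto_nhds_unique h2 h1
    rw [div_eq_div_iff (hpn x hx) p0] at this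
    linarith
  set h : ℝ → ℝ := fun x => p 0 * f x - f 0 * p x with hh
  set y : ℝ → ℝ := fun x => ω x * (p 0 * f' x - f 0 * p' x) with hy
  have hhd : ∀ x ∈ Ioo 0 b, HasDerivAt h (y x / ω x) x := by
    intro x hx
    have := ((hf x hx).const_mul (p 0)).sub ((hp x hx).const_mul (f 0))
    convert! this using 1
    have := (ωpos x hx).ne'
    simp only [hy]; field_simp
  have hyd : ∀ x ∈ Ioo 0 b, HasDerivAt y (l * ω x * h x) x := by
    intro x hx
    have := ((hf2 x hx).const_mul (p 0)).sub ((hp2 x hx).const_mul (f 0))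
    convert! this using 1
    · funext z; simp [hy]; ring
    · simp [hh]; ring
  have hm : d/2 ∈ Ioo 0 d := ⟨by linarith, by linarith⟩
  have hx0 : h (d/2) = 0 := by simp only [hh]; rw [hnear _ hm]; ring
  have hy0 : y (d/2) = 0 := by
    have e : h =ᶠ[𝓝 (d/2)] fun _ => 0 := by
      filter_upwards [isOpen_Ioo.mem_nhds hm] with z hz
      simp only [hh]; rw [hnear _ hz]; ring
    have h1 := (hhd _ (hsub _ hm)).deriv
    rw [e.deriv_eq, deriv_const] at h1
    rcases div_eq_zero_iff.1 h1.symm with h1 | h1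
    · exact h1
    · exact absurd h1 (ωpos _ (hsub _ hm)).ne'
  -- uniqueness
  set lo := min x (d/2) / 2
  set hi := (max x (d/2) + b)/2
  have dm := hsub _ hm
  have lo0 : 0 < lo := half_pos (lt_min hx.1 hm.1)
  have hib : hi < b := by have := max_lt hx.2 dm.2; simp only [hi]; linarith
  have hlox : lo < x := by have := min_le_left x (d/2); have := hx.1; simp only [lo]; linarith
  have hlod : lo < d/2 := by have := min_le_right x (d/2); have := hm.1; simp only [lo]; linarith
  have hxhi : x < hi := by have := le_max_left x (d/2); have := hx.2; simp only [hi]; linarith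
  have hdhi : d/2 < hi := by have := le_max_right x (d/2); have := dm.2; simp only [hi]; linarith
  have hsub2 : ∀ t ∈ Icc lo hi, t ∈ Ioo 0 b := fun t ht => ⟨lo0.trans_le ht.1, ht.2.trans_lt hib⟩
  obtain ⟨K1, hK1⟩ := isCompact_Icc.exists_bound_of_continuousOn (s := Icc lo hi) (f := fun t => (ω t)⁻¹)
    (hω.continuousOn.inv₀ fun t ht => (ωpos t (hsub2 t ht)).ne')
  obtain ⟨K2, hK2⟩ := isCompact_Icc.exists_bound_of_continuousOn (s := Icc lo hi) (f := fun t => l * ω t)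
    (continuous_const.mul hω).continuousOn
  let v : ℝ → ℝ × ℝ → ℝ × ℝ := fun t z => (z.2 / ω t, l * ω t * z.1)
  have hv : ∀ t ∈ Ioo lo hi, LipschitzOnWith (Real.toNNReal (max K1 K2)) (v t) univ := by
    intro t ht
    have k1 := hK1 t ⟨ht.1.le, ht.2.le⟩
    have k2 := hK2 t ⟨ht.1.le, ht.2.le⟩
    refine LipschitzOnWith.of_dist_le_mul fun z _ w _ => ?_
    have k0 : 0 ≤ max K1 K2 := le_max_of_le_left ((norm_nonneg _).trans k1)
    rw [Real.coe_toNNReal _ k0, Prod.dist_eq]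
    refine max_le ?_ ?_
    · have : dist (v t z).1 (v t w).1 = ‖(ω t)⁻¹‖ * dist z.2 w.2 := by
        simp only [v, Real.dist_eq, Real.norm_eq_abs, ← abs_mul]; congr 1; ring
      rw [this]
      exact mul_le_mul (k1.trans (le_max_left _ _)) (le_max_right _ _) dist_nonneg k0
    · have : dist (v t z).2 (v t w).2 = ‖l * ω t‖ * dist z.1 w.1 := by
        simp only [v, Real.dist_eq, Real.norm_eq_abs, ← abs_mul]; congr 1; ring
      rw [this]
      exact mul_le_mul (k2.trans (le_max_right _ _)) (le_max_left _ _) dist_nonneg k0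
  have uniq := ODE_solution_unique_of_mem_Ioo (v := v) (s := fun _ => univ) (K := Real.toNNReal (max K1 K2))
    (f := fun t => (h t, y t)) (g := fun _ => (0, 0)) (a := lo) (b := hi) (t₀ := d/2) hv ⟨hlod, hdhi⟩
    (fun t ht => ⟨(hhd t (hsub2 t ⟨ht.1.le, ht.2.le⟩)).prodMk (hyd t (hsub2 t ⟨ht.1.le, ht.2.le⟩)), trivial⟩)
    (fun t ht => ⟨by convert! hasDerivAt_const t ((0:ℝ),(0:ℝ)) using 1; simp [v], trivial⟩) (by simp [hx0, hy0])
  have := congrArg Prod.fst (uniq ⟨hlox, hxhi⟩)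
  simp [hh] at this
  linarith
end SL

namespace SL
open Set Filter Topology MeasureTheory

lemma hasDerivAt_setInt {Y : Type*} [MetricSpace Y] [SecondCountableTopology Y] [MeasurableSpace Y] [BorelSpace Y]
    (μ : Measure Y) [IsFiniteMeasureOnCompacts μ] (K : Set Y) (hK : IsCompact K) (U : Set ℝ) (hU : IsOpen U)
    (F F' : ℝ → Y → ℝ) (hF : ∀ x ∈ U, ContinuousOn (F x) K)
    (hF' : ContinuousOn (fun q : ℝ × Y => F' q.1 q.2) (U ×ˢ K))
    (hd : ∀ x ∈ U, ∀ y ∈ K, HasDerivAt (fun x => F x y) (F' x y) x) (x₀ : ℝ) (hx : x₀ ∈ U) :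
    HasDerivAt (fun x => ∫ y in K, F x y ∂μ) (∫ y in K, F' x₀ y ∂μ) x₀ := by
  obtain ⟨ε, hε, hb⟩ := Metric.isOpen_iff.1 hU x₀ hx
  have hsub : Metric.closedBall x₀ (ε/2) ⊆ U :=
    (Metric.closedBall_subset_ball (by linarith)).trans hb
  obtain ⟨B, hB⟩ := ((isCompact_closedBall x₀ (ε/2)).prod hK).exists_bound_of_continuousOn
    (hF'.mono (prod_mono hsub le_rfl))
  have hF'x : ContinuousOn (F' x₀) K :=
    hF'.comp (f := fun y : Y => (x₀, y)) (by fun_prop) (fun y hy => ⟨hx, hy⟩)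
  have hKm := hK.measurableSet
  haveI : IsFiniteMeasure (μ.restrict K) := ⟨by simpa using hK.measure_lt_top⟩
  refine (hasDerivAt_integral_of_dominated_loc_of_deriv_le (s := Metric.closedBall x₀ (ε/2))
    (bound := fun _ => B)
    (Metric.closedBall_mem_nhds x₀ (by linarith)) ?_ ?_ ?_ ?_ ?_ ?_).2
  · filter_upwards [hU.mem_nhds hx] with x hx using (hF x hx).aestronglyMeasurable hKm
  · exact (hF x₀ hx).integrableOn_compact hK
  · exact hF'x.aestronglyMeasurable hKm
  · filter_upwards [ae_restrict_mem hKm] with y hy x hx using hB (x, y) ⟨hx, hy⟩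
  · exact integrable_const _
  · filter_upwards [ae_restrict_mem hKm] with y hy x hx using hd x (hsub hx) y hy
end SL

namespace SL
open Set Filter Topology MeasureTheory Polynomial

/-- squared distance kernel -/
noncomputable def Rk (A q σ : ℝ) (c s : ℝ) (z : ℝ × ℝ) : ℝ :=
  A - 2 + c^2 + Real.cos z.1 ^2 - 2 * q * c * Real.cos z.1 - 2 * σ * s * Real.sin z.1 * Real.cos z.2

lemma Kfst (H Φ : ℝ → ℝ → ℝ) (a b c d : ℝ) (hab : a ≤ b) (hH : Continuous (Function.uncurry H))
    (hd : ∀ x y, HasDerivAt (fun x => Φ x y) (H x y) x) (h0 : ∀ y, Φ a y = Φ b y) :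
    ∫ z in Icc a b ×ˢ Icc c d, H z.1 z.2 = 0 := by
  have hi : IntegrableOn (fun z : ℝ × ℝ => H z.1 z.2) (Icc a b ×ˢ Icc c d) (volume.prod volume) :=
    (hH.continuousOn.integrableOn_compact (isCompact_Icc.prod isCompact_Icc))
  rw [Measure.volume_eq_prod, ← Measure.prod_restrict, integral_prod_symm _ (by rwa [Measure.prod_restrict])]
  have : ∀ y, ∫ x in Icc a b, H x y = 0 := by
    intro y
    rw [integral_Icc_eq_integral_Ioc, ← intervalIntegral.integral_of_le hab,
      intervalIntegral.integral_eq_sub_of_hasDerivAt (fun x _ => hd x y), h0 y, sub_self]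
    exact (hH.comp (by fun_prop : Continuous fun x : ℝ => (x, y))).intervalIntegrable _ _
  simp [this]

lemma Ksnd (H Φ : ℝ → ℝ → ℝ) (a b c d : ℝ) (hab : c ≤ d) (hH : Continuous (Function.uncurry H))
    (hd : ∀ x y, HasDerivAt (fun y => Φ x y) (H x y) y) (h0 : ∀ x, Φ x c = Φ x d) :
    ∫ z in Icc a b ×ˢ Icc c d, H z.1 z.2 = 0 := by
  have hi : IntegrableOn (fun z : ℝ × ℝ => H z.1 z.2) (Icc a b ×ˢ Icc c d) (volume.prod volume) :=
    (hH.continuousOn.integrableOn_compact (isCompact_Icc.prod isCompact_Icc))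
  rw [Measure.volume_eq_prod, ← Measure.prod_restrict, integral_prod _ (by rwa [Measure.prod_restrict])]
  have : ∀ x, ∫ y in Icc c d, H x y = 0 := by
    intro x
    rw [integral_Icc_eq_integral_Ioc, ← intervalIntegral.integral_of_le hab,
      intervalIntegral.integral_eq_sub_of_hasDerivAt (fun y _ => hd x y), h0 x, sub_self]
    exact (hH.comp (by fun_prop : Continuous fun y : ℝ => (x, y))).intervalIntegrable _ _
  simp [this]

/-- the pointwise identity, in pure algebra -/
lemma alg_id (m A q σ ε C S ca sa ct st R κ p p1 p2 l SA ST : ℝ) (hε : ε^2 = 1) (hCS : C^2 = 1 + ε * S^2)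
    (ha : ca^2 + sa^2 = 1) (ht : ct^2+st^2 = 1) (hσ : σ^2 = ε * (A - 1 - q^2)) (hS : S ≠ 0)
    (hR : R = A - 2 + C^2 + ca^2 - 2*q*C*ca - 2*σ*S*sa*ct)
    (hP : (ca^2-1)*p2 + 2*(m+1)*ca*p1 = l * p)
    (Rx Rxx Ra Raa Rt : ℝ)
    (hRx : Rx = 2*C*(ε*S) - 2*q*(ε*S)*ca - 2*σ*C*sa*ct)
    (hRxx : Rxx = 2*ε*(ε*S^2+C^2) - 2*q*ε*C*ca - 2*σ*ε*S*sa*ct)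
    (hRa : Ra = -2*ca*sa+2*q*C*sa-2*σ*S*ca*ct)
    (hRaa : Raa = -2*ca^2+2*sa^2+2*q*C*ca+2*σ*S*sa*ct)
    (hRt : Rt = 2*σ*S*sa*st) :
    p * ST * (SA * sa) * ((-m-1/2) * (Rxx * (κ*R) + Rx * ((-m-3/2) * Rx * κ)) + (2*m+1)*(C/S)*((-m-1/2)*Rx*(κ*R)))
    + ε * (ST * ((2*m+1) * SA * ca * (p * ((-m-1/2)*Ra*(κ*R)) - (κ*R^2) * (-sa*p1))
        + SA * sa * ((-sa*p1)*((-m-1/2)*Ra*(κ*R)) + p * ((-m-1/2) * (Raa * (κ*R) + Ra * ((-m-3/2) * Ra * κ)))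
           - ((-m-1/2)*Ra*(κ*R)) * (-sa*p1) - (κ*R^2) * (-ca*p1 + sa^2*p2))))
    - ε * l * (p * ST * (SA*sa)) * (κ*R^2)
    + ε * (p * ((-m-1/2) * 2 * σ * SA * (S + ε * sa^2/S) * ((2*m+1)*ST*ct * (κ*R) + ST * st * ((-m-3/2) * Rt * κ)))) = 0 := by
  have I0 : Rxx + ε * Raa = 4 * (S^2 + ε * sa^2) := by
    rw [hRxx, hRaa]; linear_combination (2*ε) * hCS + 4 * S^2 * hε - 2 * ε * ha
  have I2 : C * sa * Rx + ε * ca * S * Ra + 2*ε*σ*(S^2+ε*sa^2)*ct = 2 * S * sa * (S^2 + ε * sa^2) := by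
    rw [hRx, hRa]
    linear_combination (2*ε*S*sa - 2*σ*sa^2*ct)*hCS + (2*S^3*sa+2*σ*sa^2*ct)*hε - (2*ε*S*sa+2*ε*σ*S^2*ct)*ha
  have I1 : 4 * (S^2 + ε*sa^2) * R = Rx^2 + ε * Ra^2 + 4*ε*σ^2*(S^2+ε*sa^2)*st^2 := by
    rw [hRx, hRa, hR]
    have h1 : C^2*sa^2+ε*S^2*ca^2 = ε*(S^2+ε*sa^2) := by linear_combination sa^2*hCS + ε*S^2*ha - sa^2*hε
    have h2 : S^2*ca^2+ε*sa^2*C^2 = S^2+ε*sa^2 := by linear_combination ε*sa^2*hCS + S^2*ha + sa^2*S^2*hε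
    have h3 : S^2*C^2+ε*sa^2*ca^2 = (S^2+ε*sa^2)*(C^2+ca^2-1) := by linear_combination -h2
    have h4 : ε*σ^2 = A-1-q^2 := by linear_combination ε*hσ + (A-1-q^2)*hε
    have h5 : ε*(C^2-ca^2) = S^2+ε*sa^2 := by linear_combination ε*hCS + S^2*hε - ε*ha
    linear_combination 4*(-(S^2*(C-q*ca)^2)*hε - q^2*h2 - h3 + 2*S*σ*sa*ct*h5 - σ^2*ct^2*h1 - (S^2+ε*sa^2)*σ^2*ε*ht - (S^2+ε*sa^2)*h4)
  have I3 : (2*m+1)*(C/S)*((-m-1/2)*Rx*(κ*R)) = (2*m+1)*((-m-1/2)*(κ*R)) * ((C * Rx)/S) := by ring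
  have hI2 : (S + ε * sa^2/S) = (S^2+ε*sa^2)/S := by field_simp
  rw [I3, hI2]
  have hI2' : sa * ((C * Rx)/S) + ε * ca * Ra + 2*ε*σ*((S^2+ε*sa^2)/S)*ct = 2 * sa * (S^2 + ε * sa^2) := by
    field_simp
    linear_combination I2
  set X := (C*Rx)/S
  have hRt' : ((S^2+ε*sa^2)/S) * Rt = 2*σ*sa*st*(S^2+ε*sa^2) := by
    rw [hRt]; field_simp
  set Y := (S^2+ε*sa^2)/S
  have hP' : 2*(m+1)*ca*p1 - sa^2 * p2 = l*p := by linear_combination hP - p2 * ha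
  linear_combination (ε*ST*SA*sa*κ*R^2) * hP' + p*ST*SA*κ*(-m-1/2)*((2*m+1)*R*hI2' + sa*R*I0 + (m+3/2)*sa*I1
     - (m+3/2)*2*ε*σ*st*hRt')
end SL

namespace SL
open Set Filter Topology MeasureTheory Polynomial

lemma Rk_cont (A q σ : ℝ) {C S : ℝ → ℝ} (hC : Continuous C) (hS : Continuous S) :
    Continuous (fun w : ℝ × (ℝ × ℝ) => Rk A q σ (C w.1) (S w.1) w.2) := by
  unfold Rk; fun_prop

noncomputable def wt (m : ℕ) (P : ℝ[X]) (z : ℝ × ℝ) : ℝ :=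
  P.eval (Real.cos z.1) * Real.sin z.1 ^ (2*m+1) * Real.sin z.2 ^ (2*m)

lemma wt_cont (m : ℕ) (P : ℝ[X]) : Continuous (wt m P) := by unfold wt; fun_prop

noncomputable def Gk (m : ℕ) (P : ℝ[X]) (A q σ c s : ℝ) : ℝ :=
  ∫ z in Icc 0 Real.pi ×ˢ Icc 0 (2*Real.pi), wt m P z * (Rk A q σ c s z) ^ (-(m:ℝ)-1/2)

lemma int5 {α : Type*} [MeasurableSpace α] {μ : Measure α} {f1 f2 f3 f4 f5 : α → ℝ} {c2 c3 c4 c5 : ℝ}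
    (h1 : Integrable f1 μ) (h2 : Integrable f2 μ) (h3 : Integrable f3 μ) (h4 : Integrable f4 μ) (h5 : Integrable f5 μ) :
    ∫ z, (f1 z + c2 * f2 z - c3 * f3 z + c4 * f4 z + c5 * f5 z) ∂μ =
      ∫ z, f1 z ∂μ + c2 * ∫ z, f2 z ∂μ - c3 * ∫ z, f3 z ∂μ + c4 * ∫ z, f4 z ∂μ + c5 * ∫ z, f5 z ∂μ := by
  have k2 := h2.const_mul c2
  have k3 := h3.const_mul c3
  have k4 := h4.const_mul c4
  have k5 := h5.const_mul c5
  have a1 : Integrable (fun z => f1 z + c2 * f2 z) μ := h1.add k2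
  have a2 : Integrable (fun z => f1 z + c2 * f2 z - c3 * f3 z) μ := a1.sub k3
  have a3 : Integrable (fun z => f1 z + c2 * f2 z - c3 * f3 z + c4 * f4 z) μ := a2.add k4
  rw [integral_add a3 k5, integral_add a2 k4, integral_sub a1 k3, integral_add h1 k2]
  simp only [integral_const_mul]

theorem main_ode (m : ℕ) (P : ℝ[X]) (l : ℝ)
    (hP : ∀ x, (x^2-1) * (derivative (derivative P)).eval x + 2*((m:ℝ)+1)*x*(derivative P).eval x = l * P.eval x)
    (A q σ ε b : ℝ) (C S : ℝ → ℝ) (hC : ∀ x, HasDerivAt C (ε * S x) x) (hS : ∀ x, HasDerivAt S (C x) x)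
    (hε : ε^2=1) (hCS : ∀ x, C x^2 = 1 + ε * S x^2) (C0 : C 0 = 1) (S0 : S 0 = 0) (hb : 0 < b)
    (Spos : ∀ x ∈ Ioo 0 b, 0 < S x) (hσ : σ^2 = ε*(A-1-q^2))
    (hR : ∀ x ∈ Ioo (-b) b, ∀ z, 0 < Rk A q σ (C x) (S x) z) (P1 : P.eval 1 ≠ 0) :
    ∀ x ∈ Ioo 0 b, P.eval 1 * Gk m P A q σ (C x) (S x) = Gk m P A q σ 1 0 * P.eval (C x) := by
  have cC : Continuous C := continuous_iff_continuousAt.2 fun x => (hC x).continuousAt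
  have cS : Continuous S := continuous_iff_continuousAt.2 fun x => (hS x).continuousAt
  set K : Set (ℝ × ℝ) := Icc 0 Real.pi ×ˢ Icc 0 (2*Real.pi) with hKdef
  have hK : IsCompact K := isCompact_Icc.prod isCompact_Icc
  have hpi := Real.pi_pos
  let R : ℝ → ℝ × ℝ → ℝ := fun x z => Rk A q σ (C x) (S x) z
  let Rx : ℝ → ℝ × ℝ → ℝ := fun x z => 2*C x*(ε*S x) - 2*q*(ε*S x)*Real.cos z.1 - 2*σ*C x*Real.sin z.1*Real.cos z.2
  let Rxx : ℝ → ℝ × ℝ → ℝ := fun x z => 2*ε*(ε*S x^2+C x^2) - 2*q*ε*C x*Real.cos z.1 - 2*σ*ε*S x*Real.sin z.1*Real.cos z.2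
  have dR : ∀ x z, HasDerivAt (fun x => R x z) (Rx x z) x := by
    intro x z
    have := ((((hC x).pow 2).const_add (A-2)).add_const (Real.cos z.1^2)).sub (((hC x).const_mul (2*q)).mul_const (Real.cos z.1))
      |>.sub ((((hS x).const_mul (2*σ)).mul_const (Real.sin z.1)).mul_const (Real.cos z.2))
    refine this.congr_deriv ?_
    simp only [Rx]; push_cast; ring
  have dRx : ∀ x z, HasDerivAt (fun x => Rx x z) (Rxx x z) x := by
    intro x z
    have := (((hC x).const_mul 2).mul ((hS x).const_mul ε)).sub ((((hS x).const_mul ε).const_mul (2*q)).mul_const (Real.cos z.1))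
      |>.sub ((((hC x).const_mul (2*σ)).mul_const (Real.sin z.1)).mul_const (Real.cos z.2))
    refine this.congr_deriv ?_
    simp only [Rxx]; ring
  let F : ℝ → ℝ × ℝ → ℝ := fun x z => wt m P z * R x z ^ (-(m:ℝ)-1/2)
  let F1 : ℝ → ℝ × ℝ → ℝ := fun x z => wt m P z * ((-(m:ℝ)-1/2) * Rx x z * R x z ^ (-(m:ℝ)-3/2))
  let F2 : ℝ → ℝ × ℝ → ℝ := fun x z => wt m P z * ((-(m:ℝ)-1/2) *
    (Rxx x z * R x z ^ (-(m:ℝ)-3/2) + Rx x z * ((-(m:ℝ)-3/2) * Rx x z * R x z ^ (-(m:ℝ)-5/2))))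
  have dF : ∀ x ∈ Ioo (-b) b, ∀ z ∈ K, HasDerivAt (fun x => F x z) (F1 x z) x := by
    intro x hx z _
    have := ((dR x z).rpow_const (p := (-(m:ℝ)-1/2)) (Or.inl (hR x hx z).ne')).const_mul (wt m P z)
    refine this.congr_deriv ?_
    simp only [F1]
    rw [show (-(m:ℝ)-1/2) - 1 = -(m:ℝ)-3/2 by ring]; ring
  have dF1 : ∀ x ∈ Ioo (-b) b, ∀ z ∈ K, HasDerivAt (fun x => F1 x z) (F2 x z) x := by
    intro x hx z _
    have := ((((dRx x z).const_mul (-(m:ℝ)-1/2))).mul ((dR x z).rpow_const (p := (-(m:ℝ)-3/2)) (Or.inl (hR x hx z).ne'))).const_mul (wt m P z)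
    refine this.congr_deriv ?_
    simp only [F2]
    rw [show (-(m:ℝ)-3/2) - 1 = -(m:ℝ)-5/2 by ring]; ring
  have cR : Continuous (fun w : ℝ × (ℝ × ℝ) => R w.1 w.2) := Rk_cont A q σ cC cS
  have cRx : Continuous (fun w : ℝ × (ℝ × ℝ) => Rx w.1 w.2) := by simp only [Rx]; fun_prop
  have cRxx : Continuous (fun w : ℝ × (ℝ × ℝ) => Rxx w.1 w.2) := by simp only [Rxx]; fun_prop
  have cRp : ∀ e : ℝ, ContinuousOn (fun w : ℝ × (ℝ × ℝ) => R w.1 w.2 ^ e) (Ioo (-b) b ×ˢ K) := fun e =>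
    cR.continuousOn.rpow_const fun w hw => Or.inl (hR w.1 hw.1 w.2).ne'
  have cRpz : ∀ e : ℝ, ∀ x ∈ Ioo (-b) b, Continuous (fun z : (ℝ × ℝ) => R x z ^ e) := fun e x hx =>
    (cR.comp (by fun_prop : Continuous fun z : ℝ × ℝ => (x, z))).rpow_const fun z => Or.inl (hR x hx z).ne'
  have cw := wt_cont m P
  have cF : ∀ x ∈ Ioo (-b) b, Continuous (F x) := fun x hx => cw.mul (cRpz _ x hx)
  have cF1 : ContinuousOn (fun w : ℝ × (ℝ × ℝ) => F1 w.1 w.2) (Ioo (-b) b ×ˢ K) :=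
    (cw.comp continuous_snd).continuousOn.mul ((continuousOn_const.mul cRx.continuousOn).mul (cRp _))
  have cF2 : ContinuousOn (fun w : ℝ × (ℝ × ℝ) => F2 w.1 w.2) (Ioo (-b) b ×ˢ K) :=
    (cw.comp continuous_snd).continuousOn.mul (continuousOn_const.mul ((cRxx.continuousOn.mul (cRp _)).add
      (cRx.continuousOn.mul ((continuousOn_const.mul cRx.continuousOn).mul (cRp _)))))
  have sl : ∀ (Fx : ℝ → ℝ × ℝ → ℝ), ContinuousOn (fun w : ℝ × (ℝ × ℝ) => Fx w.1 w.2) (Ioo (-b) b ×ˢ K) →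
      ∀ x ∈ Ioo (-b) b, ContinuousOn (Fx x) K := fun Fx h x hx =>
    h.comp (f := fun z : ℝ × ℝ => (x, z)) (by fun_prop) (fun z hz => ⟨hx, hz⟩)
  let g : ℝ → ℝ := fun x => ∫ z in K, F x z
  let g1 : ℝ → ℝ := fun x => ∫ z in K, F1 x z
  let g2 : ℝ → ℝ := fun x => ∫ z in K, F2 x z
  have dg : ∀ x ∈ Ioo (-b) b, HasDerivAt g (g1 x) x := fun x hx =>
    hasDerivAt_setInt volume K hK _ isOpen_Ioo F F1 (fun x hx => (cF x hx).continuousOn) cF1 dF x hx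
  have dg1 : ∀ x ∈ Ioo (-b) b, HasDerivAt g1 (g2 x) x := fun x hx =>
    hasDerivAt_setInt volume K hK _ isOpen_Ioo F1 F2 (sl F1 cF1) cF2 dF1 x hx
  have sub : Ioo 0 b ⊆ Ioo (-b) b := Ioo_subset_Ioo_left (by linarith)
  have ode : ∀ x ∈ Ioo 0 b, g2 x + (2*m+1) * (C x / S x) * g1 x = ε * l * g x := by
    intro x hx
    have hx' := sub hx
    have hs := (Spos x hx).ne'
    let Ra : ℝ × ℝ → ℝ := fun z => -2*Real.cos z.1*Real.sin z.1+2*q*C x*Real.sin z.1-2*σ*S x*Real.cos z.1*Real.cos z.2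
    let Raa : ℝ × ℝ → ℝ := fun z => -2*Real.cos z.1^2+2*Real.sin z.1^2+2*q*C x*Real.cos z.1+2*σ*S x*Real.sin z.1*Real.cos z.2
    let Rt : ℝ × ℝ → ℝ := fun z => 2*σ*S x*Real.sin z.1*Real.sin z.2
    have dRa : ∀ α θ, HasDerivAt (fun α => R x (α,θ)) (Ra (α,θ)) α := by
      intro α θ
      have := ((((Real.hasDerivAt_cos α).pow 2).const_add (A-2+C x^2)).sub ((Real.hasDerivAt_cos α).const_mul (2*q*C x)))
        |>.sub (((Real.hasDerivAt_sin α).const_mul (2*σ*S x)).mul_const (Real.cos θ))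
      refine this.congr_deriv ?_
      simp only [Ra]; push_cast; ring
    have dRaa : ∀ α θ, HasDerivAt (fun α => Ra (α,θ)) (Raa (α,θ)) α := by
      intro α θ
      have := ((((Real.hasDerivAt_cos α).const_mul (-2)).mul (Real.hasDerivAt_sin α)).add ((Real.hasDerivAt_sin α).const_mul (2*q*C x)))
        |>.sub (((Real.hasDerivAt_cos α).const_mul (2*σ*S x)).mul_const (Real.cos θ))
      refine this.congr_deriv ?_
      simp only [Raa]; ring
    have dRt : ∀ α θ, HasDerivAt (fun θ => R x (α,θ)) (Rt (α,θ)) θ := by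
      intro α θ
      have := (((Real.hasDerivAt_cos θ).const_mul (2*σ*S x*Real.sin α))).const_sub (A-2+C x^2+Real.cos α^2-2*q*C x*Real.cos α)
      refine this.congr_deriv ?_
      simp only [Rt]; ring
    have cRa : Continuous Ra := by simp only [Ra]; fun_prop
    have cRaa : Continuous Raa := by simp only [Raa]; fun_prop
    have cRt : Continuous Rt := by simp only [Rt]; fun_prop
    have c0 := cRpz (-(m:ℝ)-1/2) x hx'
    have c1 := cRpz (-(m:ℝ)-3/2) x hx'
    have c2 := cRpz (-(m:ℝ)-5/2) x hx'
    let H1 : ℝ × ℝ → ℝ := fun z => Real.sin z.2 ^ (2*m) * ((2*m+1) * Real.sin z.1 ^ (2*m) * Real.cos z.1 *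
        (P.eval (Real.cos z.1) * ((-(m:ℝ)-1/2)*Ra z*R x z ^ (-(m:ℝ)-3/2)) - (R x z ^ (-(m:ℝ)-1/2)) * (-Real.sin z.1*(derivative P).eval (Real.cos z.1)))
        + Real.sin z.1 ^ (2*m) * Real.sin z.1 * ((-Real.sin z.1*(derivative P).eval (Real.cos z.1))*((-(m:ℝ)-1/2)*Ra z*R x z ^ (-(m:ℝ)-3/2))
            + P.eval (Real.cos z.1) * ((-(m:ℝ)-1/2) * (Raa z * R x z ^ (-(m:ℝ)-3/2) + Ra z * ((-(m:ℝ)-3/2) * Ra z * R x z ^ (-(m:ℝ)-5/2))))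
           - ((-(m:ℝ)-1/2)*Ra z*R x z ^ (-(m:ℝ)-3/2)) * (-Real.sin z.1*(derivative P).eval (Real.cos z.1))
           - R x z ^ (-(m:ℝ)-1/2) * (-Real.cos z.1*(derivative P).eval (Real.cos z.1) + Real.sin z.1^2*(derivative (derivative P)).eval (Real.cos z.1))))
    let H2 : ℝ × ℝ → ℝ := fun z => (P.eval (Real.cos z.1) * ((-(m:ℝ)-1/2) * 2 * σ * Real.sin z.1 ^ (2*m) * (S x + ε * Real.sin z.1^2/S x) *
        ((2*m+1)*Real.sin z.2^(2*m)*Real.cos z.2 * R x z ^ (-(m:ℝ)-3/2) + Real.sin z.2^(2*m) * Real.sin z.2 * ((-(m:ℝ)-3/2) * Rt z * R x z ^ (-(m:ℝ)-5/2)))))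
    have cH1 : Continuous H1 := by simp only [H1]; fun_prop
    have cH2 : Continuous H2 := by simp only [H2]; fun_prop
    have i1 : ∫ z in K, H1 z = 0 := by
      refine Kfst (fun α θ => H1 (α, θ)) (fun α θ => Real.sin θ ^ (2*m) * (Real.sin α ^ (2*m+1) *
        (P.eval (Real.cos α) * ((-(m:ℝ)-1/2)*Ra (α,θ)*R x (α,θ) ^ (-(m:ℝ)-3/2)) - (R x (α,θ) ^ (-(m:ℝ)-1/2)) * (-Real.sin α*(derivative P).eval (Real.cos α)))))
        0 Real.pi 0 (2*Real.pi) hpi.le cH1 ?_ (by intro y; simp)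
      intro α θ
      have d1 := (dRa α θ).rpow_const (p := (-(m:ℝ)-1/2)) (Or.inl (hR x hx' (α,θ)).ne')
      have d2 := ((dRaa α θ).const_mul (-(m:ℝ)-1/2)).mul ((dRa α θ).rpow_const (p := (-(m:ℝ)-3/2)) (Or.inl (hR x hx' (α,θ)).ne'))
      have dp := (P.hasDerivAt (Real.cos α)).comp α (Real.hasDerivAt_cos α)
      have dp1 := (Real.hasDerivAt_sin α).neg.mul (((derivative P).hasDerivAt (Real.cos α)).comp α (Real.hasDerivAt_cos α))
      have := (((Real.hasDerivAt_sin α).pow (2*m+1)).mul ((dp.mul d2).sub (d1.mul dp1))).const_mul (Real.sin θ ^ (2*m))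
      refine this.congr_deriv ?_
      simp only [H1, Pi.mul_apply, Pi.pow_apply, Pi.sub_apply, Pi.neg_apply, Function.comp, Nat.add_sub_cancel]
      rw [show (-(m:ℝ)-1/2) - 1 = -(m:ℝ)-3/2 by ring, show (-(m:ℝ)-3/2) - 1 = -(m:ℝ)-5/2 by ring]
      push_cast; ring
    have i2 : ∫ z in K, H2 z = 0 := by
      refine Ksnd (fun α θ => H2 (α, θ)) (fun α θ => (P.eval (Real.cos α) * ((-(m:ℝ)-1/2) * 2 * σ * Real.sin α ^ (2*m) * (S x + ε * Real.sin α^2/S x) *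
         (Real.sin θ ^ (2*m+1) * R x (α,θ) ^ (-(m:ℝ)-3/2)))))
        0 Real.pi 0 (2*Real.pi) (by linarith) cH2 ?_ (by intro y; simp)
      intro α θ
      have d2 := (((Real.hasDerivAt_sin θ).pow (2*m+1)).mul ((dRt α θ).rpow_const (p := (-(m:ℝ)-3/2)) (Or.inl (hR x hx' (α,θ)).ne')))
      have := (d2.const_mul ((-(m:ℝ)-1/2) * 2 * σ * Real.sin α ^ (2*m) * (S x + ε * Real.sin α^2/S x))).const_mul (P.eval (Real.cos α))
      refine this.congr_deriv ?_
      simp only [H2, Pi.mul_apply, Pi.pow_apply, Pi.sub_apply, Pi.neg_apply, Function.comp, Nat.add_sub_cancel]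
      rw [show (-(m:ℝ)-3/2) - 1 = -(m:ℝ)-5/2 by ring]
      push_cast; ring
    have pw : ∀ z, F2 x z + (2*m+1) * (C x / S x) * F1 x z - ε * l * F x z + ε * H1 z + ε * H2 z = 0 := by
      intro z
      have hRp := hR x hx' z
      have e1 : R x z ^ (-(m:ℝ)-3/2) = R x z ^ (-(m:ℝ)-5/2) * R x z := by
        rw [← Real.rpow_add_one hRp.ne']; congr 1; ring
      have e0 : R x z ^ (-(m:ℝ)-1/2) = R x z ^ (-(m:ℝ)-5/2) * R x z ^ 2 := by
        rw [← Real.rpow_natCast (R x z) 2, ← Real.rpow_add hRp]; congr 1; push_cast; ring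
      have id := alg_id m A q σ ε (C x) (S x) (Real.cos z.1) (Real.sin z.1) (Real.cos z.2) (Real.sin z.2) (R x z) (R x z ^ (-(m:ℝ)-5/2))
        (P.eval (Real.cos z.1)) ((derivative P).eval (Real.cos z.1)) ((derivative (derivative P)).eval (Real.cos z.1)) l
        (Real.sin z.1 ^ (2*m)) (Real.sin z.2 ^ (2*m)) hε (hCS x) (Real.cos_sq_add_sin_sq _) (Real.cos_sq_add_sin_sq _) hσ hs
        rfl (hP _) (Rx x z) (Rxx x z) (Ra z) (Raa z) (Rt z) rfl rfl rfl rfl rfl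
      simp only [F2, F1, F, H1, H2, wt]
      rw [e0, e1]
      generalize R x z ^ (-(m:ℝ)-5/2) = κ at *
      rw [pow_succ]
      linear_combination id
    have ii : ∀ {f : ℝ × ℝ → ℝ}, ContinuousOn f K → Integrable f (volume.restrict K) := fun h => h.integrableOn_compact hK
    have tot : ∫ z in K, (F2 x z + (2*m+1) * (C x / S x) * F1 x z - ε * l * F x z + ε * H1 z + ε * H2 z) = 0 := by
      simp only [pw]; simp
    rw [int5 (ii (sl F2 cF2 x hx')) (ii (sl F1 cF1 x hx')) (ii (cF x hx').continuousOn) (ii cH1.continuousOn) (ii cH2.continuousOn), i1, i2] at tot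
    simp only [g2, g1, g]
    linarith
  have h0 : (0:ℝ) ∈ Ioo (-b) b := ⟨by linarith, hb⟩
  intro x hx
  have := ode_unique b hb (fun x => S x ^ (2*m+1)) (by fun_prop) (by simp [S0]) (fun x hx => pow_pos (Spos x hx) _) (ε * l)
    g g1 (fun x => P.eval (C x)) (fun x => (derivative P).eval (C x) * (ε * S x))
    (fun x hx => dg x (sub hx)) (fun x hx => (P.hasDerivAt (C x)).comp x (hC x)) ?_ ?_ (dg 0 h0).continuousAt
    (by fun_prop) (dg1 0 h0).continuousAt (by fun_prop) (by simpa [C0] using P1) x hx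
  · simp only [C0] at this
    rw [show g 0 = Gk m P A q σ 1 0 by simp only [g, F, R, C0, S0]; rfl] at this
    exact this
  · intro x hx
    have h := ((hS x).pow (2*m+1)).mul (dg1 x (sub hx))
    refine h.congr_deriv ?_
    have hs := (Spos x hx).ne'
    have o := ode x hx
    field_simp at o
    push_cast
    simp only [Nat.add_sub_cancel, Pi.mul_apply, Pi.pow_apply]
    rw [pow_succ]
    linear_combination S x ^ (2*m) * o
  · intro x hx
    have h := ((hS x).pow (2*m+1)).mul ((((derivative P).hasDerivAt (C x)).comp x (hC x)).mul ((hS x).const_mul ε))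
    refine h.congr_deriv ?_
    have o := hP (C x)
    push_cast
    simp only [Nat.add_sub_cancel, Function.comp, Pi.mul_apply, Pi.pow_apply]
    rw [pow_succ]
    linear_combination S x ^ (2*m) * S x * ε * o - S x ^ (2*m) * S x * ε * eval (C x) (derivative (derivative P)) * hCS x 
end SL

namespace SL
open Set Filter Topology MeasureTheory Polynomial

lemma Rk_pos1 {u v c s : ℝ} (hv : v ∈ Ioo (-1:ℝ) 1) (hc : 1 ≤ c) (hcu : c < u) (hs : s^2 = c^2-1) (z : ℝ × ℝ) :
    0 < Rk (u^2+v^2) (u*v) (Real.sqrt (u^2-1) * Real.sqrt (1-v^2)) c s z := by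
  have h1 : Real.sqrt (u^2-1) ^ 2 = u^2-1 := Real.sq_sqrt (by nlinarith)
  have h2 : Real.sqrt (1-v^2) ^ 2 = 1-v^2 := Real.sq_sqrt (by nlinarith [hv.1, hv.2])
  set σ := Real.sqrt (u^2-1) * Real.sqrt (1-v^2) with hσd
  have hσ : σ^2 = (u^2-1)*(1-v^2) := by rw [hσd, mul_pow, h1, h2]
  unfold Rk
  have ha := Real.cos_sq_add_sin_sq z.1
  have ht := Real.cos_sq_add_sin_sq z.2
  set ca := Real.cos z.1
  set sa := Real.sin z.1
  set ct := Real.cos z.2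
  set st := Real.sin z.2
  have key : u^2+v^2-2+c^2+ca^2-2*(u*v)*c*ca-2*σ*s*sa*ct = (σ - s*sa*ct)^2 + (s*sa*st)^2 + (u*v-c*ca)^2 := by
    linear_combination -hσ - s^2*sa^2*ht - sa^2 * hs - (c^2-1)*ha
  rw [key]
  have n1 := sq_nonneg (σ - s*sa*ct)
  have n2 := sq_nonneg (s*sa*st)
  have n3 := sq_nonneg (u*v-c*ca)
  by_contra hcon
  have e1 : σ - s*sa*ct = 0 := pow_eq_zero_iff (two_ne_zero) |>.1 (by linarith)
  have e2 : s*sa*st = 0 := pow_eq_zero_iff (two_ne_zero) |>.1 (by linarith)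
  have e3 : u*v-c*ca = 0 := pow_eq_zero_iff (two_ne_zero) |>.1 (by linarith)
  have e4 : σ^2 = (s*sa)^2 := by linear_combination (σ + s*sa*ct)*e1 - s*sa*st*e2 + s^2*sa^2*ht
  have e5 : u^2+v^2 = c^2+ca^2 := by linear_combination e4 - hσ + sa^2*hs+(c^2-1)*ha + (u*v+c*ca)*e3
  have e6 : (u^2-c^2)*(u^2-ca^2) = 0 := by linear_combination u^2*e5 - (u*v+c*ca)*e3
  have : 0 < (u^2-c^2)*(u^2-ca^2) := mul_pos (by nlinarith) (by nlinarith [sq_nonneg sa])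
  linarith

lemma Rk_pos2 {u c s : ℝ} (hu : 1 < u) (hc : c^2 ≤ 1) (z : ℝ × ℝ) : 0 < Rk (u^2+1) u 0 c s z := by
  unfold Rk
  have ha := Real.cos_sq_add_sin_sq z.1
  set ca := Real.cos z.1
  set sa := Real.sin z.1
  have : c * ca ≤ 1 := by nlinarith [sq_nonneg (c-ca), sq_nonneg sa]
  nlinarith [mul_pos (by linarith : 0 < u-1) (by linarith : 0 < u+1-2*(c*ca)), sq_nonneg (c-ca)]

theorem factor (m : ℕ) (P : ℝ[X]) (l : ℝ)
    (hP : ∀ x, (x^2-1) * (derivative (derivative P)).eval x + 2*((m:ℝ)+1)*x*(derivative P).eval x = l * P.eval x)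
    (P1 : P.eval 1 ≠ 0) (u v u0 : ℝ) (hv : v ∈ Ioo (-1:ℝ) 1) (hu0 : 1 < u0) (hu : u0 < u) :
    P.eval 1 ^ 2 * Gk m P (u^2+v^2) (u*v) (Real.sqrt (u^2-1) * Real.sqrt (1-v^2)) u0 (Real.sqrt (u0^2-1)) =
      Gk m P (u^2+1) u 0 1 0 * P.eval v * P.eval u0 := by
  have h1 : Real.sqrt (u^2-1) ^ 2 = u^2-1 := Real.sq_sqrt (by nlinarith)
  have h2 : Real.sqrt (1-v^2) ^ 2 = 1-v^2 := Real.sq_sqrt (by nlinarith [hv.1, hv.2])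
  have s1 := main_ode m P l hP (u^2+v^2) (u*v) (Real.sqrt (u^2-1) * Real.sqrt (1-v^2)) 1 (Real.arcosh u) Real.cosh Real.sinh
    (fun x => by simpa using Real.hasDerivAt_cosh x) Real.hasDerivAt_sinh (by norm_num)
    (fun x => by rw [Real.cosh_sq]; ring) Real.cosh_zero Real.sinh_zero
    (Real.arcosh_pos (by linarith)) (fun x hx => Real.sinh_pos_iff.2 hx.1) (by rw [mul_pow, h1, h2]; ring)
    (fun x hx z => Rk_pos1 hv (Real.one_le_cosh x) ?_ (by rw [Real.cosh_sq]; ring) z) P1 (Real.arcosh u0)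
    ⟨Real.arcosh_pos (by linarith), ?_⟩
  · have s2 := main_ode m P l hP (u^2+1) u 0 (-1) Real.pi Real.cos Real.sin
      (fun x => by simpa using Real.hasDerivAt_cos x) Real.hasDerivAt_sin (by norm_num)
      (fun x => by rw [Real.cos_sq']; ring) Real.cos_zero Real.sin_zero
      Real.pi_pos (fun x hx => Real.sin_pos_of_pos_of_lt_pi hx.1 hx.2) (by ring)
      (fun x hx z => Rk_pos2 (by linarith) (Real.cos_sq_le_one x) z) P1 (Real.arccos v)
      ⟨Real.arccos_pos.2 hv.2, lt_of_le_of_ne (Real.arccos_le_pi v) (fun h => by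
        have := Real.arccos_eq_pi.1 h; linarith [hv.1])⟩
    rw [Real.cos_arccos hv.1.le hv.2.le] at s2
    rw [Real.cosh_arcosh hu0.le, Real.sinh_arcosh hu0.le] at s1
    have e : Gk m P (u^2+v^2) (u*v) (Real.sqrt (u^2-1) * Real.sqrt (1-v^2)) 1 0 = Gk m P (u^2+1) u 0 v (Real.sin (Real.arccos v)) := by
      unfold Gk Rk
      congr 1; ext z; congr 2; ring
    rw [e] at s1
    linear_combination P.eval 1 * s1 + P.eval u0 * s2
  · rw [← Real.cosh_abs]
    have : |x| < Real.arcosh u := abs_lt.2 hx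
    calc Real.cosh |x| < Real.cosh (Real.arcosh u) := by
          rw [Real.cosh_lt_cosh, abs_abs]; exact this.trans_le (le_abs_self _)
      _ = u := Real.cosh_arcosh (by linarith)
  · exact (Real.arcosh_lt_arcosh (by linarith) (by linarith)).2 hu

lemma rod_ode (n m : ℕ) (x : ℝ) :
    (x^2-1) * (derivative (derivative (rodD n (n+m)))).eval x + 2*((m:ℝ)+1)*x*(derivative (rodD n (n+m))).eval x
      = (((n:ℝ)+m+1) * ((n:ℝ)-m)) * (rodD n (n+m)).eval x := by
  have h := congrArg (eval x) (rodD_rec n (n+m))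
  rw [← rodD_succ, ← rodD_succ]
  simp at h
  linear_combination h
end SL

namespace SL
open Set Filter Topology MeasureTheory Polynomial


lemma jac_step (m j : ℕ) (A B : ℝ) (h : |B| < A) :
    ((m:ℝ)^2-j^2) * ∫ θ in (0:ℝ)..(2*Real.pi), Real.sin θ ^ (2*j) * (derivative^[j] (Chebyshev.T ℝ m)).eval (Real.cos θ) * (A - B * Real.cos θ) ^ (-(j:ℝ)-1/2)
     = ((j:ℝ)+1/2)*B * ∫ θ in (0:ℝ)..(2*Real.pi), Real.sin θ ^ (2*(j+1)) * (derivative^[j+1] (Chebyshev.T ℝ m)).eval (Real.cos θ) * (A - B * Real.cos θ) ^ (-((j+1:ℕ):ℝ)-1/2) := by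
  have hp : ∀ θ, 0 < A - B * Real.cos θ := by
    intro θ
    have h1 := Real.abs_cos_le_one θ
    have : B * Real.cos θ ≤ |B| := by
      calc B * Real.cos θ ≤ |B * Real.cos θ| := le_abs_self _
        _ = |B| * |Real.cos θ| := abs_mul _ _
        _ ≤ |B| * 1 := by gcongr
        _ = _ := mul_one _
    linarith
  set T := Chebyshev.T ℝ m
  have cp : ∀ e : ℝ, Continuous (fun θ => (A - B * Real.cos θ) ^ e) := fun e =>
    (by fun_prop : Continuous fun θ => A - B * Real.cos θ).rpow_const fun θ => Or.inl (hp θ).ne'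
  have c0 := cp (-(j:ℝ)-1/2)
  have c1 := cp (-((j+1:ℕ):ℝ)-1/2)
  set f0 : ℝ → ℝ := fun θ => Real.sin θ ^ (2*j) * (derivative^[j] T).eval (Real.cos θ) * (A - B * Real.cos θ) ^ (-(j:ℝ)-1/2) with hf0
  set f1 : ℝ → ℝ := fun θ => Real.sin θ ^ (2*(j+1)) * (derivative^[j+1] T).eval (Real.cos θ) * (A - B * Real.cos θ) ^ (-((j+1:ℕ):ℝ)-1/2) with hf1
  have cf0 : Continuous f0 := by rw [hf0]; fun_prop
  have cf1 : Continuous f1 := by rw [hf1]; fun_prop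
  have : ∫ θ in (0:ℝ)..(2*Real.pi), (((m:ℝ)^2-j^2) * f0 θ - ((j:ℝ)+1/2)*B * f1 θ) = 0 := by
    rw [intervalIntegral.integral_eq_sub_of_hasDerivAt (f := fun θ => Real.sin θ ^ (2*j+1) * (derivative^[j+1] T).eval (Real.cos θ) * (A - B * Real.cos θ) ^ (-(j:ℝ)-1/2))]
    · simp
    · intro θ _
      have d1 := (Real.hasDerivAt_sin θ).pow (2*j+1)
      have d2 := ((derivative^[j+1] T).hasDerivAt (Real.cos θ)).comp θ (Real.hasDerivAt_cos θ)
      have d3 := (((Real.hasDerivAt_cos θ).const_mul B).const_sub A).rpow_const (p := (-(j:ℝ)-1/2)) (Or.inl (hp θ).ne')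
      refine ((d1.mul d2).mul d3).congr_deriv ?_
      have ch := Polynomial.Chebyshev.one_sub_X_sq_mul_iterate_derivative_T_eval m j (Real.cos θ)
      simp only [Pi.mul_apply, Pi.pow_apply, Function.comp, Nat.add_sub_cancel, hf0, hf1]
      rw [show derivative (derivative^[j+1] T) = derivative^[j+2] T from (Function.iterate_succ_apply' _ _ _).symm]
      rw [show (-(j:ℝ)-1/2) - 1 = -((j+1:ℕ):ℝ)-1/2 by push_cast; ring]
      have hs := Real.sin_sq θ
      rw [← hs] at ch
      push_cast at ch ⊢
      generalize (A - B * Real.cos θ) ^ (-(j:ℝ)-1/2) = k0 at *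
      generalize (A - B * Real.cos θ) ^ (-((j:ℝ)+1)-1/2) = k1 at *
      rw [show 2*(j+1) = 2*j+2 by ring, pow_succ, pow_add]
      linear_combination (-Real.sin θ ^ (2*j) * k0) * ch
    · exact ((cf0.const_mul _).sub (cf1.const_mul _)).intervalIntegrable _ _
  rw [intervalIntegral.integral_sub ((cf0.const_mul _).intervalIntegrable _ _) ((cf1.const_mul _).intervalIntegrable _ _),
    intervalIntegral.integral_const_mul, intervalIntegral.integral_const_mul] at this
  linarith

lemma jac_iter (m j : ℕ) (A B : ℝ) (h : |B| < A) :
    (∏ l ∈ Finset.range j, ((m:ℝ)^2-l^2)) * ∫ θ in (0:ℝ)..(2*Real.pi), Real.cos (m*θ) * (A - B * Real.cos θ) ^ (-(1/2):ℝ)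
     = (∏ l ∈ Finset.range j, (2*(l:ℝ)+1)) * (B/2)^j * ∫ θ in (0:ℝ)..(2*Real.pi), Real.sin θ ^ (2*j) * (derivative^[j] (Chebyshev.T ℝ m)).eval (Real.cos θ) * (A - B * Real.cos θ) ^ (-(j:ℝ)-1/2) := by
  induction j with
  | zero => simp
  | succ j ih =>
    rw [Finset.prod_range_succ, Finset.prod_range_succ]
    have := jac_step m j A B h
    linear_combination ((m:ℝ)^2-j^2) * ih + (∏ l ∈ Finset.range j, (2*(l:ℝ)+1)) * (B/2)^j * this

theorem jacobi (m : ℕ) (A B : ℝ) (h : |B| < A) :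
    ∫ θ in (0:ℝ)..(2*Real.pi), Real.cos (m*θ) * (A - B * Real.cos θ) ^ (-(1/2):ℝ)
     = (B/2)^m * ∫ θ in (0:ℝ)..(2*Real.pi), Real.sin θ ^ (2*m) * (A - B * Real.cos θ) ^ (-(m:ℝ)-1/2) := by
  have h1 := jac_iter m m A B h
  have h2 := Polynomial.Chebyshev.iterate_derivative_T_eval_one (R := ℝ) m m
  have hd : (derivative^[m] (Chebyshev.T ℝ m)).natDegree = 0 := by
    have := natDegree_iterate_derivative (Chebyshev.T ℝ m) m
    simp at this; exact this
  obtain ⟨c, hc⟩ := natDegree_eq_zero.1 hd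
  simp only [← hc, eval_C] at h1 h2
  have e : ∫ θ in (0:ℝ)..(2*Real.pi), Real.sin θ ^ (2*m) * c * (A - B * Real.cos θ) ^ (-(m:ℝ)-1/2) =
    c * ∫ θ in (0:ℝ)..(2*Real.pi), Real.sin θ ^ (2*m) * (A - B * Real.cos θ) ^ (-(m:ℝ)-1/2) := by
    rw [← intervalIntegral.integral_const_mul]; congr 1; ext θ; ring
  rw [e] at h1
  have hne : (∏ l ∈ Finset.range m, ((m:ℝ)^2-l^2)) ≠ 0 := by
    refine Finset.prod_ne_zero_iff.2 fun l hl => ?_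
    have : (l:ℝ) < m := by exact_mod_cast Finset.mem_range.1 hl
    have : (0:ℝ) ≤ l := by positivity
    nlinarith
  push_cast at h2
  apply mul_left_cancel₀ hne
  rw [h1, ← h2]; ring
end SL

namespace SL
open Set Filter Topology MeasureTheory Polynomial

lemma legP_eq (n : ℕ) : legendreP n = fun x => (1/(2^n*(n.factorial:ℝ))) * (rodD n n).eval x := by
  funext x
  unfold legendreP
  have : (fun y : ℝ => (y^2-1)^n) = fun x => (rodD n 0).eval x := by
    funext y; simp [rodD]
  rw [this, rodD_iter, Nat.zero_add]

lemma legP_iter (n m : ℕ) (x : ℝ) :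
    iteratedDeriv m (legendreP n) x = (1/(2^n*(n.factorial:ℝ))) * (rodD n (n+m)).eval x := by
  rw [legP_eq, iteratedDeriv_const_mul_field, rodD_iter]

lemma legQ_iter (n j : ℕ) : ∀ x : ℝ, 1 < x → 
    iteratedDeriv j (legendreQ n) x = 1/2 * (-1)^j * j.factorial * ∫ t in (-1:ℝ)..1, legendreP n t / (x-t)^(j+1) := by
  have cP : Continuous (legendreP n) := by rw [legP_eq]; fun_prop
  induction j with
  | zero => intro x hx; simp [legendreQ]
  | succ j ih =>
    intro x hx
    rw [iteratedDeriv_succ]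
    have ev : iteratedDeriv j (legendreQ n) =ᶠ[𝓝 x] fun x => 1/2 * (-1)^j * j.factorial * ∫ t in Icc (-1:ℝ) 1, legendreP n t / (x-t)^(j+1) := by
      filter_upwards [Ioi_mem_nhds hx] with y hy
      rw [ih y hy, intervalIntegral.integral_of_le (by norm_num), integral_Icc_eq_integral_Ioc]
    rw [ev.deriv_eq]
    have hne : ∀ x ∈ Ioi (1:ℝ), ∀ t ∈ Icc (-1:ℝ) 1, x - t ≠ 0 := fun x hx t ht => by
      have := ht.2; have := mem_Ioi.1 hx; intro h; linarith
    have d := hasDerivAt_setInt volume (Icc (-1:ℝ) 1) isCompact_Icc (Ioi 1) isOpen_Ioi (fun x t => legendreP n t / (x-t)^(j+1))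
      (fun x t => legendreP n t * (-((j:ℝ)+1) / (x-t)^(j+2))) ?_ ?_ ?_ x hx
    · rw [(d.const_mul (1/2 * (-1)^j * (j.factorial:ℝ))).deriv]
      rw [intervalIntegral.integral_of_le (by norm_num), ← integral_Icc_eq_integral_Ioc]
      have : ∀ t, legendreP n t * (-((j:ℝ)+1) / (x-t)^(j+2)) = (-((j:ℝ)+1)) * (legendreP n t / (x-t)^(j+1+1)) := by intro t; ring
      simp only [this, integral_const_mul]
      rw [Nat.factorial_succ]; push_cast; ring
    · intro x hx
      exact cP.continuousOn.div (by fun_prop) fun t ht => pow_ne_zero _ (hne x hx t ht)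
    · refine (cP.comp continuous_snd).continuousOn.mul (continuousOn_const.div (by fun_prop) fun q hq => pow_ne_zero _ (hne _ hq.1 _ hq.2))
    · intro x hx t ht
      have h0 := hne x hx t ht
      have := (((hasDerivAt_id x).sub_const t).pow (j+1)).inv (pow_ne_zero _ h0) |>.const_mul (legendreP n t)
      refine this.congr_deriv ?_
      simp only [id, Nat.add_sub_cancel, Pi.pow_apply]
      push_cast
      congr 1
      rw [div_eq_div_iff (by positivity) (by positivity)]
      ring

lemma J_step (n k p : ℕ) (hk : k < n) (u : ℝ) (hu : 1 < u) :
    ∫ s in (-1:ℝ)..1, (rodD n (k+1)).eval s / (u-s)^(p+1) = -((p:ℝ)+1) * ∫ s in (-1:ℝ)..1, (rodD n k).eval s / (u-s)^(p+2) := by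
  have hne : ∀ s ∈ uIcc (-1:ℝ) 1, u - s ≠ 0 := fun t ht => by
      rw [uIcc_of_le (by norm_num)] at ht
      have := ht.2; intro h; linarith
  have i1 : IntervalIntegrable (fun s => (rodD n (k+1)).eval s / (u-s)^(p+1)) volume (-1) 1 :=
    ContinuousOn.intervalIntegrable ((by fun_prop : Continuous fun s => (rodD n (k+1)).eval s).continuousOn.div (by fun_prop) fun t ht => pow_ne_zero _ (hne t ht))
  have i2 : IntervalIntegrable (fun s => (rodD n k).eval s / (u-s)^(p+2)) volume (-1) 1 :=
    ContinuousOn.intervalIntegrable ((by fun_prop : Continuous fun s => (rodD n k).eval s).continuousOn.div (by fun_prop) fun t ht => pow_ne_zero _ (hne t ht))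
  have := intervalIntegral.integral_eq_sub_of_hasDerivAt (a := -1) (b := 1) (f := fun s => (rodD n k).eval s / (u-s)^(p+1))
    (f' := fun s => (rodD n (k+1)).eval s / (u-s)^(p+1) + ((p:ℝ)+1) * ((rodD n k).eval s / (u-s)^(p+2))) ?_ (i1.add (i2.const_mul _))
  · rw [intervalIntegral.integral_add i1 (i2.const_mul _), intervalIntegral.integral_const_mul, rodD_bdry n k hk 1 (by norm_num), rodD_bdry n k hk (-1) (by norm_num)] at this
    simp at this
    linarith
  · intro s hs
    have h0 := hne s hs
    have := (rodD_hasDerivAt n k s).div (((hasDerivAt_id s).const_sub u).pow (p+1)) (pow_ne_zero _ h0)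
    refine this.congr_deriv ?_
    simp only [id, Nat.add_sub_cancel, Pi.pow_apply]
    push_cast
    field_simp
    ring

lemma J_iter (n p : ℕ) (u : ℝ) (hu : 1 < u) (i : ℕ) (hi : i ≤ n) :
    (p.factorial:ℝ) * ∫ s in (-1:ℝ)..1, (rodD n n).eval s / (u-s)^(p+1) = (-1)^i * ((p+i).factorial:ℝ) * ∫ s in (-1:ℝ)..1, (rodD n (n-i)).eval s / (u-s)^(p+i+1) := by
  induction i with
  | zero => simp
  | succ i ih =>
    rw [ih (by omega), show n - i = (n-(i+1))+1 by omega, J_step n _ (p+i) (by omega) u hu]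
    rw [show p + (i+1) = (p+i)+1 by ring, Nat.factorial_succ (p+i)]
    push_cast; ring

lemma subst_cos (h : ℝ → ℝ) (hh : ContinuousOn h (Icc (-1) 1)) :
    ∫ s in (-1:ℝ)..1, h s = ∫ α in (0:ℝ)..Real.pi, h (Real.cos α) * Real.sin α := by
  have := intervalIntegral.integral_comp_mul_deriv'' (a := 0) (b := Real.pi) (f := Real.cos) (f' := fun x => -Real.sin x) (g := h)
    (by fun_prop) (fun x _ => (Real.hasDerivAt_cos x).hasDerivWithinAt) (by fun_prop)
    (hh.mono (by rintro _ ⟨x, _, rfl⟩; exact Real.cos_mem_Icc x))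
  simp only [Real.cos_zero, Real.cos_pi] at this
  rw [intervalIntegral.integral_symm, ← this, ← intervalIntegral.integral_neg]
  congr 1; ext α; simp

lemma Cm_eq (m : ℕ) : ∫ θ in (0:ℝ)..(2*Real.pi), Real.sin θ ^ (2*m) = 2*Real.pi*((2*m).factorial:ℝ)/(4^m*(m.factorial:ℝ)^2) := by
  induction m with
  | zero => simp
  | succ m ih =>
    rw [show 2*(m+1) = 2*m+2 by ring, integral_sin_pow, ih]
    simp
    rw [Nat.factorial_succ (2*m+1), Nat.factorial_succ (2*m), Nat.factorial_succ m]
    push_cast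
    field_simp
    ring

end SL

namespace SL
open Set Filter Topology MeasureTheory Polynomial

lemma subst_cos' {E : Type*} [NormedAddCommGroup E] [NormedSpace ℝ E] (h : ℝ → E) :
    ∫ s in (-1:ℝ)..1, h s = ∫ α in (0:ℝ)..Real.pi, Real.sin α • h (Real.cos α) := by
  have := integral_image_eq_integral_abs_deriv_smul (s := Icc 0 Real.pi) (f := Real.cos) (f' := fun x => -Real.sin x)
    measurableSet_Icc (fun x _ => (Real.hasDerivAt_cos x).hasDerivWithinAt) Real.injOn_cos h
  rw [Real.bijOn_cos.image_eq] at this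
  rw [intervalIntegral.integral_of_le (by norm_num), ← integral_Icc_eq_integral_Ioc, this,
    intervalIntegral.integral_of_le Real.pi_pos.le, ← integral_Icc_eq_integral_Ioc]
  refine setIntegral_congr_fun measurableSet_Icc fun x hx => ?_
  have := Real.sin_nonneg_of_mem_Icc hx
  simp only [abs_neg, abs_of_nonneg this]

lemma G11 (m : ℕ) (P : ℝ[X]) (u : ℝ) (hu : 1 < u) :
    Gk m P (u^2+1) u 0 1 0 = (2*Real.pi*((2*m).factorial:ℝ)/(4^m*(m.factorial:ℝ)^2)) *
      ∫ s in (-1:ℝ)..1, (1-s^2)^m * P.eval s / (u-s)^(2*m+1) := by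
  rw [← Cm_eq, subst_cos']
  unfold Gk
  have : ∀ z : ℝ × ℝ, wt m P z * Rk (u^2+1) u 0 1 0 z ^ (-(m:ℝ)-1/2) =
      (Real.sin z.1 • ((1-Real.cos z.1^2)^m * P.eval (Real.cos z.1) / (u-Real.cos z.1)^(2*m+1))) * (Real.sin z.2 ^ (2*m)) := by
    intro z
    have hpos : 0 < u - Real.cos z.1 := by linarith [Real.cos_le_one z.1]
    have e : Rk (u^2+1) u 0 1 0 z = (u - Real.cos z.1)^2 := by unfold Rk; ring
    have e2 : Rk (u^2+1) u 0 1 0 z ^ (-(m:ℝ)-1/2) = ((u-Real.cos z.1)^(2*m+1))⁻¹ := by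
      rw [e, ← Real.rpow_natCast _ 2, ← Real.rpow_mul hpos.le, ← Real.rpow_natCast, ← Real.rpow_neg hpos.le]
      congr 1; push_cast; ring
    rw [e2, wt, ← Real.sin_sq, smul_eq_mul, ← pow_mul, pow_succ]
    ring
  simp only [this]
  rw [Measure.volume_eq_prod, setIntegral_prod_mul (fun α => Real.sin α • ((1-Real.cos α^2)^m * P.eval (Real.cos α) / (u-Real.cos α)^(2*m+1))) (fun θ => Real.sin θ ^ (2*m))]
  rw [intervalIntegral.integral_of_le Real.pi_pos.le, intervalIntegral.integral_of_le (by linarith [Real.pi_pos]), 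
    integral_Icc_eq_integral_Ioc, integral_Icc_eq_integral_Ioc, mul_comm]

theorem Gk_final (n m : ℕ) (hm : m ≤ n) (u v u0 : ℝ) (hv : v ∈ Ioo (-1:ℝ) 1) (hu0 : 1 < u0) (hu : u0 < u) :
    Gk m (rodD n (n+m)) (u^2+v^2) (u*v) (Real.sqrt (u^2-1) * Real.sqrt (1-v^2)) u0 (Real.sqrt (u0^2-1)) =
     4*Real.pi*(-1)^m*((n-m).factorial/(n+m).factorial) * (2^n*n.factorial) * iteratedDeriv m (legendreQ n) u
       * iteratedDeriv m (legendreP n) v * iteratedDeriv m (legendreP n) u0 := by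
  have hu1 : 1 < u := by linarith
  have P1 := rodD_eval_one n m hm
  have f1 : (0:ℝ) < (n-m).factorial := by positivity
  have f2 : (0:ℝ) < (n+m).factorial := by positivity
  have f3 : (0:ℝ) < m.factorial := by positivity
  have f4 : (0:ℝ) < n.factorial := by positivity
  have f5 : (0:ℝ) < (2*m).factorial := by positivity
  have hP1 : (rodD n (n+m)).eval 1 = 2^n*n.factorial*(n+m).factorial/(2^m*m.factorial*(n-m).factorial) := by
    rw [eq_div_iff (by positivity)]; exact P1
  have hP1n : (rodD n (n+m)).eval 1 ≠ 0 := by rw [hP1]; positivity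
  have fac := factor m (rodD n (n+m)) _ (rod_ode n m) hP1n u v u0 hv hu0 hu
  rw [G11 _ _ _ hu1] at fac
  have e1 : ∫ s in (-1:ℝ)..1, (1-s^2)^m * (rodD n (n+m)).eval s / (u-s)^(2*m+1) =
      (-1)^m * ((n+m).factorial/(n-m).factorial) * ∫ s in (-1:ℝ)..1, (rodD n (n-m)).eval s / (u-s)^(2*m+1) := by
    rw [← intervalIntegral.integral_const_mul]
    congr 1; ext s
    have h := congrArg (eval s) (rodD_symm n m hm)
    simp at h
    have h' : (s^2-1)^m * (rodD n (n+m)).eval s = (n+m).factorial/(n-m).factorial * (rodD n (n-m)).eval s := by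
      field_simp; linear_combination h
    rw [show (1-s^2) = -1*(s^2-1) by ring, mul_pow, mul_assoc, h']; ring
  have e2 := J_iter n m u hu1 m hm
  rw [show m+m = 2*m by ring] at e2
  have e3 := legQ_iter n m u hu1
  have e4 : ∫ t in (-1:ℝ)..1, legendreP n t / (u-t)^(m+1) = (1/(2^n*(n.factorial:ℝ))) * ∫ t in (-1:ℝ)..1, (rodD n n).eval t / (u-t)^(m+1) := by
    rw [← intervalIntegral.integral_const_mul, legP_eq]
    congr 1; ext s; ring
  rw [e4] at e3
  rw [e1, hP1] at fac
  rw [legP_iter, legP_iter, e3]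
  set G := Gk m (rodD n (n+m)) (u^2+v^2) (u*v) (Real.sqrt (u^2-1) * Real.sqrt (1-v^2)) u0 (Real.sqrt (u0^2-1))
  have e2' : ∫ s in (-1:ℝ)..1, (rodD n (n-m)).eval s / (u-s)^(2*m+1) = (-1)^m * m.factorial / (2*m).factorial * ∫ t in (-1:ℝ)..1, (rodD n n).eval t / (u-t)^(m+1) := by
    have : ((-1:ℝ)^m)*(-1)^m = 1 := by rw [← mul_pow]; norm_num
    field_simp
    linear_combination -(-1)^m * e2 - (∫ s in (-1:ℝ)..1, (rodD n (n-m)).eval s / (u-s)^(2*m+1)) * (2*m).factorial * this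
  rw [e2'] at fac
  generalize (∫ t in (-1:ℝ)..1, (rodD n n).eval t / (u-t)^(m+1)) = J at *
  have hs : ((-1:ℝ)^m)*(-1)^m = 1 := by rw [← mul_pow]; norm_num
  generalize (-1:ℝ)^m = sg at *
  have hc : (4:ℝ)^m = 2^m*2^m := by rw [← mul_pow]; norm_num
  rw [hc] at fac
  have hne : (2^n*n.factorial*(n+m).factorial/(2^m*m.factorial*(n-m).factorial) : ℝ)^2 ≠ 0 := by positivity
  apply mul_left_cancel₀ hne
  rw [fac]
  have p1 : (2:ℝ)^n ≠ 0 := by positivity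
  have p2 : (2:ℝ)^m ≠ 0 := by positivity
  field_simp
  ring

lemma inner (m : ℕ) (A B φ : ℝ) (h : |B| < A) :
    ∫ t in (0:ℝ)..(2*Real.pi), (((A - B * Real.cos (t-φ)) ^ (-(1/2):ℝ) : ℝ) : ℂ) * Complex.exp (Complex.I * m * t) =
     Complex.exp (Complex.I * m * φ) * (((B/2)^m * ∫ θ in (0:ℝ)..(2*Real.pi), Real.sin θ ^ (2*m) * (A - B * Real.cos θ) ^ (-(m:ℝ)-1/2) : ℝ) : ℂ) := by
  rw [← jacobi m A B h]
  have hp : ∀ θ, 0 < A - B * Real.cos θ := by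
    intro θ
    have h1 := Real.abs_cos_le_one θ
    have : B * Real.cos θ ≤ |B| := by
      calc B * Real.cos θ ≤ |B * Real.cos θ| := le_abs_self _
        _ = |B| * |Real.cos θ| := abs_mul _ _
        _ ≤ |B| * 1 := by gcongr
        _ = _ := mul_one _
    linarith
  have cp : Continuous (fun θ => (A - B * Real.cos θ) ^ (-(1/2):ℝ)) := 
    (by fun_prop : Continuous fun θ => A - B * Real.cos θ).rpow_const fun θ => Or.inl (hp θ).ne'
  let g : ℝ → ℂ := fun θ => (((A - B * Real.cos θ) ^ (-(1/2):ℝ) : ℝ) : ℂ) * Complex.exp (Complex.I * m * θ)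
  have gper : Function.Periodic g (2*Real.pi) := by
    intro θ
    simp only [g, Real.cos_add_two_pi]
    congr 1
    push_cast
    rw [show Complex.I * m * (θ + 2*Real.pi) = Complex.I * m * θ + m * (2*Real.pi*Complex.I) by ring, Complex.exp_add,
      Complex.exp_nat_mul_two_pi_mul_I, mul_one]
  have s1 : ∀ t : ℝ, (((A - B * Real.cos (t-φ)) ^ (-(1/2):ℝ) : ℝ) : ℂ) * Complex.exp (Complex.I * m * t) = Complex.exp (Complex.I * m * φ) * g (t-φ) := by
    intro t
    simp only [g]
    rw [show Complex.I * m * t = Complex.I * m * φ + Complex.I * m * ((t-φ:ℝ):ℂ) by push_cast; ring, Complex.exp_add]; ring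
  simp only [s1]
  rw [intervalIntegral.integral_const_mul, intervalIntegral.integral_comp_sub_right (fun t => g t)]
  have s2 : ∫ t in (0-φ)..(2*Real.pi-φ), g t = ∫ t in (0:ℝ)..(2*Real.pi), g t := by
    have := gper.intervalIntegral_add_eq (0-φ) 0
    rw [zero_add] at this
    rw [← this]; congr 1; ring
  rw [s2]
  congr 1
  have s3 : ∀ θ, g θ = ((Real.cos (m*θ) * (A - B * Real.cos θ) ^ (-(1/2):ℝ) : ℝ) : ℂ) + Complex.I * ((Real.sin (m*θ) * (A - B * Real.cos θ) ^ (-(1/2):ℝ) : ℝ) : ℂ) := by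
    intro θ
    simp only [g]
    rw [show Complex.I * m * θ = ((m*θ:ℝ):ℂ) * Complex.I by push_cast; ring, Complex.exp_mul_I]
    push_cast; ring
  have odd : ∫ θ in (0:ℝ)..(2*Real.pi), Real.sin (m*θ) * (A - B * Real.cos θ) ^ (-(1/2):ℝ) = 0 := by
    have := intervalIntegral.integral_comp_sub_left (a := 0) (b := 2*Real.pi) (fun θ => Real.sin (m*θ) * (A - B * Real.cos θ) ^ (-(1/2):ℝ)) (2*Real.pi)
    have e : ∀ θ, Real.sin (m*(2*Real.pi-θ)) * (A - B * Real.cos (2*Real.pi-θ)) ^ (-(1/2):ℝ) = - (Real.sin (m*θ) * (A - B * Real.cos θ) ^ (-(1/2):ℝ)) := by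
      intro θ
      rw [Real.cos_two_pi_sub, mul_sub, Real.sin_nat_mul_two_pi_sub]; ring
    simp only [e, intervalIntegral.integral_neg, sub_self, sub_zero] at this
    linarith
  simp only [s3]
  rw [intervalIntegral.integral_add, intervalIntegral.integral_const_mul, intervalIntegral.integral_ofReal, intervalIntegral.integral_ofReal, odd]
  · simp
  · exact Continuous.intervalIntegrable (by fun_prop) _ _
  · exact Continuous.intervalIntegrable (by fun_prop) _ _
end SL

namespace SL
open Set Filter Topology MeasureTheory Polynomial

lemma dist_eq (a : ℝ) (ha : 0 < a) (u v φ u0 α t : ℝ) (hu : 1 < u) (hu0 : 1 < u0) (hv : v ∈ Ioo (-1:ℝ) 1) (hα : α ∈ Icc 0 Real.pi) :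
    ‖prolate a u v φ - prolate a u0 (Real.cos α) t‖ =
      a * Real.sqrt (Rk (u^2+v^2) (u*v) (Real.sqrt (u^2-1) * Real.sqrt (1-v^2)) u0 (Real.sqrt (u0^2-1)) (α, t-φ)) := by
  have h1 : Real.sqrt (u^2-1) ^ 2 = u^2-1 := Real.sq_sqrt (by nlinarith)
  have h2 : Real.sqrt (1-v^2) ^ 2 = 1-v^2 := Real.sq_sqrt (by nlinarith [hv.1, hv.2])
  have h3 : Real.sqrt (u0^2-1) ^ 2 = u0^2-1 := Real.sq_sqrt (by nlinarith)
  have hs : Real.sqrt (1 - Real.cos α^2) = Real.sin α := by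
    rw [← Real.sin_sq]; exact Real.sqrt_sq (Real.sin_nonneg_of_mem_Icc hα)
  rw [EuclideanSpace.norm_eq, Fin.sum_univ_three]
  have e : a = Real.sqrt (a^2) := (Real.sqrt_sq ha.le).symm
  rw [show ∀ R, a * Real.sqrt R = Real.sqrt (a^2 * R) by intro R; rw [Real.sqrt_mul (by positivity), Real.sqrt_sq ha.le]]
  congr 1
  simp only [prolate, Rk, Real.norm_eq_abs, sq_abs, hs]
  simp [hs]
  rw [Real.cos_sub]
  have c1 := Real.cos_sq_add_sin_sq φ
  have c2 := Real.cos_sq_add_sin_sq t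
  have c3 := Real.cos_sq_add_sin_sq α
  generalize Real.sqrt (u^2-1) = x1 at *
  generalize Real.sqrt (1-v^2) = x2 at *
  generalize Real.sqrt (u0^2-1) = x3 at *
  linear_combination a^2*(x1^2*x2^2*c1 + x3^2*Real.sin α^2*c2 + x2^2*h1 + (u^2-1)*h2 + Real.sin α^2*h3 + (u0^2-1)*c3)

lemma key_alg (m : ℕ) (a s0 N c p x1 x2 sg r Q pv p0 : ℝ) (hp : p ≠ 0) (hc : c ≠ 0) :
    a * s0 / (4*p) * N / c * ((x1*x2)*s0)^m * (4*p*sg*r*c*Q*pv*p0) =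
      (a*r*sg*s0*(s0^m*p0)*(x1^m*Q))*(N*(x2^m*pv)) := by
  rw [mul_pow, mul_pow]
  generalize s0^m = A
  generalize x1^m = B
  generalize x2^m = C
  have h : a * s0 / (4*p) * N / c * (4*p*c) = a*s0*N := by
    rw [div_mul_eq_mul_div, div_mul_eq_mul_div, div_mul_eq_mul_div, div_div, div_eq_iff (by simp [hp, hc])]
  linear_combination (B*C*A*sg*r*Q*pv*p0) * h

set_option maxHeartbeats 2000000 in
theorem assembly (a : ℝ) (ha : 0 < a) (u₀ : ℝ) (hu₀ : 1 < u₀)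
    (n m : ℕ) (hm : m ≤ n) (u v φ : ℝ) (hu : u₀ < u) (hv : v ∈ Set.Ioo (-1 : ℝ) 1) :
    singleLayerP a u₀ (fun s t => sphY n m s t / ((Real.sqrt (u₀ ^ 2 - s ^ 2) : ℝ) : ℂ))
        (prolate a u v φ) =
      ((a * (((n - m).factorial : ℝ) / ((n + m).factorial : ℝ)) * (-1 : ℝ) ^ m *
          Real.sqrt (u₀ ^ 2 - 1) * assocP n m u₀ * assocQ n m u : ℝ) : ℂ) * sphY n m v φ := by
  set P := rodD n (n+m) with hPd
  set σ := Real.sqrt (u^2-1) * Real.sqrt (1-v^2) with hσ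
  set s0 := Real.sqrt (u₀^2-1) with hs0
  set N := Real.sqrt ((2 * (n : ℝ) + 1) / (4 * Real.pi)) * Real.sqrt (((n - m).factorial : ℝ) / ((n + m).factorial : ℝ)) with hN
  set R : ℝ × ℝ → ℝ := fun z => Rk (u^2+v^2) (u*v) σ u₀ s0 z with hR
  have hpi := Real.pi_pos
  have hu1 : 1 < u := by linarith
  have Rpos : ∀ z, 0 < R z := fun z => Rk_pos1 hv hu₀.le hu (Real.sq_sqrt (by nlinarith)) z
  have cR : Continuous R := by rw [hR]; unfold Rk; fun_prop
  have cRp : ∀ e : ℝ, Continuous (fun z => R z ^ e) := fun e => cR.rpow_const fun z => Or.inl (Rpos z).ne'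
  set k : ℝ := a * s0 / (4*Real.pi) * N / (2^n*n.factorial) with hk
  let W : ℝ → ℝ := fun α => Real.sin α ^ (m+1) * P.eval (Real.cos α)
  have cW : Continuous W := by simp only [W]; fun_prop
  have step1 : ∀ t, (∫ s in (-1 : ℝ)..1, ((areaElemP a u₀ s / (4 * Real.pi * ‖prolate a u v φ - prolate a u₀ s t‖) : ℝ) : ℂ) * 
        (sphY n m s t / ((Real.sqrt (u₀ ^ 2 - s ^ 2) : ℝ) : ℂ))) =
      k * ∫ α in Icc 0 Real.pi, (W α : ℂ) * (((R (α, t-φ) ^ (-(1/2):ℝ) : ℝ) : ℂ) * Complex.exp (Complex.I * m * t)) := by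
    intro t
    rw [subst_cos', intervalIntegral.integral_of_le hpi.le, ← integral_Icc_eq_integral_Ioc, ← integral_const_mul]
    refine setIntegral_congr_fun measurableSet_Icc fun α hα => ?_
    have hd := dist_eq a ha u v φ u₀ α t hu1 hu₀ hv hα
    have hs : Real.sqrt (1 - Real.cos α^2) = Real.sin α := by
      rw [← Real.sin_sq]; exact Real.sqrt_sq (Real.sin_nonneg_of_mem_Icc hα)
    have hq : Real.sqrt (u₀^2 - Real.cos α^2) ≠ 0 := by
      have := Real.cos_sq_le_one α
      exact (Real.sqrt_pos.2 (by nlinarith)).ne'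
    have hRr : R (α, t-φ) ^ (-(1/2):ℝ) = (Real.sqrt (R (α, t-φ)))⁻¹ := by
      rw [Real.rpow_neg (Rpos _).le, Real.sqrt_eq_rpow]
    have hsq : Real.sqrt (R (α, t-φ)) ≠ 0 := (Real.sqrt_pos.2 (Rpos _)).ne'
    simp only [hd, sphY, areaElemP, ferrersP, hs, legP_iter, W]
    rw [← hσ, ← hs0, hRr, ← hN, ← hPd]
    rw [show Rk (u^2+v^2) (u*v) σ u₀ s0 (α, t-φ) = R (α, t-φ) from rfl]
    generalize Complex.exp (Complex.I * m * t) = ex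
    generalize Real.sqrt (R (α, t-φ)) = r at *
    generalize Real.sqrt (u₀^2 - Real.cos α^2) = qq at *
    rw [Complex.real_smul]
    have key : Real.sin α * (a^2*qq*s0/(4*Real.pi*(a*r))) * (N * (Real.sin α^m * (1/(2^n*n.factorial) * P.eval (Real.cos α)))) / qq =
       k * (Real.sin α^(m+1) * P.eval (Real.cos α)) * r⁻¹ := by
      rw [hk]; field_simp
      try ring
    have key' := congrArg (fun x : ℝ => (x : ℂ) * ex) key
    simp only [Complex.ofReal_mul, Complex.ofReal_div] at key' ⊢
    linear_combination key'
  have step2 : ∀ α, ∫ t in Icc 0 (2*Real.pi), (((R (α, t-φ) ^ (-(1/2):ℝ) : ℝ) : ℂ) * Complex.exp (Complex.I * m * t)) =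
      Complex.exp (Complex.I * m * φ) * (((σ*s0)^m * (Real.sin α^m * ∫ θ in Icc 0 (2*Real.pi), Real.sin θ ^ (2*m) * R (α,θ) ^ (-(m:ℝ)-1/2)) : ℝ) : ℂ) := by
    intro α
    have form : ∀ θ, R (α,θ) = (u^2+v^2-2+u₀^2+Real.cos α^2-2*(u*v)*u₀*Real.cos α) - (2*σ*s0*Real.sin α) * Real.cos θ := by
      intro θ; simp only [hR, Rk]
    have p0 := Rpos (α, 0)
    have p1 := Rpos (α, Real.pi)
    rw [form] at p0 p1
    simp only [Real.cos_zero, Real.cos_pi] at p0 p1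
    have := inner m (u^2+v^2-2+u₀^2+Real.cos α^2-2*(u*v)*u₀*Real.cos α) (2*σ*s0*Real.sin α) φ (abs_lt.2 ⟨by linarith, by linarith⟩)
    simp only [← form] at this
    rw [integral_Icc_eq_integral_Ioc, ← intervalIntegral.integral_of_le (by linarith), this, 
      integral_Icc_eq_integral_Ioc, ← intervalIntegral.integral_of_le (by linarith)]
    congr 2
    generalize (∫ θ in (0:ℝ)..(2*Real.pi), Real.sin θ ^ (2*m) * R (α,θ) ^ (-(m:ℝ)-1/2)) = X
    rw [← mul_assoc ((σ*s0)^m), ← mul_pow (σ*s0)]; congr 2; ring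
  have swap : ∫ t in Icc 0 (2*Real.pi), ∫ α in Icc 0 Real.pi, (W α : ℂ) * (((R (α, t-φ) ^ (-(1/2):ℝ) : ℝ) : ℂ) * Complex.exp (Complex.I * m * t)) =
      ∫ α in Icc 0 Real.pi, ∫ t in Icc 0 (2*Real.pi), (W α : ℂ) * (((R (α, t-φ) ^ (-(1/2):ℝ) : ℝ) : ℂ) * Complex.exp (Complex.I * m * t)) := by
    apply integral_integral_swap
    rw [Measure.prod_restrict]
    refine ContinuousOn.integrableOn_compact (isCompact_Icc.prod isCompact_Icc) ?_
    apply Continuous.continuousOn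
    have c1 : Continuous (fun p : ℝ × ℝ => R (p.2, p.1-φ) ^ (-(1/2):ℝ)) := (cRp (-(1/2))).comp (by fun_prop : Continuous fun p : ℝ × ℝ => (p.2, p.1-φ))
    simp only [Function.uncurry_def]
    fun_prop
  have step3 : ∫ α in Icc 0 Real.pi, W α * (Real.sin α^m * ∫ θ in Icc 0 (2*Real.pi), Real.sin θ ^ (2*m) * R (α,θ) ^ (-(m:ℝ)-1/2)) =
      Gk m P (u^2+v^2) (u*v) σ u₀ s0 := by
    unfold Gk
    rw [Measure.volume_eq_prod, setIntegral_prod]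
    · congr 1; ext α
      rw [← mul_assoc, ← integral_const_mul]
      congr 1; ext θ
      simp only [W, wt, hR]
      rw [show 2*m+1 = (m+1)+m by ring, pow_add _ (m+1) m]; ring
    · refine ContinuousOn.integrableOn_compact (isCompact_Icc.prod isCompact_Icc) ?_
      exact ((wt_cont m P).mul (cRp _)).continuousOn
  have fin := Gk_final n m hm u v u₀ hv hu₀ hu
  unfold singleLayerP
  simp only [step1]
  rw [intervalIntegral.integral_const_mul, intervalIntegral.integral_of_le (by linarith), ← integral_Icc_eq_integral_Ioc, swap]
  simp only [integral_const_mul, step2]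
  have e : ∀ α, (W α : ℂ) * (Complex.exp (Complex.I * m * φ) * (((σ*s0)^m * (Real.sin α^m * ∫ θ in Icc 0 (2*Real.pi), Real.sin θ ^ (2*m) * R (α,θ) ^ (-(m:ℝ)-1/2)) : ℝ) : ℂ))
     = (Complex.exp (Complex.I * m * φ) * ((σ*s0)^m : ℝ)) * ((W α * (Real.sin α^m * ∫ θ in Icc 0 (2*Real.pi), Real.sin θ ^ (2*m) * R (α,θ) ^ (-(m:ℝ)-1/2)) : ℝ) : ℂ) := by
    intro α; push_cast; ring
  simp only [e]
  rw [integral_const_mul, integral_complex_ofReal, step3, fin]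
  simp only [sphY, assocP, assocQ, ferrersP, ← hN]
  rw [← hs0]
  generalize Complex.exp (Complex.I * m * φ) = ex
  have key : k * (σ*s0)^m * (4*Real.pi*(-1)^m*((n-m).factorial/(n+m).factorial) * (2^n*n.factorial) * iteratedDeriv m (legendreQ n) u
       * iteratedDeriv m (legendreP n) v * iteratedDeriv m (legendreP n) u₀) =
     (a * (((n - m).factorial : ℝ) / ((n + m).factorial : ℝ)) * (-1 : ℝ) ^ m * s0 * (s0 ^ m * iteratedDeriv m (legendreP n) u₀) *
       (Real.sqrt (u^2-1)^m * iteratedDeriv m (legendreQ n) u)) * (N * (Real.sqrt (1-v^2)^m * iteratedDeriv m (legendreP n) v)) := by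
    exact key_alg m _ _ _ _ _ _ _ _ _ _ _ _ hpi.ne' (by positivity)
  have key' := congrArg (fun x : ℝ => (x : ℂ) * ex) key
  simp only [Complex.ofReal_mul] at key' ⊢
  linear_combination key'
end SL

theorem singleLayer_exterior_eval (a : ℝ) (ha : 0 < a) (u₀ : ℝ) (hu₀ : 1 < u₀)
    (n m : ℕ) (hm : m ≤ n) (u v φ : ℝ) (hu : u₀ < u) (hv : v ∈ Set.Ioo (-1 : ℝ) 1) :
    singleLayerP a u₀ (fun s t => sphY n m s t / ((Real.sqrt (u₀ ^ 2 - s ^ 2) : ℝ) : ℂ))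
        (prolate a u v φ) =
      ((a * (((n - m).factorial : ℝ) / ((n + m).factorial : ℝ)) * (-1 : ℝ) ^ m *
          Real.sqrt (u₀ ^ 2 - 1) * assocP n m u₀ * assocQ n m u : ℝ) : ℂ) * sphY n m v φ := by
  exact SL.assembly a ha u₀ hu₀ n m hm u v φ hu hv
end
end

section
/- (Prolate spheroidal single layer potential, interior evaluation.) Fix a > 0, u₀ > 1, and integers n ≥ 0, 0 ≤ m ≤ n. Let the density be σ(s,t) = Y_n^m(s,t)/√(u₀^2−s^2). Then for every interior target point x = Φ(u,v,φ) with 1 < u < u₀, v ∈ (−1,1), φ ∈ ℝ, the single layer potential satisfies S[σ](x) = a·((n−m)!/(n+m)!)·(−1)^m·√(u₀^2−1)·Q_n^m(u₀)·P_n^m(u)·Y_n^m(v,φ). -/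
noncomputable section

open Real MeasureTheory

section LegendreAlgebra
open Polynomial

def rodR (n : ℕ) : ℝ[X] := (X ^ 2 - 1) ^ n

def lq (n m : ℕ) : ℝ[X] := C (1 / (2 ^ n * (n.factorial : ℝ))) * derivative^[n + m] (rodR n)

lemma iteratedDeriv_poly (p : ℝ[X]) (k : ℕ) :
    iteratedDeriv k (fun x => p.eval x) = fun x => (derivative^[k] p).eval x := by
  induction k with
  | zero => simp
  | succ k ih =>
    rw [iteratedDeriv_succ, ih]
    funext x
    rw [Polynomial.deriv, Function.iterate_succ_apply']

lemma legendreP_eq (n : ℕ) : legendreP n = fun x => (lq n 0).eval x := by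
  funext x
  have h : (fun y : ℝ => (y ^ 2 - 1) ^ n) = fun y => (rodR n).eval y := by
    funext y; simp [rodR]
  unfold legendreP
  rw [h, iteratedDeriv_poly]
  simp [lq]

lemma lq_derivative (n m : ℕ) : derivative (lq n m) = lq n (m + 1) := by
  unfold lq
  rw [derivative_C_mul, ← add_assoc, Function.iterate_succ_apply']

lemma lq_iter (n m : ℕ) : derivative^[m] (lq n 0) = lq n m := by
  induction m with
  | zero => simp
  | succ k ih => rw [Function.iterate_succ_apply', ih, lq_derivative]

lemma iteratedDeriv_legendreP (n m : ℕ) (x : ℝ) :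
    iteratedDeriv m (legendreP n) x = (lq n m).eval x := by
  rw [legendreP_eq, iteratedDeriv_poly, lq_iter]

lemma lq_hasDerivAt (n m : ℕ) (x : ℝ) :
    HasDerivAt (fun x => (lq n m).eval x) ((lq n (m + 1)).eval x) x := by
  rw [← lq_derivative]
  exact (lq n m).hasDerivAt x

lemma rodR_base (n : ℕ) : (X ^ 2 - 1) * derivative (rodR n) = C (2 * (n : ℝ)) * X * rodR n := by
  cases n with
  | zero => simp [rodR]
  | succ k =>
    simp only [rodR, derivative_pow, derivative_sub, derivative_one, derivative_X]
    simp
    ring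

lemma rodR_ode (n k : ℕ) :
    (X ^ 2 - 1) * derivative^[k + 2] (rodR n) +
      C (2 * ((k : ℝ) + 1 - n)) * X * derivative^[k + 1] (rodR n) +
      C (((k : ℝ) + 1) * (k - 2 * n)) * derivative^[k] (rodR n) = 0 := by
  induction k with
  | zero =>
    have h := congrArg derivative (rodR_base n)
    simp only [derivative_mul, derivative_sub, derivative_one, derivative_X, derivative_C,
      derivative_pow] at h
    simp only [Function.iterate_succ_apply', Function.iterate_zero_apply, map_mul, map_add, map_sub] at h ⊢
    simp at h ⊢
    linear_combination h
  | succ k ih =>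
    have h := congrArg derivative ih
    simp only [derivative_add, derivative_mul, derivative_sub, derivative_one, derivative_X,
      derivative_C, derivative_pow, ← Function.iterate_succ_apply' derivative] at h
    simp only [map_mul, map_add, map_sub, Nat.succ_eq_add_one, add_assoc] at h ⊢
    simp at h ⊢
    have h2 : (C (2 : ℝ) : ℝ[X]) = 2 := map_ofNat C 2
    norm_num at h ⊢
    rw [h2] at h ⊢
    linear_combination h

lemma lq_ode (n m : ℕ) (x : ℝ) :
    (1 - x ^ 2) * (lq n (m + 2)).eval x - 2 * ((m : ℝ) + 1) * x * (lq n (m + 1)).eval x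
      + ((n : ℝ) - m) * (n + m + 1) * (lq n m).eval x = 0 := by
  have h := congrArg (Polynomial.eval x) (rodR_ode n (n + m))
  simp only [eval_add, eval_mul, eval_sub, eval_pow, eval_X, eval_one, eval_C, eval_zero] at h
  unfold lq
  simp only [eval_mul, eval_C]
  rw [← add_assoc, ← add_assoc]
  push_cast at h
  linear_combination (-(1 / (2 ^ n * (n.factorial : ℝ)))) * h

lemma lq_one_zero (n : ℕ) : (lq n 0).eval 1 = 1 := by
  have h := aeval_iterate_derivative_self (rodR n) n (1 : ℝ) (p' := (X + 1) ^ n) (by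
    simp only [rodR, Algebra.algebraMap_self, Polynomial.map_id, map_one]
    rw [← mul_pow]; congr 1; ring)
  simp at h
  simp only [lq, eval_mul, eval_C, add_zero, h]
  norm_num
  field_simp

lemma lq_one_succ (n m : ℕ) : (lq n (m + 1)).eval 1 =
    ((n : ℝ) - m) * (n + m + 1) / (2 * (m + 1)) * (lq n m).eval 1 := by
  have h := lq_ode n m 1
  have : (m : ℝ) + 1 ≠ 0 := by positivity
  field_simp
  linarith

lemma lq_one (n m : ℕ) (hm : m ≤ n) : (lq n m).eval 1 =
    (n + m).factorial / ((n - m).factorial * 2 ^ m * m.factorial) := by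
  induction m with
  | zero => simp [lq_one_zero, Nat.factorial_ne_zero]
  | succ k ih =>
    rw [lq_one_succ, ih (by omega)]
    obtain ⟨d, rfl⟩ : ∃ d, n = k + 1 + d := ⟨n - (k + 1), by omega⟩
    have e1 : k + 1 + d - k = d + 1 := by omega
    have e2 : k + 1 + d - (k + 1) = d := by omega
    rw [e1, e2, ← add_assoc (k + 1 + d) k 1, Nat.factorial_succ (k + 1 + d + k),
      Nat.factorial_succ d, Nat.factorial_succ k]
    have := Nat.factorial_ne_zero d
    have := Nat.factorial_ne_zero k
    push_cast
    field_simp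
    ring

lemma lq_gt (n : ℕ) : lq n (n + 1) = 0 := by
  unfold lq
  rw [Polynomial.iterate_derivative_eq_zero, mul_zero]
  have : (rodR n).natDegree ≤ n * 2 := by
    unfold rodR
    refine natDegree_pow_le.trans (Nat.mul_le_mul_left _ ?_)
    compute_degree
  omega

lemma lq_pos (n m : ℕ) (hm : m ≤ n) (x : ℝ) (hx : 1 ≤ x) : 0 < (lq n m).eval x := by
  obtain ⟨d, hd⟩ : ∃ d, n = m + d := ⟨n - m, by omega⟩
  induction d generalizing m x with
  | zero =>
    have hc : derivative (lq n m) = 0 := by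
      rw [lq_derivative]
      have : m = n := by omega
      rw [this, lq_gt]
    obtain ⟨c, hc⟩ := natDegree_eq_zero.1 (Polynomial.derivative_eq_zero.1 hc)
    have h1 := lq_one n m hm
    rw [← hc] at h1 ⊢
    simp only [eval_C] at h1 ⊢
    rw [h1]; positivity
  | succ d ih =>
    have hmono : MonotoneOn (fun x => (lq n m).eval x) (Set.Ici 1) := by
      apply monotoneOn_of_deriv_nonneg (convex_Ici 1) (lq n m).continuous.continuousOn
        (lq n m).differentiable.differentiableOn
      intro y hy
      rw [(lq_hasDerivAt n m y).deriv]
      simp at hy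
      exact (ih (m + 1) (by omega) y hy.le (by omega)).le
    have := hmono (Set.mem_Ici.2 le_rfl) (Set.mem_Ici.2 hx) hx
    simp only at this
    refine lt_of_lt_of_le ?_ this
    rw [lq_one n m hm]; positivity

lemma lq_parity (n m : ℕ) (x : ℝ) :
    (lq n m).eval (-x) = (-1) ^ (n + m) * (lq n m).eval x := by
  have h := iteratedDeriv_comp_neg (n + m) (fun x => (rodR n).eval x) x
  have e : (fun x => (fun x => (rodR n).eval x) (-x)) = fun x => (rodR n).eval x := by
    funext y; simp [rodR]
  rw [e, iteratedDeriv_poly] at h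
  simp only [smul_eq_mul] at h
  simp only [lq, eval_mul, eval_C, h]
  have : ((-1 : ℝ) ^ (n + m)) * (-1) ^ (n + m) = 1 := by
    rw [← mul_pow]; simp
  linear_combination (-(1 / (2 ^ n * (n.factorial : ℝ))) * ((derivative^[n + m] (rodR n)).eval (-x))) * this

end LegendreAlgebra

lemma hasDerivAt_param {X : Type*} [MetricSpace X] [MeasurableSpace X] [BorelSpace X]
    {μ : Measure X} [IsFiniteMeasureOnCompacts μ] {S : Set X} (hS : IsCompact S)
    {U : Set ℝ} (hU : IsOpen U) {F F' : ℝ → X → ℝ}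
    (hF : ContinuousOn (Function.uncurry F) (U ×ˢ S))
    (hF' : ContinuousOn (Function.uncurry F') (U ×ˢ S))
    (hd : ∀ x ∈ U, ∀ p ∈ S, HasDerivAt (fun x => F x p) (F' x p) x) {x : ℝ} (hx : x ∈ U) :
    HasDerivAt (fun x => ∫ p in S, F x p ∂μ) (∫ p in S, F' x p ∂μ) x := by
  obtain ⟨ε, hε, hball⟩ := Metric.isOpen_iff.1 hU x hx
  have hcb : Metric.closedBall x (ε / 2) ⊆ U :=
    (Metric.closedBall_subset_ball (by linarith)).trans hball
  have hK : IsCompact (Metric.closedBall x (ε / 2) ×ˢ S) :=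
    (isCompact_closedBall x (ε / 2)).prod hS
  obtain ⟨B, hB⟩ := hK.exists_bound_of_continuousOn (hF'.mono (Set.prod_mono hcb le_rfl))
  have hFi : ∀ y ∈ U, IntegrableOn (F y) S μ := fun y hy =>
    ContinuousOn.integrableOn_compact hS
      (hF.comp (f := fun p => (y, p)) (by fun_prop) (fun p hp => ⟨hy, hp⟩))
  have hFi' : ∀ y ∈ U, IntegrableOn (F' y) S μ := fun y hy =>
    ContinuousOn.integrableOn_compact hS
      (hF'.comp (f := fun p => (y, p)) (by fun_prop) (fun p hp => ⟨hy, hp⟩))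
  refine (hasDerivAt_integral_of_dominated_loc_of_deriv_le (μ := μ.restrict S)
    (s := Metric.closedBall x (ε / 2)) (bound := fun _ => B)
    (Metric.closedBall_mem_nhds x (by linarith)) ?_ (hFi x hx) (hFi' x hx).aestronglyMeasurable
    ?_ ?_ ?_).2
  · filter_upwards [hU.mem_nhds hx] with y hy
    exact (hFi y hy).aestronglyMeasurable
  · filter_upwards [ae_restrict_mem hS.measurableSet] with p hp y hy
    exact hB (y, p) ⟨hy, hp⟩
  · have : IsFiniteMeasure (μ.restrict S) := ⟨by simpa using hS.measure_lt_top⟩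
    exact integrable_const B
  · filter_upwards [ae_restrict_mem hS.measurableSet] with p hp y hy
    exact hd y (hcb hy) p hp

lemma interval_eq_Icc (f : ℝ → ℝ) {a b : ℝ} (h : a ≤ b) :
    ∫ t in a..b, f t = ∫ t in Set.Icc a b, f t := by
  rw [intervalIntegral.integral_of_le h, integral_Icc_eq_integral_Ioc]

lemma hasDerivAt_param_interval {a b : ℝ} (hab : a ≤ b)
    {U : Set ℝ} (hU : IsOpen U) {F F' : ℝ → ℝ → ℝ}
    (hF : ContinuousOn (Function.uncurry F) (U ×ˢ Set.Icc a b))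
    (hF' : ContinuousOn (Function.uncurry F') (U ×ˢ Set.Icc a b))
    (hd : ∀ x ∈ U, ∀ p ∈ Set.Icc a b, HasDerivAt (fun x => F x p) (F' x p) x)
    {x : ℝ} (hx : x ∈ U) :
    HasDerivAt (fun x => ∫ p in a..b, F x p) (∫ p in a..b, F' x p) x := by
  simp only [interval_eq_Icc _ hab]
  exact hasDerivAt_param isCompact_Icc hU hF hF' hd hx

lemma iteratedDeriv_legendreQ (n m : ℕ) : ∀ x : ℝ, 1 < x →
    iteratedDeriv m (legendreQ n) x = 1 / 2 * ((-1) ^ m * m.factorial) *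
      ∫ t in (-1 : ℝ)..1, (lq n 0).eval t * ((x - t)⁻¹) ^ (m + 1) := by
  induction m with
  | zero =>
    intro x hx
    simp [legendreQ, legendreP_eq, div_eq_mul_inv]
  | succ k ih =>
    intro x hx
    rw [iteratedDeriv_succ]
    have hev : iteratedDeriv k (legendreQ n) =ᶠ[nhds x] fun x => 1 / 2 * ((-1) ^ k * k.factorial) *
      ∫ t in (-1 : ℝ)..1, (lq n 0).eval t * ((x - t)⁻¹) ^ (k + 1) := by
      filter_upwards [isOpen_Ioi.mem_nhds hx] with y hy
      exact ih y hy
    rw [hev.deriv_eq]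
    have hne : ∀ z ∈ Set.Ioi (1 : ℝ) ×ˢ Set.Icc (-1 : ℝ) 1, z.1 - z.2 ≠ 0 := by
      rintro ⟨y, t⟩ ⟨h1, h2⟩
      simp at h1 h2
      simp only; linarith
    have h := hasDerivAt_param_interval (a := -1) (b := 1) (by norm_num) isOpen_Ioi
      (U := Set.Ioi (1 : ℝ))
      (F := fun x t => (lq n 0).eval t * ((x - t)⁻¹) ^ (k + 1))
      (F' := fun x t => -((k : ℝ) + 1) * ((lq n 0).eval t * ((x - t)⁻¹) ^ (k + 2))) ?_ ?_ ?_
      (x := x) hx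
    · rw [(h.const_mul _).deriv, intervalIntegral.integral_const_mul, Nat.factorial_succ]
      push_cast
      ring
    · refine ContinuousOn.mul (((lq n 0).continuous.comp continuous_snd).continuousOn) ?_
      exact (ContinuousOn.inv₀ (by fun_prop) hne).pow _
    · refine ContinuousOn.mul continuousOn_const (ContinuousOn.mul
        (((lq n 0).continuous.comp continuous_snd).continuousOn) ?_)
      exact (ContinuousOn.inv₀ (by fun_prop) hne).pow _
    · intro y hy t ht
      have hyt := hne (y, t) ⟨hy, ht⟩
      simp only at hyt
      have := ((((hasDerivAt_id y).sub_const t).inv hyt).pow (k + 1)).const_mul ((lq n 0).eval t)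
      convert! this using 1
      simp
      field_simp
      ring

def lI (n j l : ℕ) (u₀ : ℝ) : ℝ :=
  ∫ s in (-1 : ℝ)..1, (1 - s ^ 2) ^ j * (lq n j).eval s * ((u₀ - s)⁻¹) ^ l

lemma lg_hasDerivAt (n j : ℕ) (s : ℝ) :
    HasDerivAt (fun s : ℝ => (1 - s ^ 2) ^ (j + 1) * (lq n (j + 1)).eval s)
      (-(((n : ℝ) - j) * (n + j + 1)) * ((1 - s ^ 2) ^ j * (lq n j).eval s)) s := by
  have h1 : HasDerivAt (fun s : ℝ => (1 - s ^ 2) ^ (j + 1))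
      ((j + 1) * (1 - s ^ 2) ^ j * (-(2 * s))) s := by
    have := (((hasDerivAt_id s).pow 2).const_sub 1).pow (j + 1)
    convert! this using 1
    simp
  convert! h1.mul (lq_hasDerivAt n (j + 1) s) using 1
  have := lq_ode n j s
  linear_combination (-(1 - s ^ 2) ^ j) * this

lemma lI_succ (n j l : ℕ) (hl : l ≠ 0) (u₀ : ℝ) (hu : 1 < u₀) :
    lI n (j + 1) (l + 1) u₀ = ((n : ℝ) - j) * (n + j + 1) / l * lI n j l u₀ := by
  have hne : ∀ s ∈ Set.uIcc (-1 : ℝ) 1, u₀ - s ≠ 0 := by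
    intro s hs
    rw [Set.uIcc_of_le (by norm_num)] at hs
    have := hs.2
    linarith
  have hl' : (l : ℝ) ≠ 0 := by exact_mod_cast hl
  have hv : ∀ s ∈ Set.uIcc (-1 : ℝ) 1, HasDerivAt (fun s => ((u₀ - s)⁻¹) ^ l / l)
      (((u₀ - s)⁻¹) ^ (l + 1)) s := by
    intro s hs
    have hs' := hne s hs
    have := ((((hasDerivAt_id s).const_sub u₀).inv hs').pow l).div_const (l : ℝ)
    convert! this using 1
    obtain ⟨l, rfl⟩ := Nat.exists_eq_succ_of_ne_zero hl
    simp
    field_simp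
    ring
  have hc : ∀ k, ContinuousOn (fun s => ((u₀ - s)⁻¹) ^ k) (Set.uIcc (-1 : ℝ) 1) := fun k =>
    (ContinuousOn.inv₀ (by fun_prop) hne).pow _
  have := intervalIntegral.integral_mul_deriv_eq_deriv_mul (a := -1) (b := 1)
    (fun s _ => lg_hasDerivAt n j s) hv
    (Continuous.intervalIntegrable (by have := (lq n j).continuous; fun_prop) _ _)
    (hc _).intervalIntegrable
  unfold lI
  rw [this]
  norm_num
  rw [← intervalIntegral.integral_const_mul]
  congr 1; funext s
  field_simp

lemma lI_eq (n m k : ℕ) (u₀ : ℝ) (hu : 1 < u₀) (hk : k ≤ n) :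
    lI n k (m + 1 + k) u₀ = (n + k).factorial / (n - k).factorial * (m.factorial / (m + k).factorial)
      * lI n 0 (m + 1) u₀ := by
  induction k with
  | zero => simp [Nat.factorial_ne_zero]
  | succ k ih =>
    rw [← add_assoc, lI_succ _ _ _ (by omega) _ hu, ih (by omega)]
    obtain ⟨d, rfl⟩ : ∃ d, n = k + 1 + d := ⟨n - (k + 1), by omega⟩
    have e1 : k + 1 + d - k = d + 1 := by omega
    have e2 : k + 1 + d - (k + 1) = d := by omega
    rw [e1, e2, ← add_assoc (k + 1 + d) k 1, ← add_assoc m k 1, Nat.factorial_succ (k + 1 + d + k),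
      Nat.factorial_succ d, Nat.factorial_succ (m + k)]
    have := Nat.factorial_ne_zero d
    have := Nat.factorial_ne_zero (m + k)
    push_cast
    field_simp
    ring

lemma lI_Q (n m : ℕ) (hm : m ≤ n) (u₀ : ℝ) (hu : 1 < u₀) :
    lI n m (2 * m + 1) u₀ = (n + m).factorial / (n - m).factorial / (2 * m).factorial *
      (2 * (-1) ^ m * iteratedDeriv m (legendreQ n) u₀) := by
  have h := lI_eq n m m u₀ hu hm
  have e : m + 1 + m = 2 * m + 1 := by ring
  have e' : m + m = 2 * m := by ring
  rw [e, e'] at h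
  rw [h, iteratedDeriv_legendreQ n m u₀ hu]
  have e3 : lI n 0 (m + 1) u₀ =
      ∫ t in (-1 : ℝ)..1, (lq n 0).eval t * ((u₀ - t)⁻¹) ^ (m + 1) := by
    simp [lI]
  rw [e3]
  have : ((-1 : ℝ) ^ m) * (-1) ^ m = 1 := by
    rw [← mul_pow]; simp
  linear_combination (-((n + m).factorial / (n - m).factorial / (2 * m).factorial * m.factorial *
    ∫ t in (-1 : ℝ)..1, (lq n 0).eval t * ((u₀ - t)⁻¹) ^ (m + 1))) * this

lemma energy_zero (m : ℕ) (μ : ℝ) (hμ : 0 ≤ μ) (h h1 h2 : ℝ → ℝ)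
    (hd : ∀ x ∈ Set.Icc (0 : ℝ) 1, HasDerivAt h (h1 x) x)
    (hd1 : ∀ x ∈ Set.Icc (0 : ℝ) 1, HasDerivAt h1 (h2 x) x)
    (hode : ∀ x ∈ Set.Icc (0 : ℝ) 1, (1 - x ^ 2) * h2 x - 2 * ((m : ℝ) + 1) * x * h1 x + μ * h x = 0)
    (hz : h 1 = 0) : ∀ x ∈ Set.Icc (0 : ℝ) 1, h x = 0 := by
  have hE : ∀ x ∈ Set.Icc (0 : ℝ) 1, HasDerivAt (fun x => (1 - x ^ 2) * h1 x ^ 2 + μ * h x ^ 2)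
      ((4 * m + 2) * x * h1 x ^ 2) x := by
    intro x hx
    have a1 : HasDerivAt (fun x : ℝ => 1 - x ^ 2) (-(2 * x)) x := by
      simpa using ((hasDerivAt_id x).pow 2).const_sub 1
    convert! (a1.mul ((hd1 x hx).pow 2)).add (((hd x hx).pow 2).const_mul μ) using 1
    simp
    linear_combination (-2 * h1 x) * hode x hx
  have hmono : MonotoneOn (fun x => (1 - x ^ 2) * h1 x ^ 2 + μ * h x ^ 2) (Set.Icc 0 1) := by
    apply monotoneOn_of_deriv_nonneg (convex_Icc 0 1)
    · exact fun x hx => (hE x hx).continuousAt.continuousWithinAt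
    · intro x hx
      exact (hE x (interior_subset hx)).differentiableAt.differentiableWithinAt
    · intro x hx
      have hx' := interior_subset hx
      rw [(hE x hx').deriv]
      have := hx'.1
      positivity
  have h1z : ∀ x ∈ Set.Ico (0 : ℝ) 1, h1 x = 0 := by
    intro x hx
    have hle := hmono (Set.Ico_subset_Icc_self hx) (Set.right_mem_Icc.2 zero_le_one) hx.2.le
    simp only [hz] at hle
    have hp : 0 < 1 - x ^ 2 := by nlinarith [hx.1, hx.2]
    have hq : 0 ≤ μ * h x ^ 2 := by positivity
    have : (1 - x ^ 2) * h1 x ^ 2 ≤ 0 := by linarith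
    have : h1 x ^ 2 ≤ 0 := by
      by_contra hc
      push Not at hc
      nlinarith [mul_pos hp hc]
    exact pow_eq_zero_iff (two_ne_zero) |>.1 (le_antisymm this (sq_nonneg _))
  have hconst := constant_of_derivWithin_zero (f := h) (a := 0) (b := 1)
    (fun x hx => (hd x hx).differentiableAt.differentiableWithinAt) (by
      intro x hx
      rw [(hd x (Set.Ico_subset_Icc_self hx)).hasDerivWithinAt.derivWithin
        (uniqueDiffOn_Icc zero_lt_one x (Set.Ico_subset_Icc_self hx)), h1z x hx])
  intro x hx
  rw [hconst x hx, ← hconst 1 (Set.right_mem_Icc.2 zero_le_one), hz]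

lemma legendre_unique (n m : ℕ) (hm : m ≤ n) (T T1 T2 : ℝ → ℝ)
    (hd : ∀ x ∈ Set.Icc (-1 : ℝ) 1, HasDerivAt T (T1 x) x)
    (hd1 : ∀ x ∈ Set.Icc (-1 : ℝ) 1, HasDerivAt T1 (T2 x) x)
    (hode : ∀ x ∈ Set.Icc (-1 : ℝ) 1, (1 - x ^ 2) * T2 x - 2 * ((m : ℝ) + 1) * x * T1 x
      + (((n : ℝ) - m) * (n + m + 1)) * T x = 0)
    (hpar : T (-1) = (-1) ^ (n + m) * T 1) :
    ∀ x ∈ Set.Icc (-1 : ℝ) 1, T x = T 1 / (lq n m).eval 1 * (lq n m).eval x := by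
  set C := T 1 / (lq n m).eval 1 with hC
  have hq1 : (lq n m).eval 1 ≠ 0 := (lq_pos n m hm 1 le_rfl).ne'
  have hμ : (0 : ℝ) ≤ ((n : ℝ) - m) * (n + m + 1) := by
    have : (m : ℝ) ≤ n := by exact_mod_cast hm
    have : (0 : ℝ) ≤ (n : ℝ) - m := by linarith
    positivity
  have A := energy_zero m _ hμ (fun x => T x - C * (lq n m).eval x)
    (fun x => T1 x - C * (lq n (m + 1)).eval x) (fun x => T2 x - C * (lq n (m + 2)).eval x)
    (fun x hx => (hd x ⟨by linarith [hx.1], hx.2⟩).sub ((lq_hasDerivAt n m x).const_mul C))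
    (fun x hx => (hd1 x ⟨by linarith [hx.1], hx.2⟩).sub ((lq_hasDerivAt n (m + 1) x).const_mul C))
    (fun x hx => by
      linear_combination hode x ⟨by linarith [hx.1], hx.2⟩ - C * lq_ode n m x)
    (by rw [hC]; field_simp; ring)
  have neg : ∀ x ∈ Set.Icc (0 : ℝ) 1, -x ∈ Set.Icc (-1 : ℝ) 1 := fun x hx =>
    ⟨by linarith [hx.2], by linarith [hx.1]⟩
  have hcomp : ∀ (f : ℝ → ℝ) (f' x : ℝ), HasDerivAt f f' (-x) →
      HasDerivAt (fun x => f (-x)) (-f') x := by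
    intro f f' x hf
    have := hf.comp x (hasDerivAt_neg x)
    simpa using! this
  have B := energy_zero m _ hμ (fun x => T (-x) - C * (lq n m).eval (-x))
    (fun x => -(T1 (-x) - C * (lq n (m + 1)).eval (-x)))
    (fun x => - -(T2 (-x) - C * (lq n (m + 2)).eval (-x)))
    (fun x hx => hcomp (fun x => T x - C * (lq n m).eval x) _ x
      ((hd (-x) (neg x hx)).sub ((lq_hasDerivAt n m (-x)).const_mul C)))
    (fun x hx => (hcomp (fun x => T1 x - C * (lq n (m + 1)).eval x) _ x
      ((hd1 (-x) (neg x hx)).sub ((lq_hasDerivAt n (m + 1) (-x)).const_mul C))).neg)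
    (fun x hx => by
      linear_combination hode (-x) (neg x hx) - C * lq_ode n m (-x))
    (by rw [lq_parity, hpar, hC]; field_simp; ring)
  intro x hx
  rcases le_total 0 x with h | h
  · have := A x ⟨h, hx.2⟩
    linarith
  · have := B (-x) ⟨by linarith, by linarith [hx.1]⟩
    simp only [neg_neg] at this
    linarith

def kk (u₀ s z : ℝ) : ℝ := u₀ ^ 2 + s ^ 2 + z ^ 2 - 2 * u₀ * s * z - 1

lemma kk_symm (u₀ s z : ℝ) : kk u₀ s z = kk u₀ z s := by unfold kk; ring

lemma kk_pos (u₀ s z : ℝ) (hu : 1 < u₀) (hs : s ∈ Set.Icc (-1 : ℝ) 1)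
    (hz : z ∈ Set.Ioo (-u₀) u₀) : 0 < kk u₀ s z := by
  obtain ⟨h1, h2⟩ := hs
  obtain ⟨h3, h4⟩ := hz
  have e : kk u₀ s z = (z - u₀ * s) ^ 2 + (u₀ ^ 2 - 1) * (1 - s ^ 2) := by unfold kk; ring
  have hp : 0 < u₀ ^ 2 - 1 := by nlinarith
  have hs2 : 0 ≤ 1 - s ^ 2 := by nlinarith
  rcases eq_or_lt_of_le hs2 with h | h
  · have hs3 : (s - 1) * (s + 1) = 0 := by linarith
    rw [e, ← h]
    rcases mul_eq_zero.1 hs3 with h | h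
    · have : s = 1 := by linarith
      subst this
      have : 0 < (u₀ - z) ^ 2 := by apply pow_pos; linarith
      nlinarith
    · have : s = -1 := by linarith
      subst this
      have : 0 < (u₀ + z) ^ 2 := by apply pow_pos; linarith
      nlinarith
  · rw [e]; positivity

lemma kk_hasDerivAt (u₀ s z : ℝ) : HasDerivAt (fun z => kk u₀ s z) (2 * z - 2 * u₀ * s) z := by
  unfold kk
  have := ((((hasDerivAt_id z).pow 2).const_add (u₀ ^ 2 + s ^ 2)).sub
    ((hasDerivAt_id z).const_mul (2 * u₀ * s))).sub_const 1
  convert! this using 1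
  simp

def kD0 (e u₀ s z : ℝ) : ℝ := kk u₀ s z ^ e
def kD1 (e u₀ s z : ℝ) : ℝ := (2 * z - 2 * u₀ * s) * e * kk u₀ s z ^ (e - 1)
def kD2 (e u₀ s z : ℝ) : ℝ :=
  2 * e * kk u₀ s z ^ (e - 1) + (2 * z - 2 * u₀ * s) ^ 2 * e * (e - 1) * kk u₀ s z ^ (e - 2)

lemma kD0_hasDerivAt (e u₀ s z : ℝ) (h : 0 < kk u₀ s z) :
    HasDerivAt (fun z => kD0 e u₀ s z) (kD1 e u₀ s z) z :=
  (kk_hasDerivAt u₀ s z).rpow_const (Or.inl h.ne')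

lemma kD1_hasDerivAt (e u₀ s z : ℝ) (h : 0 < kk u₀ s z) :
    HasDerivAt (fun z => kD1 e u₀ s z) (kD2 e u₀ s z) z := by
  have a := (kk_hasDerivAt u₀ s z).rpow_const (p := e - 1) (Or.inl h.ne')
  have b : HasDerivAt (fun z : ℝ => (2 * z - 2 * u₀ * s) * e) (2 * e) z := by
    have := (((hasDerivAt_id z).const_mul 2).sub_const (2 * u₀ * s)).mul_const e
    simpa using! this
  convert! b.mul a using 1
  unfold kD2
  have : e - 1 - 1 = e - 2 := by ring
  rw [this]; ring

lemma kD_symm (m : ℕ) (u₀ s z : ℝ) (h : 0 < kk u₀ s z) :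
    (1 - z ^ 2) * kD2 (-((m : ℝ) + 1 / 2)) u₀ s z
      - 2 * ((m : ℝ) + 1) * z * kD1 (-((m : ℝ) + 1 / 2)) u₀ s z =
    (1 - s ^ 2) * kD2 (-((m : ℝ) + 1 / 2)) u₀ z s
      - 2 * ((m : ℝ) + 1) * s * kD1 (-((m : ℝ) + 1 / 2)) u₀ z s := by
  unfold kD2 kD1
  rw [kk_symm u₀ z s]
  set e := -((m : ℝ) + 1 / 2) with he
  have h1 : kk u₀ s z ^ (e - 1) = kk u₀ s z ^ (e - 2) * kk u₀ s z := by
    rw [← Real.rpow_add_one h.ne']; congr 1; ring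
  rw [h1]
  generalize kk u₀ s z ^ (e - 2) = Z
  have hm : (m : ℝ) = -e - 1 / 2 := by rw [he]; ring
  rw [hm]
  unfold kk
  ring

def TT (n m : ℕ) (u₀ z : ℝ) : ℝ :=
  ∫ s in (-1 : ℝ)..1, (1 - s ^ 2) ^ m * (lq n m).eval s * kD0 (-((m : ℝ) + 1 / 2)) u₀ s z

lemma kk_rpow_cont (u₀ e : ℝ) (hu : 1 < u₀) :
    ContinuousOn (fun p : ℝ × ℝ => kk u₀ p.2 p.1 ^ e) (Set.Ioo (-u₀) u₀ ×ˢ Set.Icc (-1 : ℝ) 1) := by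
  refine ContinuousOn.rpow_const (by unfold kk; fun_prop) ?_
  rintro ⟨z, s⟩ ⟨hz, hs⟩
  exact Or.inl (kk_pos u₀ s z hu hs hz).ne'

lemma TT_eq (n m : ℕ) (hm : m ≤ n) (u₀ : ℝ) (hu : 1 < u₀) : ∀ z ∈ Set.Icc (-1 : ℝ) 1,
    TT n m u₀ z = TT n m u₀ 1 / (lq n m).eval 1 * (lq n m).eval z := by
  set e := -((m : ℝ) + 1 / 2) with he
  have hU : Set.Icc (-1 : ℝ) 1 ⊆ Set.Ioo (-u₀) u₀ := fun x hx =>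
    ⟨by linarith [hx.1], by linarith [hx.2]⟩
  have hqc := (lq n m).continuous
  have c0 := kk_rpow_cont u₀ e hu
  have c1 := kk_rpow_cont u₀ (e - 1) hu
  have c2 := kk_rpow_cont u₀ (e - 2) hu
  have hqc2 : ContinuousOn (fun p : ℝ × ℝ => (1 - p.2 ^ 2) ^ m * (lq n m).eval p.2)
    (Set.Ioo (-u₀) u₀ ×ˢ Set.Icc (-1 : ℝ) 1) := by
      apply Continuous.continuousOn; fun_prop
  have C0 : ContinuousOn (Function.uncurry fun z s => (1 - s ^ 2) ^ m * (lq n m).eval s * kD0 e u₀ s z)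
      (Set.Ioo (-u₀) u₀ ×ˢ Set.Icc (-1 : ℝ) 1) := hqc2.mul c0
  have C1 : ContinuousOn (Function.uncurry fun z s => (1 - s ^ 2) ^ m * (lq n m).eval s * kD1 e u₀ s z)
      (Set.Ioo (-u₀) u₀ ×ˢ Set.Icc (-1 : ℝ) 1) :=
    hqc2.mul (ContinuousOn.mul (Continuous.continuousOn (by fun_prop)) c1)
  have C2 : ContinuousOn (Function.uncurry fun z s => (1 - s ^ 2) ^ m * (lq n m).eval s * kD2 e u₀ s z)
      (Set.Ioo (-u₀) u₀ ×ˢ Set.Icc (-1 : ℝ) 1) :=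
    hqc2.mul (ContinuousOn.add (ContinuousOn.mul (Continuous.continuousOn (by fun_prop)) c1)
      (ContinuousOn.mul (Continuous.continuousOn (by fun_prop)) c2))
  have sec : ∀ {f : ℝ → ℝ → ℝ}, ContinuousOn (Function.uncurry f)
      (Set.Ioo (-u₀) u₀ ×ˢ Set.Icc (-1 : ℝ) 1) → ∀ z ∈ Set.Icc (-1 : ℝ) 1,
      IntervalIntegrable (f z) volume (-1) 1 := by
    intro f hf z hz
    apply ContinuousOn.intervalIntegrable
    rw [Set.uIcc_of_le (by norm_num)]
    exact hf.comp (f := fun s => (z, s)) (by fun_prop) (fun s hs => ⟨hU hz, hs⟩)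
  refine legendre_unique n m hm (TT n m u₀)
    (fun z => ∫ s in (-1 : ℝ)..1, (1 - s ^ 2) ^ m * (lq n m).eval s * kD1 e u₀ s z)
    (fun z => ∫ s in (-1 : ℝ)..1, (1 - s ^ 2) ^ m * (lq n m).eval s * kD2 e u₀ s z) ?_ ?_ ?_ ?_
  · intro z hz
    exact hasDerivAt_param_interval (by norm_num) isOpen_Ioo C0 C1
      (fun x hx s hs => (kD0_hasDerivAt e u₀ s x (kk_pos u₀ s x hu hs hx)).const_mul _) (hU hz)
  · intro z hz
    exact hasDerivAt_param_interval (by norm_num) isOpen_Ioo C1 C2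
      (fun x hx s hs => (kD1_hasDerivAt e u₀ s x (kk_pos u₀ s x hu hs hx)).const_mul _) (hU hz)
  · intro z hz
    have I0 := sec C0 z hz
    have I1 := sec C1 z hz
    have I2 := sec C2 z hz
    unfold TT
    rw [← intervalIntegral.integral_const_mul, ← intervalIntegral.integral_const_mul,
      ← intervalIntegral.integral_const_mul, ← intervalIntegral.integral_sub (I2.const_mul _)
      (I1.const_mul _), ← intervalIntegral.integral_add ((I2.const_mul _).sub (I1.const_mul _))
      (I0.const_mul _)]
    have key : ∀ s ∈ Set.uIcc (-1 : ℝ) 1, HasDerivAt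
        (fun s => (1 - s ^ 2) ^ (m + 1) * ((lq n m).eval s * kD1 e u₀ z s) -
          (1 - s ^ 2) ^ (m + 1) * (lq n (m + 1)).eval s * kD0 e u₀ z s)
        ((1 - z ^ 2) * ((1 - s ^ 2) ^ m * (lq n m).eval s * kD2 e u₀ s z)
          - 2 * ((m : ℝ) + 1) * z * ((1 - s ^ 2) ^ m * (lq n m).eval s * kD1 e u₀ s z)
          + ((n : ℝ) - m) * (n + m + 1) * ((1 - s ^ 2) ^ m * (lq n m).eval s * kD0 e u₀ s z)) s := by
      intro s hs
      rw [Set.uIcc_of_le (by norm_num)] at hs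
      have hpos := kk_pos u₀ s z hu hs (hU hz)
      have hpos' := hpos
      rw [kk_symm] at hpos'
      have h1 : HasDerivAt (fun s : ℝ => (1 - s ^ 2) ^ (m + 1))
          ((m + 1) * (1 - s ^ 2) ^ m * (-(2 * s))) s := by
        have := (((hasDerivAt_id s).pow 2).const_sub 1).pow (m + 1)
        convert! this using 1
        simp
      have := (h1.mul ((lq_hasDerivAt n m s).mul (kD1_hasDerivAt e u₀ z s hpos'))).sub
        ((lg_hasDerivAt n m s).mul (kD0_hasDerivAt e u₀ z s hpos'))
      convert! this using 1
      have hsym := kD_symm m u₀ s z hpos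
      rw [← he] at hsym
      have h0 : kD0 e u₀ z s = kD0 e u₀ s z := by unfold kD0; rw [kk_symm]
      rw [h0]
      simp only [Pi.mul_apply]
      linear_combination ((1 - s ^ 2) ^ m * (lq n m).eval s) * hsym
    rw [intervalIntegral.integral_eq_sub_of_hasDerivAt key
      (((I2.const_mul _).sub (I1.const_mul _)).add (I0.const_mul _))]
    norm_num
  · unfold TT
    rw [← neg_neg (1 : ℝ), ← intervalIntegral.integral_comp_neg, neg_neg,
      ← intervalIntegral.integral_const_mul]
    congr 1; funext s
    rw [lq_parity]
    have : kD0 e u₀ (-s) (-1) = kD0 e u₀ s 1 := by unfold kD0 kk; congr 1; ring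
    rw [this]
    ring

lemma TT_one (n m : ℕ) (u₀ : ℝ) (hu : 1 < u₀) : TT n m u₀ 1 = lI n m (2 * m + 1) u₀ := by
  unfold TT lI
  apply intervalIntegral.integral_congr
  intro s hs
  rw [Set.uIcc_of_le (by norm_num)] at hs
  have h : 0 < u₀ - s := by linarith [hs.2]
  simp only
  congr 1
  have : kk u₀ s 1 = (u₀ - s) ^ (2 : ℝ) := by
    rw [Real.rpow_two]; unfold kk; ring
  unfold kD0
  rw [this, ← Real.rpow_mul h.le, inv_pow, ← Real.rpow_natCast, ← Real.rpow_neg h.le]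
  congr 1
  push_cast
  ring

lemma spheroid_identity (e u v S w ch sh sq cq st ct : ℝ) (h1 : ch ^ 2 = 1 + sh ^ 2)
    (h2 : sq ^ 2 = 1 - cq ^ 2) (h3 : st ^ 2 = 1 - ct ^ 2) (h4 : S ^ 2 = u ^ 2 - 1)
    (h5 : w ^ 2 = 1 - v ^ 2) (D D1 D2 E1 E2 : ℝ)
    (hD : D = u ^ 2 + ch ^ 2 + cq ^ 2 + v ^ 2 - 2 - 2 * u * v * ch * cq - 2 * S * w * sh * sq * ct)
    (hD1 : D1 = 2 * ch * sh - 2 * u * v * sh * cq - 2 * S * w * ch * sq * ct)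
    (hD2 : D2 = 2 * (ch ^ 2 + sh ^ 2) - 2 * u * v * ch * cq - 2 * S * w * sh * sq * ct)
    (hE1 : E1 = -(2 * cq * sq) + 2 * u * v * ch * sq - 2 * S * w * sh * cq * ct)
    (hE2 : E2 = -2 * (cq ^ 2 - sq ^ 2) + 2 * u * v * ch * cq + 2 * S * w * sh * sq * ct) :
    sq * (sh * (D2 * D + (e - 1) * D1 ^ 2) + (-2 * e) * ch * D1 * D)
     + sh * (sq * (E2 * D + (e - 1) * E1 ^ 2) + (-2 * e) * cq * E1 * D)
     + (sh ^ 2 + sq ^ 2) * (2 * S * w) *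
       ((-2 * e) * ct * D + st ^ 2 * (e - 1) * (2 * S * w * sh * sq)) = 0 := by
  subst hD hD1 hD2 hE1 hE2
  grind

/-- squared distance -/
def dd (u v S w η θ t : ℝ) : ℝ :=
  u ^ 2 + cosh η ^ 2 + cos θ ^ 2 + v ^ 2 - 2 - 2 * u * v * cosh η * cos θ
    - 2 * S * w * sinh η * sin θ * cos t
def ddη (u v S w η θ t : ℝ) : ℝ :=
  2 * cosh η * sinh η - 2 * u * v * sinh η * cos θ - 2 * S * w * cosh η * sin θ * cos t
def ddηη (u v S w η θ t : ℝ) : ℝ :=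
  2 * (cosh η ^ 2 + sinh η ^ 2) - 2 * u * v * cosh η * cos θ - 2 * S * w * sinh η * sin θ * cos t
def ddθ (u v S w η θ t : ℝ) : ℝ :=
  -(2 * cos θ * sin θ) + 2 * u * v * cosh η * sin θ - 2 * S * w * sinh η * cos θ * cos t
def ddθθ (u v S w η θ t : ℝ) : ℝ :=
  -2 * (cos θ ^ 2 - sin θ ^ 2) + 2 * u * v * cosh η * cos θ + 2 * S * w * sinh η * sin θ * cos t

section dd
variable (u v S w η θ t : ℝ)

lemma dd_pos (hS : S ^ 2 = u ^ 2 - 1) (hw : w ^ 2 = 1 - v ^ 2) (hη : sinh η ^ 2 < S ^ 2) :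
    0 < dd u v S w η θ t := by
  have hch : cosh η ^ 2 = 1 + sinh η ^ 2 := by rw [cosh_sq]; ring
  have hc : cos θ ^ 2 = 1 - sin θ ^ 2 := by rw [cos_sq']
  have hct : cos t ^ 2 = 1 - sin t ^ 2 := by rw [cos_sq']
  have e : dd u v S w η θ t = (sinh η * sin θ * cos t - S * w) ^ 2 + (sinh η * sin θ * sin t) ^ 2
      + (cosh η * cos θ - u * v) ^ 2 := by
    unfold dd
    grind
  by_contra hneg
  rw [e] at hneg
  have n1 := sq_nonneg (sinh η * sin θ * cos t - S * w)
  have n2 := sq_nonneg (sinh η * sin θ * sin t)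
  have n3 := sq_nonneg (cosh η * cos θ - u * v)
  have z1 : sinh η * sin θ * cos t - S * w = 0 := by
    apply pow_eq_zero_iff two_ne_zero |>.1; linarith
  have z2 : sinh η * sin θ * sin t = 0 := by
    apply pow_eq_zero_iff two_ne_zero |>.1; linarith
  have z3 : cosh η * cos θ - u * v = 0 := by
    apply pow_eq_zero_iff two_ne_zero |>.1; linarith
  have q1 : sinh η ^ 2 * sin θ ^ 2 = S ^ 2 * (1 - v ^ 2) := by
    rw [← hw]; grind
  have q2 : (1 + sinh η ^ 2) * (1 - sin θ ^ 2) = (1 + S ^ 2) * v ^ 2 := by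
    rw [← hch, ← hc, hS]; grind
  have p0 : 0 ≤ sin θ ^ 2 := sq_nonneg _
  have p1 : sin θ ^ 2 ≤ 1 := sin_sq_le_one θ
  have s0 : 0 ≤ sinh η ^ 2 := sq_nonneg _
  generalize sin θ ^ 2 = p at *
  generalize sinh η ^ 2 = σ at *
  generalize S ^ 2 = T at *
  generalize v ^ 2 = y at *
  have hT : 0 < T := by linarith
  have a1 : y ≤ 1 - p := by
    have : (1 + T) * y ≤ (1 + T) * (1 - p) := by
      rw [← q2]; exact mul_le_mul_of_nonneg_right (by linarith) (by linarith)
    exact le_of_mul_le_mul_left this (by linarith)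
  have a2 : 1 - y ≤ p := by
    have : T * (1 - y) ≤ T * p := by
      rw [← q1]; exact mul_le_mul_of_nonneg_right (by linarith) (by linarith)
    exact le_of_mul_le_mul_left this (by linarith)
  have a3 : y = 1 - p := by linarith
  subst a3
  have b1 : (T - σ) * p = 0 := by linarith
  have b2 : (T - σ) * (1 - p) = 0 := by linarith
  have : T - σ = 0 := by linarith
  linarith

lemma dd_hasDerivAt_η : HasDerivAt (fun η => dd u v S w η θ t) (ddη u v S w η θ t) η := by
  unfold dd ddη
  have := ((((((((hasDerivAt_cosh η).pow 2).const_add (u ^ 2)).add_const (cos θ ^ 2)).add_const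
    (v ^ 2)).sub_const 2).sub (((hasDerivAt_cosh η).const_mul (2 * u * v)).mul_const (cos θ))).sub
    ((((hasDerivAt_sinh η).const_mul (2 * S * w)).mul_const (sin θ)).mul_const (cos t)))
  convert! this using 1
  simp

lemma ddη_hasDerivAt : HasDerivAt (fun η => ddη u v S w η θ t) (ddηη u v S w η θ t) η := by
  unfold ddηη ddη
  have := (((((hasDerivAt_cosh η).const_mul 2).mul (hasDerivAt_sinh η)).sub
    (((hasDerivAt_sinh η).const_mul (2 * u * v)).mul_const (cos θ))).sub
    ((((hasDerivAt_cosh η).const_mul (2 * S * w)).mul_const (sin θ)).mul_const (cos t)))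
  convert! this using 1
  ring

lemma dd_hasDerivAt_θ : HasDerivAt (fun θ => dd u v S w η θ t) (ddθ u v S w η θ t) θ := by
  unfold dd ddθ
  have := (((((((hasDerivAt_cos θ).pow 2).const_add (u ^ 2 + cosh η ^ 2)).add_const
    (v ^ 2)).sub_const 2).sub ((hasDerivAt_cos θ).const_mul (2 * u * v * cosh η))).sub
    (((hasDerivAt_sin θ).const_mul (2 * S * w * sinh η)).mul_const (cos t)))
  convert! this using 1
  simp

lemma ddθ_hasDerivAt : HasDerivAt (fun θ => ddθ u v S w η θ t) (ddθθ u v S w η θ t) θ := by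
  unfold ddθθ ddθ
  have := (((((hasDerivAt_cos θ).const_mul 2).mul (hasDerivAt_sin θ)).neg.add
    (((hasDerivAt_sin θ).const_mul (2 * u * v * cosh η)))).sub
    ((((hasDerivAt_cos θ).const_mul (2 * S * w * sinh η))).mul_const (cos t)))
  convert! this using 1
  ring

lemma dd_hasDerivAt_t : HasDerivAt (fun t => dd u v S w η θ t)
    (2 * S * w * sinh η * sin θ * sin t) t := by
  unfold dd
  have := ((hasDerivAt_cos t).const_mul (2 * S * w * sinh η * sin θ)).const_sub
    (u ^ 2 + cosh η ^ 2 + cos θ ^ 2 + v ^ 2 - 2 - 2 * u * v * cosh η * cos θ)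
  convert! this using 1
  ring

end dd

def kη (e u v S w η θ t : ℝ) : ℝ := ddη u v S w η θ t * e * dd u v S w η θ t ^ (e - 1)
def kηη (e u v S w η θ t : ℝ) : ℝ := ddηη u v S w η θ t * e * dd u v S w η θ t ^ (e - 1)
  + ddη u v S w η θ t ^ 2 * e * (e - 1) * dd u v S w η θ t ^ (e - 2)
def kθ (e u v S w η θ t : ℝ) : ℝ := ddθ u v S w η θ t * e * dd u v S w η θ t ^ (e - 1)
def kθθ (e u v S w η θ t : ℝ) : ℝ := ddθθ u v S w η θ t * e * dd u v S w η θ t ^ (e - 1)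
  + ddθ u v S w η θ t ^ 2 * e * (e - 1) * dd u v S w η θ t ^ (e - 2)
def kV (m : ℕ) (e u v S w η θ t : ℝ) : ℝ :=
  e * (2 * S * w) * (sin t ^ (2 * m + 1) * dd u v S w η θ t ^ (e - 1))
def kVt (m : ℕ) (e u v S w η θ t : ℝ) : ℝ :=
  e * (2 * S * w) * sin t ^ (2 * m) * ((2 * (m : ℝ) + 1) * cos t * dd u v S w η θ t ^ (e - 1)
    + sin t ^ 2 * (e - 1) * (2 * S * w * sinh η * sin θ) * dd u v S w η θ t ^ (e - 2))

section kk
variable (m : ℕ) (e u v S w η θ t : ℝ)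

lemma k_hasDerivAt_η (h : 0 < dd u v S w η θ t) :
    HasDerivAt (fun η => dd u v S w η θ t ^ e) (kη e u v S w η θ t) η :=
  (dd_hasDerivAt_η u v S w η θ t).rpow_const (Or.inl h.ne')

lemma kη_hasDerivAt (h : 0 < dd u v S w η θ t) :
    HasDerivAt (fun η => kη e u v S w η θ t) (kηη e u v S w η θ t) η := by
  have := ((ddη_hasDerivAt u v S w η θ t).mul_const e).mul
    ((dd_hasDerivAt_η u v S w η θ t).rpow_const (p := e - 1) (Or.inl h.ne'))
  convert! this using 1
  unfold kηη
  have : e - 1 - 1 = e - 2 := by ring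
  rw [this]; ring

lemma k_hasDerivAt_θ (h : 0 < dd u v S w η θ t) :
    HasDerivAt (fun θ => dd u v S w η θ t ^ e) (kθ e u v S w η θ t) θ :=
  (dd_hasDerivAt_θ u v S w η θ t).rpow_const (Or.inl h.ne')

lemma kθ_hasDerivAt (h : 0 < dd u v S w η θ t) :
    HasDerivAt (fun θ => kθ e u v S w η θ t) (kθθ e u v S w η θ t) θ := by
  have := ((ddθ_hasDerivAt u v S w η θ t).mul_const e).mul
    ((dd_hasDerivAt_θ u v S w η θ t).rpow_const (p := e - 1) (Or.inl h.ne'))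
  convert! this using 1
  unfold kθθ
  have : e - 1 - 1 = e - 2 := by ring
  rw [this]; ring

lemma kV_hasDerivAt (h : 0 < dd u v S w η θ t) :
    HasDerivAt (fun t => kV m e u v S w η θ t) (kVt m e u v S w η θ t) t := by
  have := (((hasDerivAt_sin t).pow (2 * m + 1)).mul
    ((dd_hasDerivAt_t u v S w η θ t).rpow_const (p := e - 1) (Or.inl h.ne'))).const_mul
    (e * (2 * S * w))
  convert! this using 1
  unfold kVt
  have : e - 1 - 1 = e - 2 := by ring
  rw [this]
  simp
  ring

lemma k_pde (he : e = -((m : ℝ) + 1 / 2)) (hS : S ^ 2 = u ^ 2 - 1) (hw : w ^ 2 = 1 - v ^ 2)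
    (h : 0 < dd u v S w η θ t) :
    sin θ * sin t ^ (2 * m) *
      (sinh η * kηη e u v S w η θ t + (2 * (m : ℝ) + 1) * cosh η * kη e u v S w η θ t)
    + sinh η * sin t ^ (2 * m) *
      (sin θ * kθθ e u v S w η θ t + (2 * (m : ℝ) + 1) * cos θ * kθ e u v S w η θ t)
    + (sinh η ^ 2 + sin θ ^ 2) * kVt m e u v S w η θ t = 0 := by
  have hch : cosh η ^ 2 = 1 + sinh η ^ 2 := by rw [cosh_sq]; ring
  have key := spheroid_identity e u v S w (cosh η) (sinh η) (sin θ) (cos θ) (sin t) (cos t) hch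
    (sin_sq θ) (sin_sq t) hS hw (dd u v S w η θ t)
    (ddη u v S w η θ t) (ddηη u v S w η θ t) (ddθ u v S w η θ t) (ddθθ u v S w η θ t)
    rfl rfl rfl rfl rfl
  have hm : 2 * (m : ℝ) + 1 = -2 * e := by rw [he]; ring
  have h1 : dd u v S w η θ t ^ (e - 1) = dd u v S w η θ t ^ (e - 2) * dd u v S w η θ t := by
    rw [← Real.rpow_add_one h.ne']; congr 1; ring
  simp only [kηη, kη, kθθ, kθ, kVt, h1, hm]
  linear_combination (e * sin t ^ (2 * m) * dd u v S w η θ t ^ (e - 2)) * key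

end kk

def rectR : Set (ℝ × ℝ) := Set.Icc 0 π ×ˢ Set.Icc 0 (2 * π)

lemma rectR_compact : IsCompact rectR := isCompact_Icc.prod isCompact_Icc

lemma rect_iter (A : ℝ × ℝ → ℝ) (hA : Continuous A) :
    ∫ p in rectR, A p = ∫ θ in (0 : ℝ)..π, ∫ t in (0 : ℝ)..(2 * π), A (θ, t) := by
  have hi : IntegrableOn A rectR := hA.continuousOn.integrableOn_compact rectR_compact
  unfold rectR at *
  rw [Measure.volume_eq_prod] at hi ⊢
  rw [setIntegral_prod _ hi, interval_eq_Icc _ pi_pos.le]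
  congr 1; funext θ
  rw [interval_eq_Icc _ (by positivity)]

lemma rect_iter' (A : ℝ × ℝ → ℝ) (hA : Continuous A) :
    ∫ p in rectR, A p = ∫ t in (0 : ℝ)..(2 * π), ∫ θ in (0 : ℝ)..π, A (θ, t) := by
  have hi : IntegrableOn A rectR := hA.continuousOn.integrableOn_compact rectR_compact
  unfold rectR at *
  rw [Measure.volume_eq_prod] at hi ⊢
  rw [setIntegral_prod _ hi, interval_eq_Icc _ (by positivity)]
  rw [IntegrableOn, ← Measure.prod_restrict] at hi
  rw [integral_integral_swap (f := fun θ t => A (θ, t)) hi]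
  congr 1; funext t
  rw [interval_eq_Icc _ pi_pos.le]

def wt (n m : ℕ) (p : ℝ × ℝ) : ℝ :=
  sin p.1 ^ (2 * m + 1) * (lq n m).eval (cos p.1) * sin p.2 ^ (2 * m)

lemma wt_cont (n m : ℕ) : Continuous (wt n m) := by
  have := (lq n m).continuous
  unfold wt
  fun_prop

def GG (n m : ℕ) (u v S w η : ℝ) : ℝ :=
  ∫ p in rectR, wt n m p * dd u v S w η p.1 p.2 ^ (-((m : ℝ) + 1 / 2))
def GG1 (n m : ℕ) (u v S w η : ℝ) : ℝ :=
  ∫ p in rectR, wt n m p * kη (-((m : ℝ) + 1 / 2)) u v S w η p.1 p.2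
def GG2 (n m : ℕ) (u v S w η : ℝ) : ℝ :=
  ∫ p in rectR, wt n m p * kηη (-((m : ℝ) + 1 / 2)) u v S w η p.1 p.2

section GGs
variable (n m : ℕ) (u v S w η : ℝ)

def Uη (S : ℝ) : Set ℝ := {η | sinh η ^ 2 < S ^ 2}

lemma Uη_open : IsOpen (Uη S) := isOpen_lt (by fun_prop) (by fun_prop)

lemma dd_rpow_cont (e : ℝ) (hS : S ^ 2 = u ^ 2 - 1) (hw : w ^ 2 = 1 - v ^ 2) :
    ContinuousOn (fun q : ℝ × (ℝ × ℝ) => dd u v S w q.1 q.2.1 q.2.2 ^ e) (Uη S ×ˢ Set.univ) := by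
  refine ContinuousOn.rpow_const (by unfold dd; fun_prop) ?_
  rintro ⟨η, θ, t⟩ ⟨h, -⟩
  exact Or.inl (dd_pos u v S w η θ t hS hw h).ne'

lemma k_cont (e : ℝ) (hS : S ^ 2 = u ^ 2 - 1) (hw : w ^ 2 = 1 - v ^ 2) :
    ContinuousOn (fun q : ℝ × (ℝ × ℝ) => kη e u v S w q.1 q.2.1 q.2.2) (Uη S ×ˢ Set.univ) ∧
    ContinuousOn (fun q : ℝ × (ℝ × ℝ) => kηη e u v S w q.1 q.2.1 q.2.2) (Uη S ×ˢ Set.univ) ∧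
    ContinuousOn (fun q : ℝ × (ℝ × ℝ) => kθ e u v S w q.1 q.2.1 q.2.2) (Uη S ×ˢ Set.univ) ∧
    ContinuousOn (fun q : ℝ × (ℝ × ℝ) => kθθ e u v S w q.1 q.2.1 q.2.2) (Uη S ×ˢ Set.univ) ∧
    ContinuousOn (fun q : ℝ × (ℝ × ℝ) => kVt m e u v S w q.1 q.2.1 q.2.2) (Uη S ×ˢ Set.univ) := by
  have c1 := dd_rpow_cont u v S w (e - 1) hS hw
  have c2 := dd_rpow_cont u v S w (e - 2) hS hw
  refine ⟨?_, ?_, ?_, ?_, ?_⟩ <;> simp only [kη, kηη, kθ, kθθ, kVt]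
  · exact ContinuousOn.mul (by unfold ddη; fun_prop) c1
  · exact (ContinuousOn.mul (by unfold ddηη; fun_prop) c1).add
      (ContinuousOn.mul (by unfold ddη; fun_prop) c2)
  · exact ContinuousOn.mul (by unfold ddθ; fun_prop) c1
  · exact (ContinuousOn.mul (by unfold ddθθ; fun_prop) c1).add
      (ContinuousOn.mul (by unfold ddθ; fun_prop) c2)
  · refine ContinuousOn.mul (by fun_prop) (ContinuousOn.add (ContinuousOn.mul (by fun_prop) c1)
      (ContinuousOn.mul (by fun_prop) c2))

lemma slice_cont {f : ℝ × (ℝ × ℝ) → ℝ} (hf : ContinuousOn f (Uη S ×ˢ Set.univ)) (hη : η ∈ Uη S) :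
    Continuous (fun p : ℝ × ℝ => f (η, p)) := by
  rw [← continuousOn_univ]
  exact hf.comp (f := fun p => (η, p)) (by fun_prop) (fun p hp => ⟨hη, hp⟩)

lemma wt_mul_cont {f : ℝ × (ℝ × ℝ) → ℝ} (hf : ContinuousOn f (Uη S ×ˢ Set.univ)) :
    ContinuousOn (fun q : ℝ × (ℝ × ℝ) => wt n m q.2 * f q) (Uη S ×ˢ rectR) :=
  (((wt_cont n m).comp continuous_snd).continuousOn.mul hf).mono
    (Set.prod_mono le_rfl (Set.subset_univ _))

lemma GG_hasDerivAt (hS : S ^ 2 = u ^ 2 - 1) (hw : w ^ 2 = 1 - v ^ 2) (hη : η ∈ Uη S) :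
    HasDerivAt (fun η => GG n m u v S w η) (GG1 n m u v S w η) η :=
  hasDerivAt_param
    (F := fun η p => wt n m p * dd u v S w η p.1 p.2 ^ (-((m : ℝ) + 1 / 2)))
    (F' := fun η p => wt n m p * kη (-((m : ℝ) + 1 / 2)) u v S w η p.1 p.2)
    rectR_compact (Uη_open S)
    (wt_mul_cont n m S (dd_rpow_cont u v S w _ hS hw))
    (wt_mul_cont n m S (k_cont m u v S w _ hS hw).1)
    (fun x hx p _ => (k_hasDerivAt_η _ u v S w x p.1 p.2
      (dd_pos u v S w x p.1 p.2 hS hw hx)).const_mul _) hη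

lemma GG1_hasDerivAt (hS : S ^ 2 = u ^ 2 - 1) (hw : w ^ 2 = 1 - v ^ 2) (hη : η ∈ Uη S) :
    HasDerivAt (fun η => GG1 n m u v S w η) (GG2 n m u v S w η) η :=
  hasDerivAt_param
    (F := fun η p => wt n m p * kη (-((m : ℝ) + 1 / 2)) u v S w η p.1 p.2)
    (F' := fun η p => wt n m p * kηη (-((m : ℝ) + 1 / 2)) u v S w η p.1 p.2)
    rectR_compact (Uη_open S)
    (wt_mul_cont n m S (k_cont m u v S w _ hS hw).1)
    (wt_mul_cont n m S (k_cont m u v S w _ hS hw).2.1)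
    (fun x hx p _ => (kη_hasDerivAt _ u v S w x p.1 p.2
      (dd_pos u v S w x p.1 p.2 hS hw hx)).const_mul _) hη

lemma GG_ode (hS : S ^ 2 = u ^ 2 - 1) (hw : w ^ 2 = 1 - v ^ 2) (hη : η ∈ Uη S) :
    sinh η * GG2 n m u v S w η + (2 * (m : ℝ) + 1) * cosh η * GG1 n m u v S w η
      - (((n : ℝ) - m) * (n + m + 1)) * sinh η * GG n m u v S w η = 0 := by
  obtain ⟨e, he⟩ : ∃ e, e = -((m : ℝ) + 1 / 2) := ⟨_, rfl⟩
  set μ := ((n : ℝ) - m) * (n + m + 1) with hμ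
  have hc := k_cont m u v S w e hS hw
  have c0 := slice_cont S η (dd_rpow_cont u v S w e hS hw) hη
  have c1 := slice_cont S η hc.1 hη
  have c2 := slice_cont S η hc.2.1 hη
  have c3 := slice_cont S η hc.2.2.1 hη
  have c4 := slice_cont S η hc.2.2.2.1 hη
  have c5 := slice_cont S η hc.2.2.2.2 hη
  simp only at c0 c1 c2 c3 c4 c5
  have w0 := wt_cont n m
  have hint : ∀ {f : ℝ × ℝ → ℝ}, Continuous f → IntegrableOn f rectR := fun hf =>
    hf.continuousOn.integrableOn_compact rectR_compact
  have i0 : IntegrableOn (fun p => wt n m p * dd u v S w η p.1 p.2 ^ e) rectR :=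
    hint (w0.mul c0)
  have i1 : IntegrableOn (fun p => wt n m p * kη e u v S w η p.1 p.2) rectR :=
    hint (w0.mul c1)
  have i2 : IntegrableOn (fun p => wt n m p * kηη e u v S w η p.1 p.2) rectR :=
    hint (w0.mul c2)
  have hq := (lq n m).continuous
  -- the theta-exact part
  let Bθ : ℝ × ℝ → ℝ := fun p => sin p.2 ^ (2 * m) *
    ((lq n m).eval (cos p.1) * (sin p.1 ^ (2 * m) * (sin p.1 * kθθ e u v S w η p.1 p.2
      + (2 * (m : ℝ) + 1) * cos p.1 * kθ e u v S w η p.1 p.2))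
      + μ * (sin p.1 ^ (2 * m + 1) * (lq n m).eval (cos p.1)) * dd u v S w η p.1 p.2 ^ e)
  let Bt : ℝ × ℝ → ℝ := fun p => (lq n m).eval (cos p.1) * sin p.1 ^ (2 * m) *
    (sinh η ^ 2 + sin p.1 ^ 2) * kVt m e u v S w η p.1 p.2
  have cBθ : Continuous Bθ := by
    simp only [Bθ]
    exact Continuous.mul (by fun_prop) (Continuous.add (Continuous.mul (by fun_prop)
      (Continuous.mul (by fun_prop) (Continuous.add (Continuous.mul (by fun_prop) c4)
        (Continuous.mul (by fun_prop) c3)))) (Continuous.mul (by fun_prop) c0))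
  have cBt : Continuous Bt := by
    simp only [Bt]
    exact Continuous.mul (by fun_prop) c5
  have zθ : ∫ p in rectR, Bθ p = 0 := by
    rw [rect_iter' _ cBθ]
    have : ∀ t : ℝ, ∫ θ in (0 : ℝ)..π, Bθ (θ, t) = 0 := by
      intro t
      have key : ∀ θ ∈ Set.uIcc 0 π, HasDerivAt (fun θ => sin t ^ (2 * m) *
          (sin θ ^ (2 * m + 1) * ((lq n m).eval (cos θ) * kθ e u v S w η θ t)
          + (sin θ ^ (2 * m + 2) * (lq n (m + 1)).eval (cos θ)) * dd u v S w η θ t ^ e))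
          (Bθ (θ, t)) θ := by
        intro θ _
        have hp := dd_pos u v S w η θ t hS hw hη
        have d1 := (hasDerivAt_sin θ).pow (2 * m + 1)
        have d2 := (lq_hasDerivAt n m (cos θ)).comp θ (hasDerivAt_cos θ)
        have d3 := (lg_hasDerivAt n m (cos θ)).comp θ (hasDerivAt_cos θ)
        have e3 : ((fun s : ℝ => (1 - s ^ 2) ^ (m + 1) * (lq n (m + 1)).eval s) ∘ cos)
            = fun θ => sin θ ^ (2 * m + 2) * (lq n (m + 1)).eval (cos θ) := by
          funext x
          simp only [Function.comp]
          rw [← sin_sq, ← pow_mul]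
          congr 2
        rw [e3, ← sin_sq, ← pow_mul] at d3
        have := ((d1.mul (d2.mul (kθ_hasDerivAt e u v S w η θ t hp))).add
          (d3.mul (k_hasDerivAt_θ e u v S w η θ t hp))).const_mul (sin t ^ (2 * m))
        convert! this using 1
        simp only [Bθ, Pi.mul_apply, Pi.pow_apply, Function.comp]
        push_cast
        ring
      rw [intervalIntegral.integral_eq_sub_of_hasDerivAt key
        ((cBθ.comp (Continuous.prodMk_left t)).intervalIntegrable _ _)]
      simp
    simp [this]
  have zt : ∫ p in rectR, Bt p = 0 := by
    rw [rect_iter _ cBt]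
    have : ∀ θ : ℝ, ∫ t in (0 : ℝ)..(2 * π), Bt (θ, t) = 0 := by
      intro θ
      have key : ∀ t ∈ Set.uIcc 0 (2 * π), HasDerivAt (fun t => (lq n m).eval (cos θ) *
          sin θ ^ (2 * m) * (sinh η ^ 2 + sin θ ^ 2) * kV m e u v S w η θ t) (Bt (θ, t)) t := by
        intro t _
        have hp := dd_pos u v S w η θ t hS hw hη
        exact (kV_hasDerivAt m e u v S w η θ t hp).const_mul _
      rw [intervalIntegral.integral_eq_sub_of_hasDerivAt key
        ((cBt.comp (Continuous.prodMk_right θ)).intervalIntegrable _ _)]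
      simp [kV]
    simp [this]
  have j : IntegrableOn (fun p => sinh η * (wt n m p * kηη e u v S w η p.1 p.2)
      + (2 * (m : ℝ) + 1) * cosh η * (wt n m p * kη e u v S w η p.1 p.2)) rectR :=
    (i2.const_mul _).add (i1.const_mul _)
  unfold GG GG1 GG2
  rw [← he, ← integral_const_mul, ← integral_const_mul, ← integral_const_mul,
    ← integral_add (i2.const_mul _) (i1.const_mul _),
    ← integral_sub j (i0.const_mul _)]
  have hsum : ∀ p : ℝ × ℝ, sinh η * (wt n m p * kηη e u v S w η p.1 p.2)
      + (2 * (m : ℝ) + 1) * cosh η * (wt n m p * kη e u v S w η p.1 p.2)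
      - μ * sinh η * (wt n m p * dd u v S w η p.1 p.2 ^ e) = (-sinh η) * Bθ p - Bt p := by
    intro p
    have hp := dd_pos u v S w η p.1 p.2 hS hw hη
    have := k_pde m e u v S w η p.1 p.2 he hS hw hp
    simp only [wt, Bθ, Bt]
    linear_combination ((lq n m).eval (cos p.1) * sin p.1 ^ (2 * m)) * this
  rw [integral_congr_ae (Filter.Eventually.of_forall hsum),
    integral_sub ((hint cBθ).const_mul _) (hint cBt), integral_const_mul, zθ, zt]
  simp

lemma GG_eq (hm : m ≤ n) (hS : S ^ 2 = u ^ 2 - 1) (hw : w ^ 2 = 1 - v ^ 2) (h0 : 0 ≤ η)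
    (hη : η ∈ Uη S) :
    GG n m u v S w η = GG n m u v S w 0 / (lq n m).eval 1 * (lq n m).eval (cosh η) := by
  have hU : Set.Icc 0 η ⊆ Uη S := by
    intro x hx
    have h1 : 0 ≤ sinh x := sinh_nonneg_iff.2 hx.1
    have h2 : sinh x ≤ sinh η := sinh_le_sinh.2 hx.2
    have h3 : sinh η ^ 2 < S ^ 2 := hη
    show sinh x ^ 2 < S ^ 2
    nlinarith
  have hq : ∀ j x, HasDerivAt (fun x => (lq n j).eval (cosh x))
      ((lq n (j + 1)).eval (cosh x) * sinh x) x := fun j x =>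
    (lq_hasDerivAt n j (cosh x)).comp x (hasDerivAt_cosh x)
  have hqpos : ∀ x, 0 < (lq n m).eval (cosh x) := fun x => lq_pos n m hm _ (one_le_cosh x)
  -- Wronskian
  have hW : ∀ x ∈ Set.Icc 0 η, HasDerivAt (fun x => sinh x ^ (2 * m + 1) *
      (GG n m u v S w x * ((lq n (m + 1)).eval (cosh x) * sinh x)
        - GG1 n m u v S w x * (lq n m).eval (cosh x))) 0 x := by
    intro x hx
    have g0 := GG_hasDerivAt n m u v S w x hS hw (hU hx)
    have g1 := GG1_hasDerivAt n m u v S w x hS hw (hU hx)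
    have := ((hasDerivAt_sinh x).pow (2 * m + 1)).mul
      ((g0.mul ((hq (m + 1) x).mul (hasDerivAt_sinh x))).sub (g1.mul (hq m x)))
    convert! this using 1
    simp only [Pi.mul_apply, Pi.pow_apply, Pi.sub_apply]
    push_cast
    have ode := GG_ode n m u v S w x hS hw (hU hx)
    have qode := lq_ode n m (cosh x)
    have hch : cosh x ^ 2 = 1 + sinh x ^ 2 := by rw [cosh_sq]; ring
    rw [hch] at qode
    linear_combination (sinh x ^ (2 * m) * (lq n m).eval (cosh x)) * ode
      + (sinh x ^ (2 * m + 1) * GG n m u v S w x) * qode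
  have hW0 : ∀ x ∈ Set.Icc 0 η, sinh x ^ (2 * m + 1) *
      (GG n m u v S w x * ((lq n (m + 1)).eval (cosh x) * sinh x)
        - GG1 n m u v S w x * (lq n m).eval (cosh x)) = 0 := by
    intro x hx
    have := constant_of_has_deriv_right_zero
      (fun y hy => (hW y hy).continuousAt.continuousWithinAt)
      (fun y hy => (hW y (Set.Ico_subset_Icc_self hy)).hasDerivWithinAt) x hx
    rw [this]
    simp
  have hz : ∀ x ∈ Set.Icc 0 η, GG n m u v S w x * ((lq n (m + 1)).eval (cosh x) * sinh x)
        - GG1 n m u v S w x * (lq n m).eval (cosh x) = 0 := by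
    intro x hx
    rcases eq_or_lt_of_le hx.1 with h | h
    · subst h
      have ode := GG_ode n m u v S w 0 hS hw (hU hx)
      simp at ode
      have : GG1 n m u v S w 0 = 0 := by
        rcases ode with h | h
        · exact absurd h (by positivity)
        · exact h
      simp [this]
    · rcases mul_eq_zero.1 (hW0 x hx) with h' | h'
      · exact absurd h' (pow_ne_zero _ (sinh_pos_iff.2 h).ne')
      · exact h'
  have hD : ∀ x ∈ Set.Icc 0 η, HasDerivAt (fun x => GG n m u v S w x / (lq n m).eval (cosh x)) 0 x := by
    intro x hx
    have := (GG_hasDerivAt n m u v S w x hS hw (hU hx)).div (hq m x) (hqpos x).ne'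
    convert! this using 1
    rw [eq_comm, div_eq_zero_iff]
    left
    linarith [hz x hx]
  have := constant_of_has_deriv_right_zero
      (fun y hy => (hD y hy).continuousAt.continuousWithinAt)
      (fun y hy => (hD y (Set.Ico_subset_Icc_self hy)).hasDerivWithinAt) η ⟨h0, le_rfl⟩
  simp only [cosh_zero] at this
  rw [← this, div_mul_cancel₀ _ (hqpos η).ne']

end GGs

def oddF : ℕ → ℝ
  | 0 => 1
  | m + 1 => (2 * (m : ℝ) + 1) * oddF m

lemma oddF_pos (m : ℕ) : 0 < oddF m := by
  induction m with
  | zero => simp [oddF]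
  | succ k ih => simp only [oddF]; positivity

lemma seq_cont {H : ℕ → ℝ → ℝ}
    (hH : ∀ k, ∀ x ∈ Set.Icc (-1 : ℝ) 1, HasDerivAt (H k) (H (k + 1) x) x) (k : ℕ) :
    Continuous (fun t => H k (cos t)) := by
  rw [continuous_iff_continuousAt]
  intro t
  exact ContinuousAt.comp (f := cos) (hH k _ ⟨neg_one_le_cos t, cos_le_one t⟩).continuousAt
    continuous_cos.continuousAt

lemma parts1 {H : ℕ → ℝ → ℝ}
    (hH : ∀ k, ∀ x ∈ Set.Icc (-1 : ℝ) 1, HasDerivAt (H k) (H (k + 1) x) x) (m k : ℕ) :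
    ∫ t in (0 : ℝ)..(2 * π), sin t ^ (2 * m + 2) * H (k + 1) (cos t) =
      (2 * (m : ℝ) + 1) * ∫ t in (0 : ℝ)..(2 * π), sin t ^ (2 * m) * (cos t * H k (cos t)) := by
  have c0 := seq_cont hH k
  have c1 := seq_cont hH (k + 1)
  have key : ∀ t ∈ Set.uIcc 0 (2 * π), HasDerivAt (fun t => sin t ^ (2 * m + 1) * H k (cos t))
      ((2 * (m : ℝ) + 1) * (sin t ^ (2 * m) * (cos t * H k (cos t)))
        - sin t ^ (2 * m + 2) * H (k + 1) (cos t)) t := by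
    intro t _
    have := ((hasDerivAt_sin t).pow (2 * m + 1)).mul
      ((hH k _ ⟨neg_one_le_cos t, cos_le_one t⟩).comp t (hasDerivAt_cos t))
    convert! this using 1
    simp only [Pi.mul_apply, Pi.pow_apply, Function.comp]
    push_cast
    ring
  have i1 : Continuous (fun t => (2 * (m : ℝ) + 1) * (sin t ^ (2 * m) * (cos t * H k (cos t)))) :=
    Continuous.mul (by fun_prop) (Continuous.mul (by fun_prop) (Continuous.mul (by fun_prop) c0))
  have i2 : Continuous (fun t => sin t ^ (2 * m + 2) * H (k + 1) (cos t)) :=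
    Continuous.mul (by fun_prop) c1
  have := intervalIntegral.integral_eq_sub_of_hasDerivAt key
    ((i1.sub i2).intervalIntegrable _ _)
  rw [intervalIntegral.integral_sub (i1.intervalIntegrable _ _) (i2.intervalIntegrable _ _),
    intervalIntegral.integral_const_mul] at this
  simp at this
  linarith

lemma parts2 {H : ℕ → ℝ → ℝ}
    (hH : ∀ k, ∀ x ∈ Set.Icc (-1 : ℝ) 1, HasDerivAt (H k) (H (k + 1) x) x) (m k : ℕ) :
    ∫ t in (0 : ℝ)..(2 * π), sin t ^ (2 * m + 2) * (cos t * H (k + 1) (cos t)) =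
      (2 * (m : ℝ) + 1) * (∫ t in (0 : ℝ)..(2 * π), sin t ^ (2 * m) * H k (cos t)) -
      (2 * (m : ℝ) + 2) * (∫ t in (0 : ℝ)..(2 * π), sin t ^ (2 * m + 2) * H k (cos t)) := by
  have c0 := seq_cont hH k
  have c1 := seq_cont hH (k + 1)
  have key : ∀ t ∈ Set.uIcc 0 (2 * π), HasDerivAt
      (fun t => (sin t ^ (2 * m + 1) * cos t) * H k (cos t))
      ((2 * (m : ℝ) + 1) * (sin t ^ (2 * m) * H k (cos t)) -
        (2 * (m : ℝ) + 2) * (sin t ^ (2 * m + 2) * H k (cos t))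
        - sin t ^ (2 * m + 2) * (cos t * H (k + 1) (cos t))) t := by
    intro t _
    have := (((hasDerivAt_sin t).pow (2 * m + 1)).mul (hasDerivAt_cos t)).mul
      ((hH k _ ⟨neg_one_le_cos t, cos_le_one t⟩).comp t (hasDerivAt_cos t))
    convert! this using 1
    simp only [Pi.mul_apply, Pi.pow_apply, Function.comp]
    push_cast
    linear_combination (2 * (m : ℝ) + 1) * sin t ^ (2 * m) * H k (cos t) * (-sin_sq_add_cos_sq t)
  have i1 : Continuous (fun t => (2 * (m : ℝ) + 1) * (sin t ^ (2 * m) * H k (cos t))) :=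
    Continuous.mul (by fun_prop) (Continuous.mul (by fun_prop) c0)
  have i2 : Continuous (fun t => (2 * (m : ℝ) + 2) * (sin t ^ (2 * m + 2) * H k (cos t))) :=
    Continuous.mul (by fun_prop) (Continuous.mul (by fun_prop) c0)
  have i3 : Continuous (fun t => sin t ^ (2 * m + 2) * (cos t * H (k + 1) (cos t))) :=
    Continuous.mul (by fun_prop) (Continuous.mul (by fun_prop) c1)
  have i12 : Continuous (fun t => (2 * (m : ℝ) + 1) * (sin t ^ (2 * m) * H k (cos t)) -
      (2 * (m : ℝ) + 2) * (sin t ^ (2 * m + 2) * H k (cos t))) := i1.sub i2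
  have := intervalIntegral.integral_eq_sub_of_hasDerivAt key
    (((i1.sub i2).sub i3).intervalIntegrable _ _)
  rw [intervalIntegral.integral_sub (i12.intervalIntegrable _ _)
    (i3.intervalIntegrable _ _),
    intervalIntegral.integral_sub (i1.intervalIntegrable _ _) (i2.intervalIntegrable _ _),
    intervalIntegral.integral_const_mul, intervalIntegral.integral_const_mul] at this
  simp at this
  linarith

lemma fourier_trig (m : ℕ) : ∀ H : ℕ → ℝ → ℝ,
    (∀ k, ∀ x ∈ Set.Icc (-1 : ℝ) 1, HasDerivAt (H k) (H (k + 1) x) x) →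
    oddF m * ∫ t in (0 : ℝ)..(2 * π), cos (m * t) * H 0 (cos t) =
      ∫ t in (0 : ℝ)..(2 * π), sin t ^ (2 * m) * H m (cos t) := by
  induction m using Nat.twoStepInduction with
  | zero => intro H hH; simp [oddF]
  | one =>
    intro H hH
    have := parts1 hH 0 0
    simp [oddF] at this ⊢
    exact this.symm
  | more m ih0 ih1 =>
    intro H hH
    have hK : ∀ k, ∀ x ∈ Set.Icc (-1 : ℝ) 1,
        HasDerivAt (fun x => x * H k x + k * H (k - 1) x)
          (x * H (k + 1) x + (k + 1 : ℕ) * H (k + 1 - 1) x) x := by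
      intro k x hx
      rcases k with _ | k
      · have := (hasDerivAt_id x).mul (hH 0 x hx)
        convert! this using 1
        · funext y; simp
        · simp; ring
      · have := ((hasDerivAt_id x).mul (hH (k + 1) x hx)).add
          ((hH k x hx).const_mul ((k + 1 : ℕ) : ℝ))
        convert! this using 1
        simp; ring
    have h0 := ih0 H hH
    have h1 := ih1 (fun k x => x * H k x + k * H (k - 1) x) hK
    have c0 := seq_cont hH 0
    have cm := seq_cont hH m
    have cm1 := seq_cont hH (m + 1)
    have hrec : ∫ t in (0 : ℝ)..(2 * π), cos ((m + 2 : ℕ) * t) * H 0 (cos t) =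
        2 * (∫ t in (0 : ℝ)..(2 * π), cos ((m + 1 : ℕ) * t) * (cos t * H 0 (cos t)))
        - ∫ t in (0 : ℝ)..(2 * π), cos (m * t) * H 0 (cos t) := by
      rw [← intervalIntegral.integral_const_mul, ← intervalIntegral.integral_sub]
      · congr 1; funext t
        have e1 : ((m + 2 : ℕ) : ℝ) * t = ((m + 1 : ℕ) : ℝ) * t + t := by push_cast; ring
        have e2 : (m : ℝ) * t = ((m + 1 : ℕ) : ℝ) * t - t := by push_cast; ring
        rw [e1, e2, cos_add, cos_sub]; ring
      · exact Continuous.intervalIntegrable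
          (Continuous.mul (by fun_prop) (Continuous.mul (by fun_prop) (Continuous.mul (by fun_prop) c0))) _ _
      · exact Continuous.intervalIntegrable
          (Continuous.mul (by fun_prop) c0) _ _
    have p1 := parts1 hH (m + 1) (m + 1)
    have p2 := parts2 hH m m
    have hsplit : ∫ t in (0 : ℝ)..(2 * π), sin t ^ (2 * (m + 1)) *
        (cos t * H (m + 1) (cos t) + (m + 1 : ℕ) * H (m + 1 - 1) (cos t)) =
        (∫ t in (0 : ℝ)..(2 * π), sin t ^ (2 * m + 2) * (cos t * H (m + 1) (cos t)))
        + ((m : ℝ) + 1) * ∫ t in (0 : ℝ)..(2 * π), sin t ^ (2 * m + 2) * H m (cos t) := by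
      rw [← intervalIntegral.integral_const_mul, ← intervalIntegral.integral_add]
      · congr 1; funext t
        simp only [Nat.add_sub_cancel]
        push_cast
        ring
      · exact Continuous.intervalIntegrable
          (Continuous.mul (by fun_prop) (Continuous.mul (by fun_prop) cm1)) _ _
      · exact Continuous.intervalIntegrable
          (Continuous.mul (by fun_prop) (Continuous.mul (by fun_prop) cm)) _ _
    rw [hsplit] at h1
    simp only [CharP.cast_eq_zero, zero_mul, add_zero] at h1
    rw [hrec]
    have e3 : 2 * (m + 2) = 2 * (m + 1) + 2 := by ring
    have e4 : 2 * (m + 1) = 2 * m + 2 := by ring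
    rw [e3, p1, e4]
    simp only [oddF] at h0 h1 ⊢
    push_cast at *
    linear_combination (2 * (2 * (m : ℝ) + 3)) * h1 - ((2 * (m : ℝ) + 3) * (2 * m + 1)) * h0
      + (2 * (m : ℝ) + 3) * p2

/-- Application to the inverse distance. -/
lemma fourier_inv (m : ℕ) (A R : ℝ) (hp : ∀ x ∈ Set.Icc (-1 : ℝ) 1, 0 < A - 2 * R * x) :
    ∫ t in (0 : ℝ)..(2 * π), cos (m * t) * (A - 2 * R * cos t) ^ (-(1 / 2) : ℝ) =
      R ^ m * ∫ t in (0 : ℝ)..(2 * π), sin t ^ (2 * m) *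
        (A - 2 * R * cos t) ^ (-((m : ℝ) + 1 / 2)) := by
  have h := fourier_trig m (fun k x => oddF k * R ^ k * (A - 2 * R * x) ^ (-((k : ℝ) + 1 / 2))) (by
    intro k x hx
    have := ((((hasDerivAt_id x).const_mul (2 * R)).const_sub A).rpow_const
      (p := -((k : ℝ) + 1 / 2)) (Or.inl (hp x hx).ne')).const_mul (oddF k * R ^ k)
    convert! this using 1
    have : (-(((k + 1 : ℕ) : ℝ) + 1 / 2)) = -((k : ℝ) + 1 / 2) - 1 := by push_cast; ring
    rw [this]
    simp only [oddF, id]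
    ring)
  have e : ∀ t, sin t ^ (2 * m) * (oddF m * R ^ m * (A - 2 * R * cos t) ^ (-((m : ℝ) + 1 / 2)))
    = oddF m * (R ^ m * (sin t ^ (2 * m) * (A - 2 * R * cos t) ^ (-((m : ℝ) + 1 / 2)))) := by
    intro t; ring
  simp only [e] at h
  rw [intervalIntegral.integral_const_mul] at h
  have h2 := mul_left_cancel₀ (oddF_pos m).ne' h
  rw [← intervalIntegral.integral_const_mul, ← h2]
  simp [oddF]

lemma sin_even_int (m : ℕ) : ∫ t in (0 : ℝ)..(2 * π), sin t ^ (2 * m) =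
    2 * π * (2 * m).factorial / (4 ^ m * (m.factorial : ℝ) ^ 2) := by
  induction m with
  | zero => simp
  | succ k ih =>
    have e : 2 * (k + 1) = 2 * k + 2 := by ring
    rw [e, integral_sin_pow, ih]
    simp only [Nat.factorial_succ]
    push_cast
    simp
    field_simp
    ring

lemma GG_zero (n m : ℕ) (u v S w : ℝ) (hu : 1 < u) (hv : v ∈ Set.Ioo (-1 : ℝ) 1) :
    GG n m u v S w 0 = (2 * π * (2 * m).factorial / (4 ^ m * (m.factorial : ℝ) ^ 2)) *
      TT n m u v := by
  have hkp : ∀ s ∈ Set.Icc (-1 : ℝ) 1, 0 < kk u s v := fun s hs =>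
    kk_pos u s v hu hs ⟨by linarith [hv.1], by linarith [hv.2]⟩
  have hq := (lq n m).continuous
  have hd : ∀ θ t, dd u v S w 0 θ t = kk u (cos θ) v := by
    intro θ t; simp [dd, kk]; ring
  have ck : Continuous (fun θ => kk u (cos θ) v ^ (-((m : ℝ) + 1 / 2))) :=
    Continuous.rpow_const (by unfold kk; fun_prop)
      (fun θ => Or.inl (hkp _ ⟨neg_one_le_cos θ, cos_le_one θ⟩).ne')
  have hsub : TT n m u v = ∫ θ in (0 : ℝ)..π, sin θ ^ (2 * m + 1) * (lq n m).eval (cos θ) *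
      kk u (cos θ) v ^ (-((m : ℝ) + 1 / 2)) := by
    have := intervalIntegral.integral_comp_mul_deriv'' (a := 0) (b := π) (f := cos)
      (f' := fun θ => -sin θ)
      (g := fun s => (1 - s ^ 2) ^ m * (lq n m).eval s * kD0 (-((m : ℝ) + 1 / 2)) u s v)
      (by fun_prop) (fun x _ => (hasDerivAt_cos x).hasDerivWithinAt) (by fun_prop) (by
        have : ContinuousOn (fun s => kD0 (-((m : ℝ) + 1 / 2)) u s v) (cos '' Set.uIcc 0 π) := by
          unfold kD0
          refine ContinuousOn.rpow_const (by unfold kk; fun_prop) ?_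
          rintro s ⟨θ, -, rfl⟩
          exact Or.inl (hkp _ ⟨neg_one_le_cos θ, cos_le_one θ⟩).ne'
        exact ContinuousOn.mul (by fun_prop) this)
    simp only [cos_zero, cos_pi] at this
    rw [intervalIntegral.integral_symm (-1) 1] at this
    unfold TT
    rw [← neg_eq_iff_eq_neg] at this
    rw [← this, ← intervalIntegral.integral_neg]
    congr 1; funext θ
    simp only [Function.comp, kD0]
    rw [← sin_sq, ← pow_mul]
    ring
  unfold GG
  simp only [hd]
  have cA : Continuous (fun p : ℝ × ℝ => wt n m p * kk u (cos p.1) v ^ (-((m : ℝ) + 1 / 2))) :=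
    (wt_cont n m).mul (ck.comp continuous_fst)
  rw [rect_iter _ cA, hsub, ← sin_even_int, ← intervalIntegral.integral_const_mul]
  congr 1; funext θ
  rw [← intervalIntegral.integral_mul_const]
  congr 1; funext t
  simp only [wt]
  ring

/-- The full double integral. -/
lemma double_int (n m : ℕ) (hm : m ≤ n) (u v S w η : ℝ) (hu : 1 < u)
    (hv : v ∈ Set.Ioo (-1 : ℝ) 1) (hS : S ^ 2 = u ^ 2 - 1) (hw : w ^ 2 = 1 - v ^ 2) (h0 : 0 ≤ η)
    (hη : η ∈ Uη S) :
    ∫ p in rectR, sin p.1 ^ (m + 1) * (lq n m).eval (cos p.1) * cos (m * p.2) *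
        dd u v S w η p.1 p.2 ^ (-(1 / 2) : ℝ) =
      4 * π * (-1) ^ m * ((n - m).factorial / (n + m).factorial) * (S * w * sinh η) ^ m *
        iteratedDeriv m (legendreQ n) u * (lq n m).eval (cosh η) * (lq n m).eval v := by
  have hq := (lq n m).continuous
  have step : ∫ p in rectR, sin p.1 ^ (m + 1) * (lq n m).eval (cos p.1) * cos (m * p.2) *
        dd u v S w η p.1 p.2 ^ (-(1 / 2) : ℝ) = (S * w * sinh η) ^ m * GG n m u v S w η := by
    have c1 := slice_cont S η (dd_rpow_cont u v S w (-(1 / 2)) hS hw) hη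
    have c2 := slice_cont S η (dd_rpow_cont u v S w (-((m : ℝ) + 1 / 2)) hS hw) hη
    unfold GG
    rw [rect_iter _ (by exact Continuous.mul (by fun_prop) c1),
      rect_iter (fun p => wt n m p * dd u v S w η p.1 p.2 ^ (-((m : ℝ) + 1 / 2)))
        ((wt_cont n m).mul c2), ← intervalIntegral.integral_const_mul]
    congr 1; funext θ
    have e1 : ∀ t, dd u v S w η θ t = (u ^ 2 + cosh η ^ 2 + cos θ ^ 2 + v ^ 2 - 2
      - 2 * u * v * cosh η * cos θ) - 2 * (S * w * sinh η * sin θ) * cos t := by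
      intro t; unfold dd; ring
    have f := fourier_inv m (u ^ 2 + cosh η ^ 2 + cos θ ^ 2 + v ^ 2 - 2
      - 2 * u * v * cosh η * cos θ) (S * w * sinh η * sin θ) (by
        intro x hx
        have := dd_pos u v S w η θ (arccos x) hS hw hη
        rwa [e1, cos_arccos hx.1 hx.2] at this)
    simp only [← e1] at f
    have l1 : ∀ t, sin θ ^ (m + 1) * (lq n m).eval (cos θ) * cos (m * t) *
        dd u v S w η θ t ^ (-(1 / 2) : ℝ) = (sin θ ^ (m + 1) * (lq n m).eval (cos θ)) *
        (cos (m * t) * dd u v S w η θ t ^ (-(1 / 2) : ℝ)) := by intro t; ring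
    have l2 : ∀ t, wt n m (θ, t) * dd u v S w η θ t ^ (-((m : ℝ) + 1 / 2)) =
        (sin θ ^ (2 * m + 1) * (lq n m).eval (cos θ)) *
        (sin t ^ (2 * m) * dd u v S w η θ t ^ (-((m : ℝ) + 1 / 2))) := by
      intro t; simp only [wt]; ring
    simp only [Pi.mul_apply, l1, l2]
    rw [intervalIntegral.integral_const_mul, intervalIntegral.integral_const_mul, f]
    ring
  rw [step, GG_eq n m u v S w η hm hS hw h0 hη, GG_zero n m u v S w hu hv,
    TT_eq n m hm u hu v (Set.Ioo_subset_Icc_self hv), TT_one n m u hu, lI_Q n m hm u hu,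
    lq_one n m hm]
  have e4 : (4 : ℝ) ^ m = 2 ^ m * 2 ^ m := by rw [← mul_pow]; norm_num
  rw [e4]
  have f1 : ((n + m).factorial : ℝ) ≠ 0 := by positivity
  have f2 : ((n - m).factorial : ℝ) ≠ 0 := by positivity
  have f3 : ((2 * m).factorial : ℝ) ≠ 0 := by positivity
  have f4 : ((m).factorial : ℝ) ≠ 0 := by positivity
  field_simp
  ring

def EE (u₀ u v S w φ s t : ℝ) : ℝ :=
  u₀ ^ 2 + u ^ 2 + s ^ 2 + v ^ 2 - 2 - 2 * u₀ * v * u * s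
    - 2 * S * w * √(u ^ 2 - 1) * √(1 - s ^ 2) * cos (t - φ)

lemma norm_prolate (a u₀ u v φ s t : ℝ) (ha : 0 < a) (hu₀ : 1 < u₀) (hu : 1 < u)
    (hv : v ∈ Set.Ioo (-1 : ℝ) 1) (hs : s ∈ Set.Icc (-1 : ℝ) 1) :
    ‖prolate a u v φ - prolate a u₀ s t‖ =
      a * √(EE u₀ u v √(u₀ ^ 2 - 1) √(1 - v ^ 2) φ s t) := by
  have q1 := sq_sqrt (show 0 ≤ u ^ 2 - 1 by nlinarith)
  have q2 := sq_sqrt (show 0 ≤ u₀ ^ 2 - 1 by nlinarith)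
  have q3 := sq_sqrt (show 0 ≤ 1 - v ^ 2 by nlinarith [hv.1, hv.2])
  have q4 := sq_sqrt (show 0 ≤ 1 - s ^ 2 by nlinarith [hs.1, hs.2])
  rw [EuclideanSpace.norm_eq]
  conv_rhs => rw [← sqrt_sq ha.le, ← sqrt_mul (sq_nonneg a)]
  congr 1
  simp only [prolate, EE, Fin.sum_univ_three, Real.norm_eq_abs, sq_abs, PiLp.sub_apply,
    WithLp.equiv_symm_apply, cos_sub]
  simp only [Matrix.cons_val_zero, Matrix.cons_val_one, Matrix.cons_val_two, Matrix.head_cons,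
    Matrix.tail_cons, Matrix.cons_val]
  generalize √(u ^ 2 - 1) = X at *
  generalize √(u₀ ^ 2 - 1) = Y at *
  generalize √(1 - v ^ 2) = Z at *
  generalize √(1 - s ^ 2) = W at *
  have r1 := sin_sq_add_cos_sq φ
  have r2 := sin_sq_add_cos_sq t
  have hz : Z ^ 2 * X ^ 2 + W ^ 2 * Y ^ 2 = (1 - v ^ 2) * (u ^ 2 - 1) + (1 - s ^ 2) * (u₀ ^ 2 - 1) := by
    rw [q1, q2, q3, q4]
  linear_combination a ^ 2 * hz + (a * X * Z) ^ 2 * r1 + (a * Y * W) ^ 2 * r2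

lemma EE_cos (u₀ u v S w φ θ t : ℝ) (hu : 1 < u) (hθ : θ ∈ Set.Icc 0 π) :
    EE u₀ u v S w φ (cos θ) t = dd u₀ v S w (arsinh √(u ^ 2 - 1)) θ (t - φ) := by
  have h1 : cosh (arsinh √(u ^ 2 - 1)) = u := by
    rw [cosh_arsinh, sq_sqrt (by nlinarith)]
    rw [show 1 + (u ^ 2 - 1) = u ^ 2 by ring, sqrt_sq (by linarith)]
  have h2 : √(1 - cos θ ^ 2) = sin θ := by
    rw [← sin_sq, sqrt_sq (sin_nonneg_of_nonneg_of_le_pi hθ.1 hθ.2)]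
  unfold EE dd
  rw [h1, h2, sinh_arsinh]

def PsiR (n m : ℕ) (u₀ v S w η t : ℝ) : ℝ :=
  ∫ θ in (0 : ℝ)..π, sin θ ^ (m + 1) * (lq n m).eval (cos θ) *
    dd u₀ v S w η θ t ^ (-(1 / 2) : ℝ)

lemma PsiR_cont (n m : ℕ) (u₀ v S w η : ℝ) (hS : S ^ 2 = u₀ ^ 2 - 1) (hw : w ^ 2 = 1 - v ^ 2)
    (hη : η ∈ Uη S) : Continuous (fun t => PsiR n m u₀ v S w η t) := by
  have hq := (lq n m).continuous
  have c1 := slice_cont S η (dd_rpow_cont u₀ v S w (-(1 / 2)) hS hw) hη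
  unfold PsiR
  refine intervalIntegral.continuous_parametric_intervalIntegral_of_continuous' ?_ _ _
  simp only [Function.uncurry_def]
  exact Continuous.mul (by fun_prop) (c1.comp (f := fun p : ℝ × ℝ => (p.2, p.1)) (by fun_prop))

lemma PsiR_period (n m : ℕ) (u₀ v S w η t : ℝ) :
    PsiR n m u₀ v S w η (t + 2 * π) = PsiR n m u₀ v S w η t := by
  simp only [PsiR, dd, cos_add_two_pi]

lemma PsiR_symm (n m : ℕ) (u₀ v S w η t : ℝ) :
    PsiR n m u₀ v S w η (2 * π - t) = PsiR n m u₀ v S w η t := by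
  simp only [PsiR, dd, cos_two_pi_sub]

lemma PsiR_cos (n m : ℕ) (hm : m ≤ n) (u v S w η : ℝ) (hu : 1 < u)
    (hv : v ∈ Set.Ioo (-1 : ℝ) 1) (hS : S ^ 2 = u ^ 2 - 1) (hw : w ^ 2 = 1 - v ^ 2) (h0 : 0 ≤ η)
    (hη : η ∈ Uη S) :
    ∫ t in (0 : ℝ)..(2 * π), PsiR n m u v S w η t * cos (m * t) =
      4 * π * (-1) ^ m * ((n - m).factorial / (n + m).factorial) * (S * w * sinh η) ^ m *
        iteratedDeriv m (legendreQ n) u * (lq n m).eval (cosh η) * (lq n m).eval v := by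
  rw [← double_int n m hm u v S w η hu hv hS hw h0 hη]
  have hq := (lq n m).continuous
  have c1 := slice_cont S η (dd_rpow_cont u v S w (-(1 / 2)) hS hw) hη
  rw [rect_iter' _ (by exact Continuous.mul (by fun_prop) c1)]
  congr 1; funext t
  unfold PsiR
  rw [← intervalIntegral.integral_mul_const]
  congr 1; funext θ
  ring

lemma PsiR_sin (n m : ℕ) (u v S w η : ℝ) :
    ∫ t in (0 : ℝ)..(2 * π), PsiR n m u v S w η t * sin (m * t) = 0 := by
  have h := intervalIntegral.integral_comp_sub_left (a := 0) (b := 2 * π)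
    (fun t => PsiR n m u v S w η t * sin (m * t)) (2 * π)
  have e : ∀ t, PsiR n m u v S w η (2 * π - t) * sin (m * (2 * π - t)) =
      - (PsiR n m u v S w η t * sin (m * t)) := by
    intro t
    have : (m : ℝ) * (2 * π - t) = m * (2 * π) - m * t := by ring
    rw [PsiR_symm, this, sin_nat_mul_two_pi_sub]
    ring
  simp only [e, sub_self, sub_zero, intervalIntegral.integral_neg] at h
  linarith

lemma outer_int (n m : ℕ) (hm : m ≤ n) (u v S w η φ : ℝ) (hu : 1 < u)
    (hv : v ∈ Set.Ioo (-1 : ℝ) 1) (hS : S ^ 2 = u ^ 2 - 1) (hw : w ^ 2 = 1 - v ^ 2) (h0 : 0 ≤ η)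
    (hη : η ∈ Uη S) :
    ∫ t in (0 : ℝ)..(2 * π), ((PsiR n m u v S w η (t - φ) : ℝ) : ℂ) *
        Complex.exp (Complex.I * m * t) =
      ((4 * π * (-1) ^ m * ((n - m).factorial / (n + m).factorial) * (S * w * sinh η) ^ m *
        iteratedDeriv m (legendreQ n) u * (lq n m).eval (cosh η) * (lq n m).eval v : ℝ) : ℂ) *
        Complex.exp (Complex.I * m * φ) := by
  have cP := PsiR_cont n m u v S w η hS hw hη
  set f : ℝ → ℂ := fun t => ((PsiR n m u v S w η t : ℝ) : ℂ) * Complex.exp (Complex.I * m * t)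
    with hf
  have hper : Function.Periodic f (2 * π) := by
    intro t
    simp only [hf, PsiR_period]
    congr 1
    have : Complex.I * m * ((t + 2 * π : ℝ) : ℂ) = Complex.I * m * t + m * (2 * π * Complex.I) := by
      push_cast; ring
    rw [this, Complex.exp_add, Complex.exp_nat_mul_two_pi_mul_I, mul_one]
  have e1 : ∀ t : ℝ, ((PsiR n m u v S w η (t - φ) : ℝ) : ℂ) * Complex.exp (Complex.I * m * t) =
      f (t - φ) * Complex.exp (Complex.I * m * φ) := by
    intro t
    simp only [hf]
    rw [mul_assoc (Complex.ofReal _), ← Complex.exp_add]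
    congr 2
    push_cast; ring
  simp only [e1]
  rw [intervalIntegral.integral_mul_const, intervalIntegral.integral_comp_sub_right]
  congr 1
  have e2 := hper.intervalIntegral_add_eq (0 - φ) 0
  rw [show 0 - φ + 2 * π = 2 * π - φ by ring, zero_add] at e2
  rw [e2]
  have e3 : ∀ t : ℝ, f t = ((PsiR n m u v S w η t * cos (m * t) : ℝ) : ℂ) +
      ((PsiR n m u v S w η t * sin (m * t) : ℝ) : ℂ) * Complex.I := by
    intro t
    simp only [hf]
    rw [show Complex.I * m * (t : ℂ) = ((m * t : ℝ) : ℂ) * Complex.I by push_cast; ring,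
      Complex.exp_mul_I]
    push_cast
    ring
  simp only [e3]
  rw [intervalIntegral.integral_add, intervalIntegral.integral_mul_const,
    intervalIntegral.integral_ofReal, intervalIntegral.integral_ofReal, PsiR_sin,
    PsiR_cos n m hm u v S w η hu hv hS hw h0 hη]
  · simp
  · exact Continuous.intervalIntegrable (by fun_prop) _ _
  · exact Continuous.intervalIntegrable (by fun_prop) _ _

lemma inner_int (n m : ℕ) (u₀ u v S w φ t : ℝ) (hu : 1 < u) (hu2 : u < u₀)
    (hS : S ^ 2 = u₀ ^ 2 - 1) (hw : w ^ 2 = 1 - v ^ 2) :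
    ∫ s in (-1 : ℝ)..1, √(1 - s ^ 2) ^ m * (lq n m).eval s *
        EE u₀ u v S w φ s t ^ (-(1 / 2) : ℝ) =
      PsiR n m u₀ v S w (arsinh √(u ^ 2 - 1)) (t - φ) := by
  have hη : arsinh √(u ^ 2 - 1) ∈ Uη S := by
    show sinh _ ^ 2 < S ^ 2
    rw [sinh_arsinh, sq_sqrt (by nlinarith), hS]
    nlinarith
  have hq := (lq n m).continuous
  have := intervalIntegral.integral_comp_mul_deriv'' (a := 0) (b := π) (f := cos)
      (f' := fun θ => -sin θ)
      (g := fun s => √(1 - s ^ 2) ^ m * (lq n m).eval s *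
        EE u₀ u v S w φ s t ^ (-(1 / 2) : ℝ))
      (by fun_prop) (fun x _ => (hasDerivAt_cos x).hasDerivWithinAt) (by fun_prop) (by
        have : ContinuousOn (fun s => EE u₀ u v S w φ s t ^ (-(1 / 2) : ℝ))
            (cos '' Set.uIcc 0 π) := by
          refine ContinuousOn.rpow_const (by unfold EE; fun_prop) ?_
          rintro s ⟨θ, hθ, rfl⟩
          rw [Set.uIcc_of_le pi_pos.le] at hθ
          rw [EE_cos _ _ _ _ _ _ _ _ hu hθ]
          exact Or.inl (dd_pos _ _ _ _ _ _ _ hS hw hη).ne'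
        exact ContinuousOn.mul (by fun_prop) this)
  simp only [cos_zero, cos_pi] at this
  rw [intervalIntegral.integral_symm (-1) 1] at this
  rw [← neg_eq_iff_eq_neg] at this
  rw [← this, ← intervalIntegral.integral_neg]
  unfold PsiR
  apply intervalIntegral.integral_congr
  intro θ hθ
  rw [Set.uIcc_of_le pi_pos.le] at hθ
  simp only [Function.comp]
  rw [EE_cos _ _ _ _ _ _ _ _ hu hθ, ← sin_sq,
    sqrt_sq (sin_nonneg_of_nonneg_of_le_pi hθ.1 hθ.2)]
  ring

theorem singleLayer_interior_eval (a : ℝ) (ha : 0 < a) (u₀ : ℝ) (hu₀ : 1 < u₀)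
    (n m : ℕ) (hm : m ≤ n) (u v φ : ℝ) (hu1 : 1 < u) (hu2 : u < u₀)
    (hv : v ∈ Set.Ioo (-1 : ℝ) 1) :
    singleLayerP a u₀ (fun s t => sphY n m s t / ((Real.sqrt (u₀ ^ 2 - s ^ 2) : ℝ) : ℂ))
        (prolate a u v φ) =
      ((a * (((n - m).factorial : ℝ) / ((n + m).factorial : ℝ)) * (-1 : ℝ) ^ m *
          Real.sqrt (u₀ ^ 2 - 1) * assocQ n m u₀ * assocP n m u : ℝ) : ℂ) * sphY n m v φ := by
  have hS : √(u₀ ^ 2 - 1) ^ 2 = u₀ ^ 2 - 1 := sq_sqrt (by nlinarith)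
  have hw : √(1 - v ^ 2) ^ 2 = 1 - v ^ 2 := sq_sqrt (by nlinarith [hv.1, hv.2])
  have hη : arsinh √(u ^ 2 - 1) ∈ Uη √(u₀ ^ 2 - 1) := by
    show sinh _ ^ 2 < _ ^ 2
    rw [sinh_arsinh, sq_sqrt (by nlinarith), hS]
    nlinarith
  have h0 : 0 ≤ arsinh √(u ^ 2 - 1) := arsinh_nonneg_iff.2 (sqrt_nonneg _)
  have hcosh : cosh (arsinh √(u ^ 2 - 1)) = u := by
    rw [cosh_arsinh, sq_sqrt (by nlinarith)]
    rw [show 1 + (u ^ 2 - 1) = u ^ 2 by ring, sqrt_sq (by linarith)]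
  obtain ⟨N, hN⟩ : ∃ N : ℝ, N = √((2 * (n : ℝ) + 1) / (4 * π)) *
      √(((n - m).factorial : ℝ) / ((n + m).factorial : ℝ)) := ⟨_, rfl⟩
  have hinner : ∀ t : ℝ, (∫ s in (-1 : ℝ)..1,
      ((areaElemP a u₀ s / (4 * π * ‖prolate a u v φ - prolate a u₀ s t‖) : ℝ) : ℂ) *
        (sphY n m s t / ((√(u₀ ^ 2 - s ^ 2) : ℝ) : ℂ))) =
      ((a * √(u₀ ^ 2 - 1) * N / (4 * π) : ℝ) : ℂ) *
      (((PsiR n m u₀ v √(u₀ ^ 2 - 1) √(1 - v ^ 2) (arsinh √(u ^ 2 - 1)) (t - φ) : ℝ) : ℂ) *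
        Complex.exp (Complex.I * m * t)) := by
    intro t
    rw [← inner_int n m u₀ u v _ _ φ t hu1 hu2 hS hw, ← intervalIntegral.integral_ofReal,
      ← intervalIntegral.integral_mul_const, ← intervalIntegral.integral_const_mul]
    apply intervalIntegral.integral_congr
    intro s hs
    rw [Set.uIcc_of_le (by norm_num)] at hs
    simp only
    rw [norm_prolate a u₀ u v φ s t ha hu₀ hu1 hv hs]
    have hE : 0 < EE u₀ u v √(u₀ ^ 2 - 1) √(1 - v ^ 2) φ s t := by
      rw [← cos_arccos hs.1 hs.2, EE_cos _ _ _ _ _ _ _ _ hu1 ⟨arccos_nonneg s, arccos_le_pi s⟩]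
      exact dd_pos _ _ _ _ _ _ _ hS hw hη
    have hsq : 0 < √(u₀ ^ 2 - s ^ 2) := sqrt_pos.2 (by nlinarith [hs.1, hs.2])
    have hsE := sqrt_pos.2 hE
    simp only [sphY, ferrersP, areaElemP, iteratedDeriv_legendreP, ← hN]
    rw [rpow_neg hE.le, ← sqrt_eq_rpow]
    have : a ^ 2 * √(u₀ ^ 2 - s ^ 2) * √(u₀ ^ 2 - 1) /
        (4 * π * (a * √(EE u₀ u v √(u₀ ^ 2 - 1) √(1 - v ^ 2) φ s t))) =
        (a * √(u₀ ^ 2 - 1) / (4 * π)) * (√(EE u₀ u v √(u₀ ^ 2 - 1) √(1 - v ^ 2) φ s t))⁻¹ *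
          √(u₀ ^ 2 - s ^ 2) := by
      field_simp
    rw [this]
    have hc : ((√(u₀ ^ 2 - s ^ 2) : ℝ) : ℂ) ≠ 0 := by exact_mod_cast hsq.ne'
    push_cast
    field_simp
  unfold singleLayerP
  simp only [hinner]
  rw [intervalIntegral.integral_const_mul,
    outer_int n m hm u₀ v _ _ _ φ hu₀ hv hS hw h0 hη, hcosh, sinh_arsinh]
  simp only [sphY, ferrersP, assocP, assocQ, iteratedDeriv_legendreP, ← hN]
  rw [← mul_assoc, ← mul_assoc, ← Complex.ofReal_mul, ← Complex.ofReal_mul]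
  congr 2
  field_simp
  ring
end
end
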